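/- arXiv:1310.4717 — 6 statements merged into one kernel-verified Lean document; each statement's English description precedes it below -/
import Mathlib

section
/- Let G be a finite connected nonbipartite simple graph on n vertices with domination number γ(G). Then G has a spanning subgraph H (on the same vertex set, with E(H) ⊆ E(G)) such that H is connected and unicyclic, the girth of H (the length of a shortest cycle of H) equals the odd girth of G, and γ(H) = γ(G). -/
open scoped Classical

/-- `D` is a dominating set of `G`: every vertex not in `D` is adjacent to a vertex of `D`. -/
def IsDominatingSet {V : Type*} [Fintype V] (G : SimpleGraph V) (D : Finset V) : Prop :=
  ∀ v, v ∉ D → ∃ u ∈ D, G.Adj u v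

/-- The domination number of `G`: minimum cardinality of a dominating set. -/
noncomputable def dominationNumber {V : Type*} [Fintype V] (G : SimpleGraph V) : ℕ :=
  sInf {k | ∃ D : Finset V, IsDominatingSet G D ∧ D.card = k}

/-- The girth of `G`: the length of a shortest cycle. -/
noncomputable def girthNat {V : Type*} (G : SimpleGraph V) : ℕ :=
  sInf {k | ∃ (v : V) (w : G.Walk v v), w.IsCycle ∧ w.length = k}

/-- The odd girth of `G`: the length of a shortest odd cycle. -/
noncomputable def oddGirthNat {V : Type*} (G : SimpleGraph V) : ℕ :=
  sInf {k | Odd k ∧ ∃ (v : V) (w : G.Walk v v), w.IsCycle ∧ w.length = k}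


open SimpleGraph

lemma walk_of_seq {V : Type*} (T : SimpleGraph V) (p : ℕ → V) (m : ℕ)
    (h : ∀ i < m, T.Adj (p i) (p (i + 1))) :
    ∃ w : T.Walk (p 0) (p m), w.length = m ∧ ∀ i ≤ m, w.getVert i = p i := by
  induction m with
  | zero => exact ⟨Walk.nil, rfl, fun i hi => by simp [Nat.le_zero.1 hi]⟩
  | succ m ih =>
    obtain ⟨w, hl, hv⟩ := ih (fun i hi => h i (by omega))
    refine ⟨w.concat (h m (by omega)), by simp [hl], fun i hi => ?_⟩
    rw [Walk.concat_eq_append, Walk.getVert_append]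
    split_ifs with h1
    · exact hv i (by omega)
    · have : i = m + 1 ∨ i = m := by omega
      rcases this with rfl | rfl
      · simp [hl]
      · simp [hl]

lemma acyclic_of_rank {V : Type*} (K : SimpleGraph V) (r : V → ℕ)
    (h : ∀ v a b, K.Adj v a → K.Adj v b → r a ≤ r v → r b ≤ r v → a = b) : K.IsAcyclic := by
  intro v w hw
  obtain ⟨x, hx, hmax⟩ := Finset.exists_max_image w.support.toFinset r
    ⟨v, by simp⟩
  simp only [List.mem_toFinset] at hx hmax
  have hc := hw.rotate hx
  apply hc.snd_ne_penultimate
  have hs : ∀ y ∈ (w.rotate x hx).support, r y ≤ r x := fun y hy =>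
    hmax y (by simpa using hy)
  refine h x _ _ ((w.rotate x hx).adj_snd hc.not_nil) 
    ((w.rotate x hx).adj_penultimate hc.not_nil).symm (hs _ ?_) (hs _ ?_)
  · exact Walk.getVert_mem_support _ _
  · exact Walk.getVert_mem_support _ _

lemma tree_add_edge {V : Type*} [Fintype V] (T : SimpleGraph V) (hT : T.IsTree) {a b : V}
    (p : T.Walk a b) (hp : p.IsPath) (hl : 2 ≤ p.length) :
    (T ⊔ edge a b).edgeSet.ncard = Fintype.card V ∧ girthNat (T ⊔ edge a b) = p.length + 1 := by
  have hab : ¬ T.Adj a b := by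
    intro h
    have := (hT.isAcyclic.subsingleton_path _ _).elim ⟨p, hp⟩ (Path.singleton h)
    have h2 : p = h.toWalk := congrArg Subtype.val this
    rw [h2] at hl
    simp at hl
  have hne : a ≠ b := by
    rintro rfl
    have := (hT.isAcyclic.subsingleton_path _ _).elim ⟨p, hp⟩ Path.nil
    have h2 : p = Walk.nil := congrArg Subtype.val this
    rw [h2] at hl
    simp at hl
  have hle : T ≤ T ⊔ edge a b := le_sup_left
  have hadj : (T ⊔ edge a b).Adj b a := by
    simp [sup_adj, edge_adj, hne, hne.symm]
  constructor
  · rw [edgeSet_sup, edgeSet_edge_of_ne hne, Set.union_singleton, Set.ncard_insert_of_notMem]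
    · have := hT.card_edgeFinset
      rw [← this, ← SimpleGraph.coe_edgeFinset, Set.ncard_coe_finset]
    · simpa using hab
  · have hcyc : ∀ w : (T ⊔ edge a b).Walk a a, w.IsCycle → w.snd = b → w.length = p.length + 1 := by
      intro w hw hs
      cases w with
      | nil => simp at hw
      | cons h q =>
        simp only [Walk.snd_cons] at hs
        subst hs
        rw [Walk.cons_isCycle_iff] at hw
        have hq : ∀ e ∈ q.edges, e ∈ T.edgeSet := by
          intro e he
          have h1 := q.edges_subset_edgeSet he
          rw [edgeSet_sup, edgeSet_edge_of_ne hne] at h1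
          rcases h1 with h1 | h1
          · exact h1
          · rw [Set.mem_singleton_iff] at h1
            exact absurd (h1 ▸ he) hw.2
        have := (hT.isAcyclic.subsingleton_path _ _).elim ⟨p.reverse, hp.reverse⟩ ⟨_, hw.1.transfer hq⟩
        have h2 := congrArg (fun x => x.1.length) this
        simp at h2
        simp [h2]
    have hset : {k | ∃ (v : V) (w : (T ⊔ edge a b).Walk v v), w.IsCycle ∧ w.length = k}
        = {p.length + 1} := by
      ext k
      constructor
      · rintro ⟨v, w, hw, rfl⟩
        have he : s(a, b) ∈ w.edges := by
          by_contra he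
          refine hT.isAcyclic (w.transfer T ?_) (hw.transfer _)
          intro e h1
          have h2 := w.edges_subset_edgeSet h1
          rw [edgeSet_sup, edgeSet_edge_of_ne hne] at h2
          rcases h2 with h2 | h2
          · exact h2
          · rw [Set.mem_singleton_iff] at h2
            exact absurd (h2 ▸ h1) he
        have ha : a ∈ w.support := w.fst_mem_support_of_mem_edges he
        have hc := hw.rotate ha
        have he' : s(a, b) ∈ (w.rotate a ha).edges := (w.rotate_edges a ha).mem_iff.2 he
        have hn : b ∈ (w.rotate a ha).toSubgraph.neighborSet a := by
          rw [Subgraph.mem_neighborSet, Walk.adj_toSubgraph_iff_mem_edges]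
          exact he'
        rw [hc.neighborSet_toSubgraph_endpoint] at hn
        rcases hn with hn | hn
        · have := hcyc _ hc hn.symm
          simpa using this
        · have := hcyc _ hc.reverse (by rw [Walk.snd_reverse]; exact hn.symm)
          simpa using this
      · rintro rfl
        refine ⟨b, Walk.cons hadj (p.mapLe hle), ?_, by simp⟩
        rw [Walk.cons_isCycle_iff]
        refine ⟨hp.mapLe hle, ?_⟩
        rw [Walk.edges_mapLe_eq_edges]
        intro h
        exact hab ((p.edges_subset_edgeSet h : T.Adj b a).symm)
    rw [girthNat, hset]
    simp

lemma cyc_walk {V : Type*} {G : SimpleGraph V} {g : ℕ} (c : ZMod g → V)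
    (hc : ∀ i, G.Adj (c i) (c (i + 1))) (i : ZMod g) (k : ℕ) :
    ∃ w : G.Walk (c i) (c (i + k)), w.length = k := by
  obtain ⟨w, h, -⟩ := walk_of_seq G (fun n => c (i + n)) k (fun n _ => by
    have := hc (i + n)
    simpa [add_assoc] using this)
  exact ⟨w.copy (by simp) rfl, by simpa using h⟩

lemma cyc_parity {V : Type*} {G : SimpleGraph V} {g : ℕ} (c : ZMod g → V)
    (hc : ∀ i, G.Adj (c i) (c (i + 1))) (hodd : Odd g)
    (hmin : ∀ v (w : G.Walk v v), Odd w.length → g ≤ w.length)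
    (i j : ZMod g) (w : G.Walk (c i) (c j)) :
    ∃ k < g, j = i + k ∧ (w.length % 2 = k % 2 → k ≤ w.length) ∧
      (w.length % 2 ≠ k % 2 → g ≤ k + w.length) := by
  have hg : NeZero g := ⟨by rintro rfl; simp at hodd⟩
  obtain ⟨k, hk, rfl⟩ : ∃ k < g, j = i + (k : ℕ) := ⟨(j - i).val, ZMod.val_lt _, by simp⟩
  refine ⟨k, hk, rfl, fun h => ?_, fun h => ?_⟩
  · obtain ⟨w', hw'⟩ := cyc_walk c hc (i + k) (g - k)
    have e : i + (k : ZMod g) + ((g - k : ℕ) : ZMod g) = i := by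
      rw [Nat.cast_sub hk.le]; simp
    have := hmin _ (w.append (w'.copy rfl (by rw [e]))) (by
      rw [Walk.length_append, Walk.length_copy, hw', Nat.odd_iff]
      rw [Nat.odd_iff] at hodd
      omega)
    rw [Walk.length_append, Walk.length_copy, hw'] at this
    omega
  · obtain ⟨w', hw'⟩ := cyc_walk c hc i k
    have := hmin _ (w.append w'.reverse) (by
      rw [Walk.length_append, Walk.length_reverse, hw', Nat.odd_iff]
      omega)
    rw [Walk.length_append, Walk.length_reverse, hw'] at this
    omega

lemma cyc_inj {V : Type*} {G : SimpleGraph V} {g : ℕ} (c : ZMod g → V)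
    (hc : ∀ i, G.Adj (c i) (c (i + 1))) (hodd : Odd g)
    (hmin : ∀ v (w : G.Walk v v), Odd w.length → g ≤ w.length) : Function.Injective c := by
  intro i j h
  obtain ⟨k, hk, rfl, h1, h2⟩ := cyc_parity c hc hodd hmin i j (Walk.nil.copy rfl h)
  simp only [Walk.length_copy, Walk.length_nil] at h1 h2
  have : k = 0 := by omega
  simp [this]

lemma cyc_chordless {V : Type*} {G : SimpleGraph V} {g : ℕ} (c : ZMod g → V)
    (hc : ∀ i, G.Adj (c i) (c (i + 1))) (hodd : Odd g)
    (hmin : ∀ v (w : G.Walk v v), Odd w.length → g ≤ w.length) (i j : ZMod g)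
    (h : G.Adj (c i) (c j)) : j = i + 1 ∨ i = j + 1 := by
  obtain ⟨k, hk, rfl, h1, h2⟩ := cyc_parity c hc hodd hmin i j h.toWalk
  simp only [Walk.length_cons, Walk.length_nil] at h1 h2
  have : k = 1 ∨ k + 1 = g := by omega
  rcases this with rfl | h
  · simp
  · right
    have : ((k + 1 : ℕ) : ZMod g) = 0 := by rw [h]; simp
    push_cast at this
    rw [add_assoc, this, add_zero]

lemma cyc_two {V : Type*} {G : SimpleGraph V} {g : ℕ} (c : ZMod g → V)
    (hc : ∀ i, G.Adj (c i) (c (i + 1))) (hodd : Odd g)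
    (hmin : ∀ v (w : G.Walk v v), Odd w.length → g ≤ w.length) (i j : ZMod g) (u : V)
    (hi : G.Adj u (c i)) (hj : G.Adj u (c j)) (hij : i ≠ j) : j = i + 1 + 1 ∨ i = j + 1 + 1 := by
  obtain ⟨k, hk, rfl, h1, h2⟩ := cyc_parity c hc hodd hmin i j (Walk.cons hi.symm hj.toWalk)
  simp only [Walk.length_cons, Walk.length_nil] at h1 h2
  have h0 : k ≠ 0 := by rintro rfl; simp at hij
  rw [Nat.odd_iff] at hodd
  have : k = 2 ∨ k + 2 = g := by omega
  rcases this with rfl | h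
  · left; push_cast; ring
  · right
    have : ((k + 2 : ℕ) : ZMod g) = 0 := by rw [h]; simp
    push_cast at this
    linear_combination -this

lemma exists_cyc {V : Type*} {G : SimpleGraph V} {g : ℕ} (hg : 1 < g) {v : V} (w : G.Walk v v)
    (hw : w.length = g) : ∃ c : ZMod g → V, ∀ i, G.Adj (c i) (c (i + 1)) := by
  have : NeZero g := ⟨by omega⟩
  have : Fact (1 < g) := ⟨hg⟩
  refine ⟨fun i => w.getVert i.val, fun i => ?_⟩
  have hi := ZMod.val_lt i
  have h := w.adj_getVert_succ (i := i.val) (by omega)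
  by_cases h1 : i.val + 1 < g
  · have : (i + 1).val = i.val + 1 := by
      rw [ZMod.val_add_of_lt] <;> rw [ZMod.val_one]
      exact h1
    simpa only [this] using h
  · have h2 : i.val + 1 = g := by omega
    have : i + 1 = 0 := by
      have : ((i.val + 1 : ℕ) : ZMod g) = 0 := by rw [h2]; simp
      simpa using this
    have h3 : w.getVert (i.val + 1) = v := by
      rw [h2]; exact w.getVert_of_length_le hw.le
    rw [h3] at h
    simpa [this] using h

/-- A cycle meeting `D` as much as possible has no outside vertex of `D` needed twice. -/
lemma cyc_unique {V : Type*} [Fintype V] {G : SimpleGraph V} {g : ℕ} [Fact (1 < g)] (c : ZMod g → V)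
    (hc : ∀ i, G.Adj (c i) (c (i + 1))) (hodd : Odd g)
    (hmin : ∀ v (w : G.Walk v v), Odd w.length → g ≤ w.length) (D : Finset V)
    (hmax : ∀ c' : ZMod g → V, (∀ i, G.Adj (c' i) (c' (i + 1))) →
      {i | c' i ∈ D}.ncard ≤ {i | c i ∈ D}.ncard)
    (u : V) (hu : u ∈ D) (i j : ZMod g)
    (hi : G.Adj u (c i)) (hj : G.Adj u (c j))
    (hi' : ∀ k, c k ∈ D → ¬ G.Adj (c k) (c i)) (hj' : ∀ k, c k ∈ D → ¬ G.Adj (c k) (c j)) :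
    i = j := by
  have : NeZero g := ⟨by have := Fact.out (p := 1 < g); omega⟩
  have key : ∀ i, G.Adj u (c i) → G.Adj u (c (i + 1 + 1)) →
      (∀ k, c k ∈ D → ¬ G.Adj (c k) (c i)) → False := by
    intro i hi hj hi'
    have hz : c (i + 1) ∉ D := fun h => hi' _ h (hc i).symm
    have h1 := hmax (Function.update c (i + 1) u) (by
      intro k
      by_cases h1 : k = i + 1
      · subst h1
        simpa using hj
      · by_cases h2 : k = i
        · subst h2
          simpa using hi.symm
        · have h3 : k + 1 ≠ i + 1 := fun h => h2 (add_right_cancel h)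
          simpa [h1, h3, h2] using hc k)
    have h2 : {i | c i ∈ D}.ncard < {k | Function.update c (i + 1) u k ∈ D}.ncard := by
      apply Set.ncard_lt_ncard _ (Set.toFinite _)
      rw [Set.ssubset_iff_of_subset]
      · exact ⟨i + 1, by simpa using hu, by simpa using hz⟩
      · intro k hk
        have : k ≠ i + 1 := by rintro rfl; exact hz hk
        simpa [this] using hk
    omega
  by_contra hij
  rcases cyc_two c hc hodd hmin i j u hi hj hij with rfl | rfl
  · exact key _ hi hj hi'
  · exact key _ hj hi hj'

/-- The forest: the cycle minus one edge, with the star edges not inside the cycle. -/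
lemma forest_acyclic {V : Type*} {g : ℕ} [Fact (1 < g)] (c : ZMod g → V)
    (hinj : Function.Injective c) (D : Finset V) (f : V → V)
    (hf : ∀ v, v ∉ D → f v ∈ D)
    (huniq : ∀ i j, c i ∉ D → c j ∉ D → f (c i) = f (c j) → f (c i) ∉ Set.range c → i = j) :
    (SimpleGraph.fromRel (fun a b => (∃ i : ZMod g, i + 1 ≠ 0 ∧ a = c i ∧ b = c (i + 1)) ∨
      (a ∉ D ∧ b = f a ∧ ¬ (a ∈ Set.range c ∧ b ∈ Set.range c)))).IsAcyclic := by
  have : NeZero g := ⟨by have := Fact.out (p := 1 < g); omega⟩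
  have hval : ∀ i : ZMod g, i + 1 ≠ 0 → (i + 1).val = i.val + 1 := by
    intro i hi
    have := ZMod.val_lt i
    rw [ZMod.val_add_of_lt] <;> rw [ZMod.val_one]
    by_contra h
    apply hi
    have h2 : i.val + 1 = g := by omega
    have : ((i.val + 1 : ℕ) : ZMod g) = 0 := by rw [h2]; simp
    simpa using this
  obtain ⟨r, hr1, hr2, hr3⟩ : ∃ r : V → ℕ, (∀ i, r (c i) = i.val) ∧
      (∀ v, v ∉ Set.range c → v ∈ D → r v = g) ∧ 
      (∀ v, v ∉ Set.range c → v ∉ D → r v = g + 1) := by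
    refine ⟨fun v => if v ∈ Set.range c then (Function.invFun c v).val else
      if v ∈ D then g else g + 1, fun i => ?_, fun v h1 h2 => ?_, fun v h1 h2 => ?_⟩
    · simp [Function.leftInverse_invFun hinj i]
    · simp only [h1, h2, if_true, if_false]
    · simp only [h1, h2, if_false]
  have hout : ∀ v, v ∉ Set.range c → g ≤ r v := by
    intro v hv
    by_cases h : v ∈ D
    · exact (hr2 v hv h).ge
    · rw [hr3 v hv h]; omega
  apply acyclic_of_rank _ r
  intro v a b ha hb hra hrb
  rw [SimpleGraph.fromRel_adj] at ha hb
  by_cases hv : v ∈ Set.range c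
  · obtain ⟨i, rfl⟩ := hv
    have hi := ZMod.val_lt i
    have : ∀ a, (((∃ j : ZMod g, j + 1 ≠ 0 ∧ c i = c j ∧ a = c (j + 1)) ∨
      (c i ∉ D ∧ a = f (c i) ∧ ¬ (c i ∈ Set.range c ∧ a ∈ Set.range c))) ∨ 
      ((∃ j : ZMod g, j + 1 ≠ 0 ∧ a = c j ∧ c i = c (j + 1)) ∨
      (a ∉ D ∧ c i = f a ∧ ¬ (a ∈ Set.range c ∧ c i ∈ Set.range c)))) → r a ≤ r (c i) →
      a = c (i - 1) := by
      intro a h hra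
      have ha : a ∈ Set.range c := by
        by_contra ha
        have := hout a ha
        rw [hr1] at hra
        omega
      rcases h with (⟨j, hj, h1, rfl⟩ | h) | (⟨j, hj, rfl, h1⟩ | h)
      · obtain rfl := hinj h1
        rw [hr1, hr1, hval _ hj] at hra
        omega
      · exact absurd ⟨⟨i, rfl⟩, ha⟩ h.2.2
      · obtain rfl := hinj h1
        simp
      · exact absurd ⟨ha, ⟨i, rfl⟩⟩ h.2.2
    rw [this a ha.2 hra, this b hb.2 hrb]
  · have hv' : ∀ i, v ≠ c i := fun i h => hv ⟨i, h.symm⟩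
    by_cases hD : v ∈ D
    · have : ∀ a, (((∃ j : ZMod g, j + 1 ≠ 0 ∧ v = c j ∧ a = c (j + 1)) ∨
      (v ∉ D ∧ a = f v ∧ ¬ (v ∈ Set.range c ∧ a ∈ Set.range c))) ∨ 
      ((∃ j : ZMod g, j + 1 ≠ 0 ∧ a = c j ∧ v = c (j + 1)) ∨
      (a ∉ D ∧ v = f a ∧ ¬ (a ∈ Set.range c ∧ v ∈ Set.range c)))) → r a ≤ r v →
        ∃ i, a = c i ∧ c i ∉ D ∧ f (c i) = v := by
        intro a h hra
        rcases h with (⟨j, hj, h1, rfl⟩ | h) | (⟨j, hj, rfl, h1⟩ | h)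
        · exact absurd h1 (hv' _)
        · exact absurd hD h.1
        · exact absurd h1 (hv' _)
        · have ha : a ∈ Set.range c := by
            by_contra ha
            rw [hr3 a ha h.1, hr2 v hv hD] at hra
            omega
          obtain ⟨i, rfl⟩ := ha
          exact ⟨i, rfl, h.1, h.2.1.symm⟩
      obtain ⟨i, rfl, hi, hi'⟩ := this a ha.2 hra
      obtain ⟨j, rfl, hj, hj'⟩ := this b hb.2 hrb
      rw [huniq i j hi hj (by rw [hi', hj']) (by rw [hi']; exact hv)]
    · have : ∀ a, (((∃ j : ZMod g, j + 1 ≠ 0 ∧ v = c j ∧ a = c (j + 1)) ∨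
      (v ∉ D ∧ a = f v ∧ ¬ (v ∈ Set.range c ∧ a ∈ Set.range c))) ∨ 
      ((∃ j : ZMod g, j + 1 ≠ 0 ∧ a = c j ∧ v = c (j + 1)) ∨
      (a ∉ D ∧ v = f a ∧ ¬ (a ∈ Set.range c ∧ v ∈ Set.range c)))) → a = f v := by
        intro a h
        rcases h with (⟨j, hj, h1, rfl⟩ | h) | (⟨j, hj, rfl, h1⟩ | h)
        · exact absurd h1 (hv' _)
        · exact h.2.1
        · exact absurd h1 (hv' _)
        · exact absurd (h.2.1 ▸ hf a h.1) hD
      rw [this a ha.2, this b hb.2]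

/-- Every finite connected nonbipartite graph `G` has a connected unicyclic spanning
subgraph `H` whose girth equals the odd girth of `G` and whose domination number
equals that of `G`. -/
theorem exists_unicyclic_spanning_subgraph_same_domination
    {V : Type*} [Fintype V] (G : SimpleGraph V)
    (hconn : G.Connected) (hnonbip : ¬ G.Colorable 2) :
    ∃ H : SimpleGraph V, H ≤ G ∧ H.Connected ∧
      H.edgeSet.ncard = Fintype.card V ∧
      girthNat H = oddGirthNat G ∧
      dominationNumber H = dominationNumber G := by
  -- shortest odd closed walk
  have hex : ∃ k, Odd k ∧ ∃ (v : V) (w : G.Walk v v), w.length = k := by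
    rw [two_colorable_iff_forall_loop_even] at hnonbip
    push Not at hnonbip
    obtain ⟨v, w, hw⟩ := hnonbip
    exact ⟨_, by simpa using hw, v, w, rfl⟩
  obtain ⟨g, hg⟩ : ∃ g, g = Nat.find hex := ⟨_, rfl⟩
  obtain ⟨hodd, v₀, w₀, hw₀⟩ := Nat.find_spec hex
  rw [← hg] at hodd hw₀
  have hmin : ∀ v (w : G.Walk v v), Odd w.length → g ≤ w.length := fun v w hw =>
    hg ▸ Nat.find_min' hex ⟨hw, v, w, rfl⟩
  have hg3 : 3 ≤ g := by
    rw [Nat.odd_iff] at hodd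
    have : g ≠ 1 := by
      rintro rfl
      exact G.loopless.irrefl _ (Walk.adj_of_length_eq_one hw₀)
    omega
  have : Fact (1 < g) := ⟨by omega⟩
  have : NeZero g := ⟨by omega⟩
  -- minimum dominating set
  have hdom : ∃ D : Finset V, IsDominatingSet G D ∧ D.card = dominationNumber G :=
    Nat.sInf_mem (s := {k | ∃ D : Finset V, IsDominatingSet G D ∧ D.card = k})
      ⟨_, Finset.univ, fun v hv => absurd (Finset.mem_univ v) hv, rfl⟩
  obtain ⟨D, hD, hDc⟩ := hdom
  -- best cycle
  obtain ⟨c, hc, hmax⟩ := Set.exists_max_image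
    {c : ZMod g → V | ∀ i, G.Adj (c i) (c (i + 1))} (fun c => {i | c i ∈ D}.ncard)
    (Set.toFinite _) (exists_cyc (by omega) w₀ hw₀)
  have hc : ∀ i, G.Adj (c i) (c (i + 1)) := hc
  have hinj := cyc_inj c hc hodd hmin
  -- dominators, preferably on the cycle
  have hfex : ∀ v, ∃ u, v ∉ D → u ∈ D ∧ G.Adj u v ∧
      (u ∉ Set.range c → ∀ k, c k ∈ D → ¬ G.Adj (c k) v) := by
    intro v
    by_cases hv : v ∈ D
    · exact ⟨v, fun h => absurd hv h⟩
    by_cases h : ∃ k, c k ∈ D ∧ G.Adj (c k) v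
    · obtain ⟨k, h1, h2⟩ := h
      exact ⟨c k, fun _ => ⟨h1, h2, fun h => absurd ⟨k, rfl⟩ h⟩⟩
    · push Not at h
      obtain ⟨u, h1, h2⟩ := hD v hv
      exact ⟨u, fun _ => ⟨h1, h2, fun _ => h⟩⟩
  choose f hf using hfex
  have hK := forest_acyclic c hinj D f (fun v hv => (hf v hv).1) (by
    intro i j hi hj hij hr
    obtain ⟨a1, a2, a3⟩ := hf _ hi
    obtain ⟨b1, b2, b3⟩ := hf _ hj
    rw [← hij] at b2 b3
    exact cyc_unique c hc hodd hmin D (fun c' h => hmax c' h) _ a1 i j a2 b2 (a3 hr) (b3 hr))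
  set K := (SimpleGraph.fromRel (fun a b => (∃ i : ZMod g, i + 1 ≠ 0 ∧ a = c i ∧ b = c (i + 1)) ∨
      (a ∉ D ∧ b = f a ∧ ¬ (a ∈ Set.range c ∧ b ∈ Set.range c)))) with hKdef
  have hR : ∀ a b, ((∃ i : ZMod g, i + 1 ≠ 0 ∧ a = c i ∧ b = c (i + 1)) ∨
      (a ∉ D ∧ b = f a ∧ ¬ (a ∈ Set.range c ∧ b ∈ Set.range c))) → G.Adj a b := by
    rintro a b (⟨i, -, rfl, rfl⟩ | ⟨h1, rfl, -⟩)
    · exact hc i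
    · exact (hf a h1).2.1.symm
  have hKG : K ≤ G := by
    intro a b hab
    rw [hKdef, SimpleGraph.fromRel_adj] at hab
    rcases hab.2 with h | h
    · exact hR _ _ h
    · exact (hR _ _ h).symm
  have hKadj : ∀ a b, ((∃ i : ZMod g, i + 1 ≠ 0 ∧ a = c i ∧ b = c (i + 1)) ∨
      (a ∉ D ∧ b = f a ∧ ¬ (a ∈ Set.range c ∧ b ∈ Set.range c))) → K.Adj a b := by
    intro a b h
    rw [hKdef, SimpleGraph.fromRel_adj]
    exact ⟨(hR _ _ h).ne, Or.inl h⟩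
  obtain ⟨T, hKT, hTG, hT⟩ : ∃ T, K ≤ T ∧ T ≤ G ∧ T.IsTree := by
    obtain ⟨T, h1, h2, h3⟩ := hconn.exists_isTree_le_of_le_of_isAcyclic hKG hK
    exact ⟨T, by assumption, by assumption, by assumption⟩
  -- the path in T
  have hne0 : ∀ n, n < g - 1 → ((n : ℕ) : ZMod g) + 1 ≠ 0 := by
    intro n hn h
    have h' : ((n + 1 : ℕ) : ZMod g) = 0 := by push_cast; exact h
    rw [ZMod.natCast_eq_zero_iff] at h'
    have := Nat.le_of_dvd (by omega) h'
    omega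
  obtain ⟨p, hpl, hpv⟩ := walk_of_seq T (fun n => c (n : ZMod g)) (g - 1) (fun n hn => by
    apply hKT
    apply hKadj
    left
    exact ⟨n, hne0 n hn, rfl, by push_cast; rfl⟩)
  have hp : p.IsPath := by
    rw [← Walk.IsPath.getVert_injOn_iff]
    intro a ha b hb hab
    simp only [Set.mem_ofPred_eq, hpl] at ha hb
    rw [hpv a ha, hpv b hb] at hab
    have h1 := congrArg ZMod.val (hinj hab)
    rwa [ZMod.val_natCast_of_lt (by omega), ZMod.val_natCast_of_lt (by omega)] at h1
  obtain ⟨hcard, hgirth⟩ := tree_add_edge T hT p hp (by omega)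
  have hlast : ((g - 1 : ℕ) : ZMod g) + 1 = 0 := by
    rw [Nat.cast_sub (by omega)]; simp
  have heG : G.Adj (c ((g - 1 : ℕ) : ZMod g)) (c ((0 : ℕ) : ZMod g)) := by
    have := hc ((g - 1 : ℕ) : ZMod g)
    rw [hlast] at this
    simpa using this
  generalize hH : T ⊔ edge (c ((0 : ℕ) : ZMod g)) (c ((g - 1 : ℕ) : ZMod g)) = H at hcard hgirth
  have hTH : T ≤ H := hH ▸ le_sup_left
  have hHG : H ≤ G := by
    rw [← hH]
    refine sup_le hTG ?_
    rw [edge_le_iff]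
    exact Or.inr heG.symm
  have hHe : H.Adj (c ((g - 1 : ℕ) : ZMod g)) (c ((0 : ℕ) : ZMod g)) := by
    rw [← hH, sup_adj, edge_adj]
    exact Or.inr ⟨Or.inr ⟨rfl, rfl⟩, heG.ne⟩
  have hHc : ∀ i, H.Adj (c i) (c (i + 1)) := by
    intro i
    by_cases hi : i + 1 = 0
    · have h1 : i = ((g - 1 : ℕ) : ZMod g) := add_right_cancel (hi.trans hlast.symm)
      rw [hi, h1]
      simpa using hHe
    · exact hTH (hKT (hKadj _ _ (Or.inl ⟨i, hi, rfl, rfl⟩)))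
  have hHD : IsDominatingSet H D := by
    intro v hv
    obtain ⟨h1, h2, -⟩ := hf v hv
    refine ⟨f v, h1, ?_⟩
    by_cases h : v ∈ Set.range c ∧ f v ∈ Set.range c
    · obtain ⟨⟨i, hi⟩, ⟨j, hj⟩⟩ := h
      rw [← hj, ← hi] at h2 ⊢
      rcases cyc_chordless c hc hodd hmin j i h2 with rfl | rfl
      · exact hHc _
      · exact (hHc _).symm
    · exact (hTH (hKT (hKadj _ _ (Or.inr ⟨hv, rfl, h⟩)))).symm
  refine ⟨H, hHG, hT.connected.mono hTH, hcard, ?_, ?_⟩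
  · rw [hgirth, hpl, Nat.sub_add_cancel (by omega)]
    have hmem : g ∈ {k | ∃ (v : V) (w : H.Walk v v), w.IsCycle ∧ w.length = k} := by
      have h1 : girthNat H = g := by rw [hgirth, hpl, Nat.sub_add_cancel (by omega)]
      have h2 : {k | ∃ (v : V) (w : H.Walk v v), w.IsCycle ∧ w.length = k}.Nonempty := by
        by_contra h
        rw [Set.not_nonempty_iff_eq_empty] at h
        rw [girthNat, h, Nat.sInf_empty] at h1
        omega
      have h3 := Nat.sInf_mem h2
      rw [girthNat] at h1
      rwa [h1] at h3
    obtain ⟨v, w, hw, hwl⟩ := hmem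
    have hmemG : g ∈ {k | Odd k ∧ ∃ (v : V) (w : G.Walk v v), w.IsCycle ∧ w.length = k} :=
      ⟨hodd, v, w.mapLe hHG, hw.mapLe hHG, by simpa using hwl⟩
    apply le_antisymm
    · apply le_csInf ⟨g, hmemG⟩
      rintro k ⟨hk, v, w, -, rfl⟩
      exact hmin v w hk
    · exact Nat.sInf_le hmemG
  · apply le_antisymm
    · rw [← hDc]
      exact Nat.sInf_le ⟨D, hHD, rfl⟩
    · refine le_csInf (s := {k | ∃ D : Finset V, IsDominatingSet H D ∧ D.card = k})
        ⟨D.card, D, hHD, rfl⟩ ?_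
      rintro k ⟨D', hD', rfl⟩
      refine Nat.sInf_le ⟨D', fun v hv => ?_, rfl⟩
      obtain ⟨u, h1, h2⟩ := hD' v hv
      exact ⟨u, h1, hHG h2⟩
end

section
/- Let s be an odd integer with 3 ≤ s ≤ n − 2 and let l ≥ 0 be an integer with s + l + 1 ≤ n, so that both C*_{s,l} and C*_{s,l+1} are defined and have order n. Then γ(C*_{s,l}) ≤ γ(C*_{s,l+1}). -/
open scoped Classical

/-- Edge relation for the graph `C*_{s,l}` on vertex indices `0, …, n-1`:
vertices `0, …, s-1` form a cycle `C_s` (with `0` playing the role of `v_1`);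
vertices `0, s, s+1, …, s+l-1` form a path of length `l` hanging at `0`;
and all remaining vertices `s+l, …, n-1` are pendant vertices attached to the
other end of the path (to `0` itself when `l = 0`). -/
def cstarRel (s l : ℕ) (a b : ℕ) : Prop :=
  (b = a + 1 ∧ a + 1 < s) ∨
  (a = 0 ∧ b = s - 1) ∨
  (1 ≤ l ∧ a = 0 ∧ b = s) ∨
  (b = a + 1 ∧ s ≤ a ∧ a + 1 < s + l) ∨
  (a = (if l = 0 then 0 else s + l - 1) ∧ s + l ≤ b)

/-- The graph `C*_{s,l}` of order `n`: a cycle `C_s` with a path of length `l`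
attached, and `n - s - l` pendant edges attached at the far end of the path. -/
def Cstar (n s l : ℕ) : SimpleGraph (Fin n) :=
  SimpleGraph.fromRel (fun i j => cstarRel s l i.val j.val)

theorem cstarRel_cross (s l a b : ℕ) (hs : 3 ≤ s) (ha : s + l ≤ a) (hb : b < s + l)
    (h : cstarRel s (l+1) a b ∨ cstarRel s (l+1) b a) : b = if l = 0 then 0 else s + l - 1 := by
  simp only [cstarRel, Nat.succ_ne_zero, if_false] at h
  by_cases h0 : l = 0
  · rw [if_pos h0]
    rcases h with (h|h|h|h|h)|(h|h|h|h|h) <;> omega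
  · rw [if_neg h0]
    rcases h with (h|h|h|h|h)|(h|h|h|h|h) <;> omega

theorem cstarRel_keep (s l a b : ℕ) (ha : a < s + l) (hb : b < s + l)
    (h : cstarRel s (l+1) a b) : cstarRel s l a b := by
  simp only [cstarRel, Nat.succ_ne_zero, if_false] at h
  rcases h with h|h|h|h|h
  · exact Or.inl h
  · exact Or.inr (Or.inl h)
  · exact Or.inr (Or.inr (Or.inl (by omega)))
  · exact Or.inr (Or.inr (Or.inr (Or.inl (by omega))))
  · omega

/-- For odd `s` with `3 ≤ s ≤ n - 2` and `s + l + 1 ≤ n`, the domination number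
of `C*_{s,l}` is at most that of `C*_{s,l+1}` (both of order `n`). -/
theorem dominationNumber_Cstar_mono
    (n s l : ℕ) (hodd : Odd s) (hs : 3 ≤ s) (hsn : s ≤ n - 2) (hl : s + l + 1 ≤ n) :
    dominationNumber (Cstar n s l) ≤ dominationNumber (Cstar n s (l + 1)) := by
  have hne : {k | ∃ D : Finset (Fin n), IsDominatingSet (Cstar n s (l+1)) D ∧ D.card = k}.Nonempty :=
    ⟨_, Finset.univ, fun v hv => absurd (Finset.mem_univ v) hv, rfl⟩
  obtain ⟨D, hD, hcard⟩ := Nat.sInf_mem hne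
  have hle : dominationNumber (Cstar n s (l+1)) = D.card := hcard.symm
  rw [hle]
  obtain ⟨e, he⟩ : ∃ e : Fin n, e.val = if l = 0 then 0 else s + l - 1 :=
    ⟨⟨if l = 0 then 0 else s + l - 1, by split_ifs <;> omega⟩, rfl⟩
  have hes : e.val < s + l := by rw [he]; split_ifs <;> omega
  let f : Fin n → Fin n := fun v => if s + l ≤ v.val then e else v
  have hf1 : ∀ v : Fin n, s + l ≤ v.val → f v = e := fun v hv => if_pos hv
  have hf2 : ∀ v : Fin n, v.val < s + l → f v = v := fun v hv => if_neg (by omega)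
  -- the edges of the longer graph leaving the collapsed part
  have hcross : ∀ u v : Fin n, s + l ≤ u.val → v.val < s + l →
      (Cstar n s (l+1)).Adj u v → v = e := by
    intro u v hu hv h
    apply Fin.ext
    simp only [Cstar, SimpleGraph.fromRel_adj] at h
    rw [he]
    exact cstarRel_cross s l u v hs hu hv h.2
  have heD : e ∈ D.image f := by
    rw [Finset.mem_image]
    by_cases hm : (⟨n - 1, by omega⟩ : Fin n) ∈ D
    · exact ⟨_, hm, hf1 _ (by simp only; omega)⟩
    · obtain ⟨u, hu, ha⟩ := hD _ hm
      refine ⟨u, hu, ?_⟩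
      by_cases h : s + l ≤ u.val
      · exact hf1 u h
      · rw [hf2 u (by omega)]
        exact hcross _ u (by simp only; omega) (by omega) ha.symm
  have hdom : IsDominatingSet (Cstar n s l) (D.image f) := by
    intro v hv
    have hve : v ≠ e := fun h => hv (h ▸ heD)
    by_cases hvs : s + l ≤ v.val
    · refine ⟨e, heD, ?_⟩
      simp only [Cstar, SimpleGraph.fromRel_adj, cstarRel]
      exact ⟨hve.symm, Or.inl (Or.inr (Or.inr (Or.inr (Or.inr ⟨he, hvs⟩))))⟩
    · have hvD : v ∉ D := fun h => hv (Finset.mem_image.2 ⟨v, h, hf2 v (by omega)⟩)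
      obtain ⟨u, hu, ha⟩ := hD v hvD
      by_cases hus : s + l ≤ u.val
      · exact absurd (hcross u v hus (by omega) ha) hve
      · refine ⟨u, Finset.mem_image.2 ⟨u, hu, hf2 u (by omega)⟩, ?_⟩
        simp only [Cstar, SimpleGraph.fromRel_adj] at ha ⊢
        exact ⟨ha.1, ha.2.imp (cstarRel_keep s l _ _ (by omega) (by omega))
          (cstarRel_keep s l _ _ (by omega) (by omega))⟩
  have h1 : dominationNumber (Cstar n s l) ≤ (D.image f).card :=
    Nat.sInf_le ⟨D.image f, hdom, rfl⟩
  exact h1.trans Finset.card_image_le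
end

section
/- Let k ≥ 2 and l ≥ 0 be integers, let t = l + k − 1, and let both C*_{2k+1,l} and C*_{3,t} be defined and have order n (so n ≥ 2k + 1 + l). Then γ(C*_{3,t}) ≤ γ(C*_{2k+1,l}). -/
open scoped Classical

/-- A superset of the part of the closed neighbourhood of `d` lying in the core. -/
def coreNbhd (s l d : ℕ) : Finset ℕ :=
  if d = 0 then {0, 1, s - 1, s}
  else if d < s then {d - 1, d, if d + 1 = s then 0 else d + 1}
  else if d < s + l then {if d = s then 0 else d - 1, d, d + 1}
  else {if l = 0 then 0 else s + l - 1}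

lemma coreNbhd_card (s l d : ℕ) : (coreNbhd s l d).card ≤ 3 + if d = 0 then 1 else 0 := by
  unfold coreNbhd
  split_ifs <;> first
    | exact Finset.card_le_four
    | exact Finset.card_le_three
    | simp

lemma mem_coreNbhd_self (s l d : ℕ) (h : d < s + l) : d ∈ coreNbhd s l d := by
  unfold coreNbhd
  split_ifs <;> simp_all

lemma mem_coreNbhd_of_rel (s l a b : ℕ) (hs : 3 ≤ s) (hb : b < s + l)
    (h : cstarRel s l a b ∨ cstarRel s l b a) : b ∈ coreNbhd s l a := by
  unfold cstarRel at h
  unfold coreNbhd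
  split_ifs at h ⊢ <;> simp only [Finset.mem_insert, Finset.mem_singleton] <;> omega

lemma card_lower (n s l : ℕ) (hs : 3 ≤ s) (hn : s + l ≤ n) (D : Finset (Fin n))
    (hD : IsDominatingSet (Cstar n s l) D) : s + l ≤ 3 * D.card + 1 := by
  have hsub : Finset.range (s + l) ⊆ D.biUnion (fun d => coreNbhd s l d.val) := by
    intro v hv
    rw [Finset.mem_range] at hv
    rw [Finset.mem_biUnion]
    by_cases hvD : (⟨v, by omega⟩ : Fin n) ∈ D
    · exact ⟨_, hvD, mem_coreNbhd_self s l v hv⟩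
    · obtain ⟨u, hu, huv⟩ := hD _ hvD
      refine ⟨u, hu, mem_coreNbhd_of_rel s l u.val v hs hv ?_⟩
      exact ((SimpleGraph.fromRel_adj _ _ _).1 huv).2
  have h1 := Finset.card_le_card hsub
  rw [Finset.card_range] at h1
  have h2 : (D.biUnion (fun d => coreNbhd s l d.val)).card ≤
      ∑ d ∈ D, (3 + if d.val = 0 then 1 else 0) :=
    Finset.card_biUnion_le.trans (Finset.sum_le_sum fun d _ => coreNbhd_card s l d.val)
  have h3 : ∑ d ∈ D, (if d.val = 0 then 1 else 0) ≤ 1 := by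
    rw [← Finset.card_filter, Finset.card_le_one]
    intro a ha b hb
    rw [Finset.mem_filter] at ha hb
    exact Fin.ext (ha.2.trans hb.2.symm)
  rw [Finset.sum_add_distrib, Finset.sum_const, smul_eq_mul] at h2
  omega

lemma exists_dom (n t : ℕ) (ht : 1 ≤ t) (hn : 3 + t ≤ n) :
    ∃ D : Finset (Fin n), IsDominatingSet (Cstar n 3 t) D ∧ D.card ≤ (t + 2) / 3 + 1 := by
  let f : ℕ → Fin n := fun i => ⟨if i = 0 then 0 else min (3 * i) t + 2, by split_ifs <;> omega⟩
  refine ⟨(Finset.range ((t + 2) / 3 + 1)).image f, ?_, ?_⟩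
  · intro v hv
    have key : ∀ i x, i ≤ (t + 2) / 3 → (f i).val = x →
        (cstarRel 3 t x v.val ∨ cstarRel 3 t v.val x) →
        ∃ u ∈ (Finset.range ((t + 2) / 3 + 1)).image f, (Cstar n 3 t).Adj u v := by
      rintro i x hi rfl h
      have hm : f i ∈ (Finset.range ((t + 2) / 3 + 1)).image f :=
        Finset.mem_image_of_mem f (Finset.mem_range.2 (by omega))
      refine ⟨f i, hm, (SimpleGraph.fromRel_adj _ _ _).2 ⟨?_, h⟩⟩
      rintro rfl
      exact hv hm
    have hne : ∀ i, i ≤ (t + 2) / 3 → v.val ≠ (f i).val := by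
      intro i hi h
      exact hv (Finset.mem_image.2 ⟨i, Finset.mem_range.2 (by omega), (Fin.ext h).symm⟩)
    have ht0 : t ≠ 0 := by omega
    have f0 : (f 0).val = 0 := rfl
    have fp : ∀ i, i ≠ 0 → (f i).val = min (3 * i) t + 2 := fun i hi => if_neg hi
    have fl : (f ((t + 2) / 3)).val = 3 + t - 1 := by
      rw [fp _ (by omega)]
      omega
    have h0 := hne 0 (by omega)
    have hl := hne _ le_rfl
    rw [f0] at h0
    rw [fl] at hl
    clear_value f
    obtain ⟨w, hw⟩ := v
    simp only at *
    by_cases hv3 : w ≤ 3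
    · refine key 0 0 (by omega) f0 (Or.inl ?_)
      have : w = 1 ∨ w = 2 ∨ w = 3 := by omega
      rcases this with rfl | rfl | rfl
      · exact Or.inl ⟨rfl, by omega⟩
      · exact Or.inr (Or.inl ⟨rfl, rfl⟩)
      · exact Or.inr (Or.inr (Or.inl ⟨ht, rfl, rfl⟩))
    by_cases hvt : 3 + t ≤ w
    · refine key ((t + 2) / 3) _ le_rfl fl (Or.inl ?_)
      exact Or.inr (Or.inr (Or.inr (Or.inr ⟨by rw [if_neg ht0], hvt⟩)))
    -- now `w` is the path vertex `p_j` with `j = w - 2`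
    obtain ⟨q, hq⟩ : ∃ q, w = 3 * q + 2 ∨ w = 3 * q + 3 ∨ w = 3 * q + 4 :=
      ⟨(w - 2) / 3, by omega⟩
    rcases hq with hq | hq | hq
    · exact absurd (by rw [fp q (by omega)]; omega) (hne q (by omega))
    · refine key q (w - 1) (by omega) ((fp q (by omega)).trans (by omega)) (Or.inl ?_)
      exact Or.inr (Or.inr (Or.inr (Or.inl ⟨by omega, by omega, by omega⟩)))
    · refine key (q + 1) (w + 1) (by omega) ((fp (q + 1) (by omega)).trans (by omega)) (Or.inr ?_)
      exact Or.inr (Or.inr (Or.inr (Or.inl ⟨rfl, by omega, by omega⟩)))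
  · exact Finset.card_image_le.trans (by simp)

/-- For `k ≥ 2` and `t = l + k - 1`, with both graphs of order `n ≥ 2k + 1 + l`,
we have `γ(C*_{3,t}) ≤ γ(C*_{2k+1,l})`. -/
theorem dominationNumber_Cstar_three_le
    (n k l : ℕ) (hk : 2 ≤ k) (hn : 2 * k + 1 + l ≤ n) :
    dominationNumber (Cstar n 3 (l + k - 1)) ≤ dominationNumber (Cstar n (2 * k + 1) l) := by
  obtain ⟨D, hD, hDc⟩ := exists_dom n (l + k - 1) (by omega) (by omega)
  have h1 : dominationNumber (Cstar n 3 (l + k - 1)) ≤ D.card := Nat.sInf_le ⟨D, hD, rfl⟩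
  have hne : {m | ∃ D : Finset (Fin n),
      IsDominatingSet (Cstar n (2 * k + 1) l) D ∧ D.card = m}.Nonempty :=
    ⟨_, Finset.univ, fun v hv => absurd (Finset.mem_univ v) hv, rfl⟩
  obtain ⟨E, hE, hEc⟩ := Nat.sInf_mem hne
  have h2 := card_lower n (2 * k + 1) l (by omega) hn E hE
  have h3 : dominationNumber (Cstar n (2 * k + 1) l) = E.card := hEc.symm
  omega
end

section
/- For every integer γ ≥ 2, the graph C*_{3,3γ−5} of order n = 3γ − 1 is a connected nonbipartite graph whose domination number equals γ; in particular the bound n ≥ 3γ − 1 for connected nonbipartite graphs is attained with equality. -/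
open scoped Classical

theorem cstar_adj (k : ℕ) (i j : Fin (3 * (k + 2) - 1)) :
    (Cstar (3 * (k + 2) - 1) 3 (3 * (k + 2) - 5)).Adj i j ↔
      ((j.val = i.val + 1 ∧ i.val ≠ 2) ∨ (i.val = 0 ∧ (j.val = 2 ∨ j.val = 3)) ∨
      (i.val = j.val + 1 ∧ j.val ≠ 2) ∨ (j.val = 0 ∧ (i.val = 2 ∨ i.val = 3))) := by
  have hi := i.isLt
  have hj := j.isLt
  have hl : ¬ (3 * (k + 2) - 5 = 0) := by omega
  simp only [Cstar, SimpleGraph.fromRel_adj, cstarRel, if_neg hl, ne_eq, Fin.ext_iff]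
  omega

/-- For every `γ ≥ 2`, the graph `C*_{3,3γ-5}` of order `n = 3γ - 1` is connected,
nonbipartite, and has domination number `γ`; so the bound `n ≥ 3γ - 1` is attained. -/
theorem Cstar_attains_domination_bound (γ : ℕ) (hγ : 2 ≤ γ) :
    (Cstar (3 * γ - 1) 3 (3 * γ - 5)).Connected ∧
    ¬ (Cstar (3 * γ - 1) 3 (3 * γ - 5)).Colorable 2 ∧
    dominationNumber (Cstar (3 * γ - 1) 3 (3 * γ - 5)) = γ := by
  obtain ⟨k, rfl⟩ : ∃ k, γ = k + 2 := ⟨γ - 2, by omega⟩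
  have hadj := cstar_adj k
  set G := Cstar (3 * (k + 2) - 1) 3 (3 * (k + 2) - 5) with hG
  refine ⟨?_, ?_, ?_⟩
  · have h0 : ∀ m : ℕ, ∀ hm : m < 3 * (k + 2) - 1, G.Reachable ⟨0, by omega⟩ ⟨m, hm⟩ := by
      intro m
      induction m using Nat.strong_induction_on with
      | _ m ih =>
        intro hm
        rcases Nat.eq_zero_or_pos m with h | h
        · subst h
          exact SimpleGraph.Reachable.refl _
        · by_cases h3 : m = 3
          · exact SimpleGraph.Adj.reachable ((hadj _ _).2 (by simp [h3]))
          · exact (ih (m - 1) (by omega) (by omega)).trans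
              (SimpleGraph.Adj.reachable ((hadj _ _).2 (by simp only; omega)))
    have : Nonempty (Fin (3 * (k + 2) - 1)) := ⟨⟨0, by omega⟩⟩
    exact ⟨fun u v => (h0 u.val u.isLt).symm.trans (h0 v.val v.isLt)⟩
  · rintro ⟨c⟩
    have h1 := c.valid ((hadj ⟨0, by omega⟩ ⟨1, by omega⟩).2 (by simp))
    have h2 := c.valid ((hadj ⟨1, by omega⟩ ⟨2, by omega⟩).2 (by simp))
    have h3 := c.valid ((hadj ⟨0, by omega⟩ ⟨2, by omega⟩).2 (by simp))
    rw [ne_eq, Fin.ext_iff] at h1 h2 h3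
    omega
  · have lower : ∀ D : Finset (Fin (3 * (k + 2) - 1)), IsDominatingSet G D →
        k + 2 ≤ D.card := by
      intro D hD
      have hsub : Finset.range (k + 2) ⊆ D.image (fun v => v.val / 3) := by
        intro i hi
        rw [Finset.mem_range] at hi
        rw [Finset.mem_image]
        have hlt : 3 * i + 1 < 3 * (k + 2) - 1 := by omega
        by_cases hv : (⟨3 * i + 1, hlt⟩ : Fin (3 * (k + 2) - 1)) ∈ D
        · exact ⟨_, hv, by simp only; omega⟩
        · obtain ⟨u, hu, ha⟩ := hD _ hv
          refine ⟨u, hu, ?_⟩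
          have := (hadj _ _).1 ha
          simp only at this
          omega
      calc k + 2 = (Finset.range (k + 2)).card := (Finset.card_range _).symm
        _ ≤ _ := Finset.card_le_card hsub
        _ ≤ D.card := Finset.card_image_le
    have upper : ∃ D : Finset (Fin (3 * (k + 2) - 1)), IsDominatingSet G D ∧
        D.card ≤ k + 2 := by
      let f : Fin (k + 2) → Fin (3 * (k + 2) - 1) := fun i =>
        ⟨if i.val = 0 then 0 else 3 * i.val + 1, by have := i.isLt; split_ifs <;> omega⟩
      refine ⟨Finset.univ.image f, ?_, ?_⟩
      · intro v hv
        have hvl := v.isLt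
        by_cases h4 : v.val < 4
        · have hne : v.val ≠ 0 := by
            intro h
            apply hv
            rw [Finset.mem_image]
            exact ⟨⟨0, by omega⟩, Finset.mem_univ _, Fin.ext (by simp [f, h])⟩
          refine ⟨f ⟨0, by omega⟩, Finset.mem_image_of_mem _ (Finset.mem_univ _), ?_⟩
          rw [hadj]
          have hf : (f ⟨0, by omega⟩).val = 0 := by simp [f]
          omega
        · have hne : v.val % 3 ≠ 1 := by
            intro h
            apply hv
            rw [Finset.mem_image]
            refine ⟨⟨v.val / 3, by omega⟩, Finset.mem_univ _, Fin.ext ?_⟩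
            have : ¬ (v.val / 3 = 0) := by omega
            simp only [f, if_neg this]
            omega
          refine ⟨f ⟨v.val / 3, by omega⟩, Finset.mem_image_of_mem _ (Finset.mem_univ _), ?_⟩
          rw [hadj]
          have : ¬ (v.val / 3 = 0) := by omega
          simp only [f, if_neg this]
          omega
      · exact Finset.card_image_le.trans (by simp)
    obtain ⟨D, hD, hc⟩ := upper
    unfold dominationNumber
    apply le_antisymm
    · refine le_trans (Nat.sInf_le ?_) hc
      exact ⟨D, hD, rfl⟩
    · obtain ⟨E, hE, hEc⟩ := Nat.sInf_mem
        (s := {m | ∃ D : Finset (Fin (3 * (k + 2) - 1)), IsDominatingSet G D ∧ D.card = m})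
        ⟨_, D, hD, rfl⟩
      rw [← hEc]
      exact lower E hE
end

section
/- Let γ ≥ 1 and n ≥ 4 be integers with n ∈ {3γ − 1, 3γ, 3γ + 1}. For every connected nonbipartite unicyclic graph G of order n with domination number γ, one has q_min(C*_{3,n−4}) ≤ q_min(G), where C*_{3,n−4} has order n, and equality holds if and only if G is isomorphic to C*_{3,n−4}. -/
open scoped Classical

/-- The signless Laplacian matrix `Q(G) = D(G) + A(G)` of a finite simple graph. -/
noncomputable def signlessLaplacian {V : Type*} [Fintype V] (G : SimpleGraph V) :
    Matrix V V ℝ :=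
  fun i j => (if i = j then (G.degree i : ℝ) else 0) + (if G.Adj i j then 1 else 0)

/-- The least eigenvalue of the signless Laplacian of `G`. -/
noncomputable def qmin {V : Type*} [Fintype V] (G : SimpleGraph V) : ℝ :=
  sInf {μ : ℝ | ∃ x : V → ℝ, x ≠ 0 ∧ (signlessLaplacian G).mulVec x = μ • x}


open Matrix Finset

namespace QminAux

/-! ### Spectral preliminaries -/

lemma mulVec_apply' {V : Type*} [Fintype V] (G : SimpleGraph V) (x : V → ℝ) (i : V) :
    (signlessLaplacian G).mulVec x i = ∑ j, if G.Adj i j then x i + x j else 0 := by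
  have h : (G.degree i : ℝ) = ∑ j, if G.Adj i j then (1 : ℝ) else 0 := by
    rw [← G.card_neighborFinset_eq_degree, G.neighborFinset_eq_filter]
    simp
  simp only [mulVec, dotProduct, signlessLaplacian, add_mul, Finset.sum_add_distrib, ite_mul,
    zero_mul, Finset.sum_ite_eq, Finset.mem_univ, if_true, one_mul]
  rw [h, Finset.sum_mul, ← Finset.sum_add_distrib]
  refine Finset.sum_congr rfl fun j _ => ?_
  split_ifs <;> ring

lemma isHermitian_Q {V : Type*} [Fintype V] (G : SimpleGraph V) :
    (signlessLaplacian G).IsHermitian := by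
  ext i j
  simp only [signlessLaplacian, conjTranspose_apply, star_trivial, G.adj_comm j i]
  congr 1
  by_cases h : i = j
  · subst h; rfl
  · simp [h, Ne.symm h]

lemma qmin_attained {V : Type*} [Fintype V] [Nonempty V] (G : SimpleGraph V) :
    ∃ x : V → ℝ, x ≠ 0 ∧ (signlessLaplacian G).mulVec x = qmin G • x := by
  have hS : {μ : ℝ | ∃ x : V → ℝ, x ≠ 0 ∧ (signlessLaplacian G).mulVec x = μ • x} =
      {μ | Module.End.HasEigenvalue (Matrix.toLin' (signlessLaplacian G)) μ} := by
    ext μ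
    simp only [Set.mem_ofPred_eq]
    constructor
    · rintro ⟨x, hx, h⟩
      exact Module.End.hasEigenvalue_of_hasEigenvector
        (x := x) ⟨by rw [Module.End.mem_eigenspace_iff]; simpa using h, hx⟩
    · intro h
      obtain ⟨x, hx, h0⟩ := h.exists_hasEigenvector
      rw [Module.End.mem_eigenspace_iff] at hx
      exact ⟨x, h0, by simpa using hx⟩
  have hfin : Set.Finite {μ : ℝ | ∃ x : V → ℝ, x ≠ 0 ∧
      (signlessLaplacian G).mulVec x = μ • x} := by
    rw [hS]; exact Module.End.finite_hasEigenvalue _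
  have hne : Set.Nonempty {μ : ℝ | ∃ x : V → ℝ, x ≠ 0 ∧
      (signlessLaplacian G).mulVec x = μ • x} := by
    have hA := isHermitian_Q G
    obtain ⟨j⟩ := ‹Nonempty V›
    refine ⟨hA.eigenvalues j, _, ?_, hA.mulVec_eigenvectorBasis j⟩
    intro h
    have := hA.eigenvectorBasis.toBasis.ne_zero j
    apply this
    ext i
    simpa using congrFun h i
  exact hne.csInf_mem hfin

lemma qmin_le {V : Type*} [Fintype V] [Nonempty V] (G : SimpleGraph V) (μ : ℝ) (x : V → ℝ)
    (hx : x ≠ 0) (h : (signlessLaplacian G).mulVec x = μ • x) : qmin G ≤ μ := by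
  refine csInf_le ?_ ⟨x, hx, h⟩
  have hS : {μ : ℝ | ∃ x : V → ℝ, x ≠ 0 ∧ (signlessLaplacian G).mulVec x = μ • x} ⊆
      {μ | Module.End.HasEigenvalue (Matrix.toLin' (signlessLaplacian G)) μ} := by
    rintro μ ⟨x, hx, h⟩
    exact Module.End.hasEigenvalue_of_hasEigenvector
        (x := x) ⟨by rw [Module.End.mem_eigenspace_iff]; simpa using h, hx⟩
  exact ((Module.End.finite_hasEigenvalue _).subset hS).bddBelow

lemma posSemidef_sub {V : Type*} [Fintype V] [Nonempty V] (G : SimpleGraph V) :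
    (signlessLaplacian G - qmin G • (1 : Matrix V V ℝ)).PosSemidef := by
  have hA : (signlessLaplacian G - qmin G • (1 : Matrix V V ℝ)).IsHermitian := by
    refine (isHermitian_Q G).sub ?_
    simp [IsHermitian]
  rw [hA.posSemidef_iff_eigenvalues_nonneg]
  intro j
  have h := hA.mulVec_eigenvectorBasis j
  rw [sub_mulVec, smul_mulVec, one_mulVec, sub_eq_iff_eq_add, ← add_smul] at h
  have := qmin_le G _ _ ?_ h
  · simpa using this
  · intro h
    have := hA.eigenvectorBasis.toBasis.ne_zero j
    apply this
    ext i
    simpa using congrFun h i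

lemma rayleigh {V : Type*} [Fintype V] [Nonempty V] (G : SimpleGraph V) (x : V → ℝ) :
    qmin G * (x ⬝ᵥ x) ≤ x ⬝ᵥ (signlessLaplacian G).mulVec x := by
  have := (posSemidef_sub G).dotProduct_mulVec_nonneg x
  rw [sub_mulVec, smul_mulVec, one_mulVec, dotProduct_sub, dotProduct_smul] at this
  simpa using this

lemma rayleigh_eq {V : Type*} [Fintype V] [Nonempty V] (G : SimpleGraph V) (x : V → ℝ)
    (h : x ⬝ᵥ (signlessLaplacian G).mulVec x = qmin G * (x ⬝ᵥ x)) :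
    (signlessLaplacian G).mulVec x = qmin G • x := by
  have := ((posSemidef_sub G).dotProduct_mulVec_zero_iff x).1 (by
    rw [sub_mulVec, smul_mulVec, one_mulVec, dotProduct_sub, dotProduct_smul]
    simp [h])
  rwa [sub_mulVec, smul_mulVec, one_mulVec, sub_eq_zero] at this

lemma mulVec_iso {V W : Type*} [Fintype V] [Fintype W] {G : SimpleGraph V} {H : SimpleGraph W}
    (e : G ≃g H) (μ : ℝ) (x : W → ℝ) (h : (signlessLaplacian H).mulVec x = μ • x) :
    (signlessLaplacian G).mulVec (x ∘ e) = μ • (x ∘ e) := by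
  ext i
  have := congrFun h (e i)
  rw [mulVec_apply'] at this ⊢
  rw [← e.toEquiv.sum_comp] at this
  simpa [e.map_adj_iff] using this

lemma qmin_iso {V W : Type*} [Fintype V] [Fintype W] {G : SimpleGraph V} {H : SimpleGraph W}
    (e : G ≃g H) : qmin G = qmin H := by
  have key : ∀ {V W : Type _} [Fintype V] [Fintype W] {G : SimpleGraph V} {H : SimpleGraph W}
    (e : G ≃g H), {μ : ℝ | ∃ x : W → ℝ, x ≠ 0 ∧ (signlessLaplacian H).mulVec x = μ • x} ⊆
      {μ : ℝ | ∃ x : V → ℝ, x ≠ 0 ∧ (signlessLaplacian G).mulVec x = μ • x} := by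
    rintro V W _ _ G H e μ ⟨x, hx, h⟩
    refine ⟨x ∘ e, fun h0 => hx ?_, mulVec_iso e μ x h⟩
    ext w
    simpa using congrFun h0 (e.symm w)
  have key2 : ∀ {V W : Type _} [Fintype V] [Fintype W] {G : SimpleGraph V} {H : SimpleGraph W}
    (e : G ≃g H), {μ : ℝ | ∃ x : W → ℝ, x ≠ 0 ∧ (signlessLaplacian H).mulVec x = μ • x} ⊆
      {μ : ℝ | ∃ x : V → ℝ, x ≠ 0 ∧ (signlessLaplacian G).mulVec x = μ • x} := by
    rintro V W _ _ G H e μ ⟨x, hx, h⟩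
    refine ⟨x ∘ e, fun h0 => hx ?_, mulVec_iso e μ x h⟩
    ext w
    simpa using congrFun h0 (e.symm w)
  unfold qmin
  congr 1
  exact Set.Subset.antisymm (key2 e.symm) (key e)

/-- Increasing edge pairs of a graph on `Fin n`. -/
noncomputable def EP {n : ℕ} (H : SimpleGraph (Fin n)) : Finset (Fin n × Fin n) :=
  univ.filter fun p => p.1 < p.2 ∧ H.Adj p.1 p.2

lemma mem_EP {n : ℕ} {H : SimpleGraph (Fin n)} {p : Fin n × Fin n} :
    p ∈ EP H ↔ p.1 < p.2 ∧ H.Adj p.1 p.2 := by simp [EP]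

lemma form_eq {n : ℕ} (H : SimpleGraph (Fin n)) (x : Fin n → ℝ) :
    x ⬝ᵥ (signlessLaplacian H).mulVec x = ∑ p ∈ EP H, (x p.1 + x p.2) ^ 2 := by
  have h1 : x ⬝ᵥ (signlessLaplacian H).mulVec x =
      ∑ p : Fin n × Fin n, if H.Adj p.1 p.2 then x p.1 * (x p.1 + x p.2) else 0 := by
    rw [Fintype.sum_prod_type]
    simp only [dotProduct, mulVec_apply', Finset.mul_sum, mul_ite, mul_zero]
  have h2 : (∑ p : Fin n × Fin n, if H.Adj p.1 p.2 then x p.1 * (x p.1 + x p.2) else 0) =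
      (∑ p : Fin n × Fin n, if p.1 < p.2 ∧ H.Adj p.1 p.2 then x p.1 * (x p.1 + x p.2) else 0) +
      ∑ p : Fin n × Fin n, if p.2 < p.1 ∧ H.Adj p.1 p.2 then x p.1 * (x p.1 + x p.2) else 0 := by
    rw [← Finset.sum_add_distrib]
    refine Finset.sum_congr rfl fun p _ => ?_
    by_cases h : H.Adj p.1 p.2
    · rcases lt_or_gt_of_ne h.ne with h' | h'
      · simp [h, h', not_lt.2 h'.le]
      · simp [h, h', not_lt.2 h'.le]
    · simp [h]
  rw [h1, h2, ← (Equiv.prodComm (Fin n) (Fin n)).sum_comp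
    (fun p : Fin n × Fin n => if p.2 < p.1 ∧ H.Adj p.1 p.2 then x p.1 * (x p.1 + x p.2) else 0),
    ← Finset.sum_add_distrib, EP, Finset.sum_filter]
  refine Finset.sum_congr rfl fun p _ => ?_
  simp only [Equiv.prodComm_apply, Prod.fst_swap, Prod.snd_swap, H.adj_comm p.2 p.1]
  split_ifs <;> ring

/-! ### A monochromatic non-bridge -/

lemma exists_mono_nonbridge {V : Type*} [Fintype V] (G : SimpleGraph V)
    (hnb : ¬ G.Colorable 2) (s : V → Bool) :
    ∃ a b, G.Adj a b ∧ s a = s b ∧ ¬ G.IsBridge s(a, b) := by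
  by_contra! hcon
  apply hnb
  suffices H : ∀ m : ℕ, ∀ s : V → Bool,
      (∀ a b, G.Adj a b → s a = s b → G.IsBridge s(a, b)) →
      (univ.filter fun p : V × V => G.Adj p.1 p.2 ∧ s p.1 = s p.2).card = m → G.Colorable 2 from
    H _ s hcon rfl
  intro m
  induction m using Nat.strong_induction_on with
  | _ m ih =>
    intro s hs hm
    by_cases hex : ∃ a b, G.Adj a b ∧ s a = s b
    · obtain ⟨a, b, hab, hsab⟩ := hex
      have hbr := hs a b hab hsab
      rw [SimpleGraph.isBridge_iff] at hbr
      set K := G.deleteEdges {s(a, b)} with hK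
      let s' : V → Bool := fun v => if K.Reachable a v then !(s v) else s v
      have hsame : ∀ u v, G.Adj u v → s(u, v) ≠ s(a, b) → (s' u = s' v ↔ s u = s v) := by
        intro u v huv hne
        have hKuv : K.Adj u v := by
          rw [hK, SimpleGraph.deleteEdges_adj]; exact ⟨huv, by simpa using hne⟩
        have : K.Reachable a u ↔ K.Reachable a v :=
          ⟨fun h => h.trans hKuv.reachable, fun h => h.trans hKuv.symm.reachable⟩
        simp only [s', this]
        split_ifs <;> simp
      have hab' : s' a ≠ s' b := by
        simp [s', hbr, hsab]
      have hne : ∀ u v, s' u = s' v → s(u, v) ≠ s(a, b) := by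
        intro u v huv h
        rw [Sym2.eq_iff] at h
        rcases h with ⟨rfl, rfl⟩ | ⟨rfl, rfl⟩
        · exact hab' huv
        · exact hab' huv.symm
      refine ih _ ?_ s' ?_ rfl
      · rw [← hm]
        refine Finset.card_lt_card ?_
        rw [Finset.ssubset_iff_of_subset]
        · exact ⟨(a, b), by simp [hab, hsab], by simp [hab']⟩
        · intro p hp
          simp only [Finset.mem_filter, Finset.mem_univ, true_and] at hp ⊢
          exact ⟨hp.1, (hsame _ _ hp.1 (hne _ _ hp.2)).1 hp.2⟩
      · intro u v huv h
        exact hs u v huv ((hsame _ _ huv (hne _ _ h)).1 h)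
    · push Not at hex
      have c : G.Coloring Bool := SimpleGraph.Coloring.mk s (fun {u v} h => hex u v h)
      simpa using c.colorable

/-! ### The lollipop in sorted order and the rearrangement inequality -/

/-- Triangle `0,1,2` with the path `2,3,…,n-1`. -/
def Lp (n : ℕ) : SimpleGraph (Fin n) :=
  SimpleGraph.fromRel (fun i j => j.val = i.val + 1 ∨ (i.val = 0 ∧ j.val = 2))

lemma Lp_adj {n : ℕ} (i j : Fin n) : (Lp n).Adj i j ↔
    (j.val = i.val + 1 ∨ (i.val = 0 ∧ j.val = 2)) ∨
    (i.val = j.val + 1 ∨ (j.val = 0 ∧ i.val = 2)) := by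
  rw [Lp, SimpleGraph.fromRel_adj, Ne, Fin.ext_iff]
  omega

/-- The value of the form of the lollipop at the sorted alternating vector. -/
noncomputable def FL (n : ℕ) (g : ℕ → ℝ) : ℝ :=
  (g 0 + g 1) ^ 2 + (g 2 - g 0) ^ 2 + (g 2 - g 1) ^ 2 +
    ∑ k ∈ Ico 2 (n - 1), (g (k + 1) - g k) ^ 2

lemma cover_sum {n : ℕ} (P : Finset (Fin n × Fin n)) (d : ℕ → ℝ) (hd : ∀ k, 0 ≤ d k)
    (S : Finset ℕ) (hS : ∀ k ∈ S, ∃ p ∈ P, p.1.val ≤ k ∧ k < p.2.val) :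
    ∑ k ∈ S, d k ≤ ∑ p ∈ P, ∑ k ∈ Ico p.1.val p.2.val, d k := by
  have h1 : ∀ p ∈ P, ∑ k ∈ S, (if p.1.val ≤ k ∧ k < p.2.val then d k else 0) ≤
      ∑ k ∈ Ico p.1.val p.2.val, d k := by
    intro p _
    rw [← Finset.sum_filter]
    refine Finset.sum_le_sum_of_subset_of_nonneg ?_ (fun k _ _ => hd k)
    intro k hk
    simp only [Finset.mem_filter] at hk
    exact Finset.mem_Ico.2 hk.2
  refine le_trans ?_ (Finset.sum_le_sum h1)
  rw [Finset.sum_comm]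
  refine Finset.sum_le_sum fun k hk => ?_
  obtain ⟨p, hp, hpk⟩ := hS k hk
  refine le_trans ?_ (Finset.single_le_sum (f := fun p : Fin n × Fin n =>
    if p.1.val ≤ k ∧ k < p.2.val then d k else 0) ?_ hp)
  · simp [hpk]
  · intro q _
    split_ifs
    · exact hd k
    · exact le_rfl

lemma superadd (g : ℕ → ℝ) (hm : Monotone g) (i j : ℕ) (hij : i ≤ j) :
    ∑ k ∈ Ico i j, (g (k + 1) - g k) ^ 2 ≤ (g j - g i) ^ 2 := by
  induction j, hij using Nat.le_induction with
  | base => simp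
  | succ j hij ih =>
    rw [Finset.sum_Ico_succ_top hij]
    have h1 := hm hij
    have h2 := hm (Nat.le_succ j)
    simp only [Nat.succ_eq_add_one] at h2
    nlinarith [mul_nonneg (sub_nonneg.2 h1) (sub_nonneg.2 h2)]

lemma superadd_strict (g : ℕ → ℝ) (hm : Monotone g) (i j : ℕ) (hij : i + 1 ≤ j)
    (h1 : g i < g (i + 1)) (h2 : g (i + 1) < g j) :
    ∑ k ∈ Ico i j, (g (k + 1) - g k) ^ 2 < (g j - g i) ^ 2 := by
  rw [Finset.sum_eq_sum_Ico_succ_bot (by omega)]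
  have := superadd g hm (i + 1) j hij
  nlinarith [mul_pos (sub_pos.2 h1) (sub_pos.2 h2)]

/-- Truncated increments. -/
noncomputable def d2 (g : ℕ → ℝ) (k : ℕ) : ℝ := if k < 2 then 0 else (g (k + 1) - g k) ^ 2

lemma d2_nonneg (g : ℕ → ℝ) (k : ℕ) : 0 ≤ d2 g k := by
  unfold d2; split_ifs
  · exact le_rfl
  · positivity

lemma d2_sum_ge (g : ℕ → ℝ) (i j : ℕ) (hi : 2 ≤ i) :
    ∑ k ∈ Ico i j, d2 g k = ∑ k ∈ Ico i j, (g (k + 1) - g k) ^ 2 := by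
  refine Finset.sum_congr rfl fun k hk => ?_
  rw [Finset.mem_Ico] at hk
  rw [d2, if_neg (by omega)]

lemma d2_sum_lt (g : ℕ → ℝ) (i j : ℕ) (hi : i ≤ 2) (hj : 2 ≤ j) :
    ∑ k ∈ Ico i j, d2 g k = ∑ k ∈ Ico 2 j, (g (k + 1) - g k) ^ 2 := by
  rw [← Finset.sum_Ico_consecutive _ hi hj, d2_sum_ge g 2 j le_rfl]
  rw [Finset.sum_eq_zero, zero_add]
  intro k hk
  rw [Finset.mem_Ico] at hk
  rw [d2, if_pos (by omega)]

lemma abs_edge (x y : ℝ) : (|y| - |x|) ^ 2 ≤ (x + y) ^ 2 := by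
  have := neg_abs_le (x * y)
  rw [abs_mul] at this
  nlinarith [sq_abs x, sq_abs y]

lemma exists_cross {n : ℕ} (K : SimpleGraph (Fin n)) (hK : K.Connected) (k : ℕ) (hk : k + 1 < n) :
    ∃ p ∈ EP K, p.1.val ≤ k ∧ k < p.2.val := by
  obtain ⟨w⟩ := hK.preconnected ⟨k, by omega⟩ ⟨k + 1, hk⟩
  obtain ⟨d, _, h1, h2⟩ := w.exists_boundary_dart {i | i.val ≤ k} (by simp) (by simp)
  simp only [Set.mem_ofPred_eq, not_le] at h1 h2
  exact ⟨(d.fst, d.snd), mem_EP.2 ⟨Fin.lt_def.2 (lt_of_le_of_lt h1 h2), d.adj⟩, h1, h2⟩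

theorem rearrange {n : ℕ} (hn : 4 ≤ n) (H : SimpleGraph (Fin n)) (hconn : H.Connected)
    (hnb : ¬ H.Colorable 2) (x : Fin n → ℝ) (g : ℕ → ℝ) (hg : ∀ i : Fin n, g i.val = |x i|)
    (hm : Monotone g) (h0 : ∀ k, 0 ≤ g k) :
    FL n g ≤ ∑ p ∈ EP H, (x p.1 + x p.2) ^ 2 ∧
    (0 < g 0 → g 0 < g 2 → g 1 < g 2 → (∀ k, 2 ≤ k → k + 1 < n → g k < g (k + 1)) →
      FL n g = ∑ p ∈ EP H, (x p.1 + x p.2) ^ 2 → H = Lp n) := by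
  obtain ⟨a, b, hlt, hadj, hs, hbr⟩ : ∃ a b, a < b ∧ H.Adj a b ∧
      (decide (0 ≤ x a) = decide (0 ≤ x b)) ∧ ¬ H.IsBridge s(a, b) := by
    obtain ⟨a, b, h1, h2, h3⟩ := exists_mono_nonbridge H hnb (fun v => decide (0 ≤ x v))
    rcases lt_or_gt_of_ne h1.ne with h | h
    · exact ⟨a, b, h, h1, h2, h3⟩
    · exact ⟨b, a, h, h1.symm, h2.symm, by rwa [Sym2.eq_swap]⟩
  have hK := hconn.connected_delete_edge_of_not_isBridge hbr
  set K := H.deleteEdges {s(a, b)} with hKdef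
  have hKP : EP K = (EP H).erase (a, b) := by
    ext ⟨i, j⟩
    simp only [mem_EP, Finset.mem_erase, hKdef, SimpleGraph.deleteEdges_adj,
      Set.mem_singleton_iff, Sym2.eq_iff, ne_eq, Prod.mk.injEq]
    constructor
    · rintro ⟨h1, h2, h3⟩
      exact ⟨fun h => h3 (Or.inl h), h1, h2⟩
    · rintro ⟨h1, h2, h3⟩
      refine ⟨h2, h3, ?_⟩
      rintro (h | ⟨rfl, rfl⟩)
      · exact h1 h
      · exact absurd hlt (not_lt.2 h2.le)
  have habP : (a, b) ∈ EP H := mem_EP.2 ⟨hlt, hadj⟩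
  have hsum : ∑ p ∈ EP H, (x p.1 + x p.2) ^ 2 =
      (g a + g b) ^ 2 + ∑ p ∈ EP K, (x p.1 + x p.2) ^ 2 := by
    rw [hKP, ← Finset.add_sum_erase _ _ habP]
    congr 1
    rw [hg, hg]
    by_cases h : 0 ≤ x a
    · have h' : 0 ≤ x b := by simpa [h] using hs
      rw [abs_of_nonneg h, abs_of_nonneg h']
    · have h' : ¬ 0 ≤ x b := by simpa [h] using hs
      rw [abs_of_neg (not_le.1 h), abs_of_neg (not_le.1 h')]
      ring
  have hedge : ∀ p : Fin n × Fin n, (g p.2 - g p.1) ^ 2 ≤ (x p.1 + x p.2) ^ 2 := by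
    intro p
    rw [hg, hg]
    exact abs_edge _ _
  have hlt' : a.val < b.val := hlt
  by_cases hb : 2 ≤ b.val
  · -- case A
    have h1 : ∑ k ∈ range (n - 1), (g (k + 1) - g k) ^ 2 ≤
        ∑ p ∈ EP K, (x p.1 + x p.2) ^ 2 := by
      refine le_trans (cover_sum (EP K) (fun k => (g (k + 1) - g k) ^ 2)
        (fun k => sq_nonneg _) (range (n - 1)) ?_) ?_
      · intro k hk
        rw [Finset.mem_range] at hk
        exact exists_cross K hK k (by omega)
      · refine Finset.sum_le_sum fun p hp => ?_
        exact (superadd g hm _ _ (mem_EP.1 hp).1.le).trans (hedge p)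
    have h2 : ∑ k ∈ range (n - 1), (g (k + 1) - g k) ^ 2 = (g 1 - g 0) ^ 2 + (g 2 - g 1) ^ 2 +
        ∑ k ∈ Ico 2 (n - 1), (g (k + 1) - g k) ^ 2 := by
      rw [Finset.range_eq_Ico, Finset.sum_eq_sum_Ico_succ_bot (by omega),
        Finset.sum_eq_sum_Ico_succ_bot (by omega)]
      norm_num
      ring
    have h3 : (g 0 + g 2) ^ 2 ≤ (g a + g b) ^ 2 := by
      have := hm (Nat.zero_le a.val)
      have := hm hb
      have := h0 0
      have := h0 2
      gcongr
    have h4 : FL n g + 4 * g 0 * (g 2 - g 1) ≤ ∑ p ∈ EP H, (x p.1 + x p.2) ^ 2 := by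
      rw [hsum, FL]
      nlinarith
    have h5 : g 1 ≤ g 2 := hm (by norm_num)
    refine ⟨?_, ?_⟩
    · nlinarith [mul_nonneg (h0 0) (sub_nonneg.2 h5)]
    · intro e0 e1 e2 _ heq
      nlinarith [mul_pos e0 (sub_pos.2 e2)]
  · -- case B
    have ha0 : a.val = 0 := by omega
    have hb1 : b.val = 1 := by omega
    have : Nontrivial (Fin n) := ⟨a, b, hlt.ne⟩
    have key : ∀ u v, K.Adj u v → u.val ≤ 1 → 2 ≤ v.val := by
      intro u v huv hu
      by_contra hv
      have hne := huv.ne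
      rw [hKdef, SimpleGraph.deleteEdges_adj] at huv
      apply huv.2
      rw [Set.mem_singleton_iff, Sym2.eq_iff]
      simp only [Ne, Fin.ext_iff] at hne ⊢
      omega
    obtain ⟨c, hac⟩ := hK.preconnected.exists_adj_of_nontrivial a
    obtain ⟨d, hbd⟩ := hK.preconnected.exists_adj_of_nontrivial b
    have hc := key a c hac (by omega)
    have hd := key b d hbd (by omega)
    have hacP : (a, c) ∈ EP K := mem_EP.2 ⟨Fin.lt_def.2 (by dsimp only; omega), hac⟩
    have hbdP : (b, d) ∈ EP K := mem_EP.2 ⟨Fin.lt_def.2 (by dsimp only; omega), hbd⟩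
    let LB : Fin n × Fin n → ℝ := fun p => (∑ k ∈ Ico p.1.val p.2.val, d2 g k) +
      ((if p = (a, c) then (g 2 - g 0) ^ 2 else 0) + (if p = (b, d) then (g 2 - g 1) ^ 2 else 0))
    have hLBsum : (g 2 - g 0) ^ 2 + (g 2 - g 1) ^ 2 + ∑ k ∈ Ico 2 (n - 1), (g (k + 1) - g k) ^ 2 ≤
        ∑ p ∈ EP K, LB p := by
      simp only [LB, Finset.sum_add_distrib, Finset.sum_ite_eq', hacP, hbdP, if_true]
      have := cover_sum (EP K) (d2 g) (d2_nonneg g) (Ico 2 (n - 1)) (by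
        intro k hk
        rw [Finset.mem_Ico] at hk
        exact exists_cross K hK k (by omega))
      rw [d2_sum_ge g 2 _ le_rfl] at this
      linarith
    -- the bound for small first index
    have hsmall : ∀ p ∈ EP K, p.1.val ≤ 1 → 2 ≤ p.2.val ∧
        LB p ≤ (g 2 - g p.1) ^ 2 + (g p.2 - g 2) ^ 2 := by
      intro p hp hp1
      have hp2 := key _ _ (mem_EP.1 hp).2 hp1
      refine ⟨hp2, ?_⟩
      have hW := superadd g hm 2 p.2.val hp2
      rw [← d2_sum_lt g p.1.val p.2.val (by omega) hp2] at hW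
      simp only [LB]
      have : ((if p = (a, c) then (g 2 - g 0) ^ 2 else 0) +
          (if p = (b, d) then (g 2 - g 1) ^ 2 else 0)) ≤ (g 2 - g p.1) ^ 2 := by
        by_cases hpa : p = (a, c)
        · have hpb : p ≠ (b, d) := by
            rw [hpa]; intro h; exact hlt.ne (Prod.mk.inj h).1
          rw [if_pos hpa, if_neg hpb, hpa]
          simp [ha0]
        · rw [if_neg hpa]
          by_cases hpb : p = (b, d)
          · rw [if_pos hpb, hpb]; simp [hb1]
          · rw [if_neg hpb]; simp [sq_nonneg]
      linarith
    have hbig : ∀ p, 2 ≤ p.1.val →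
        LB p = ∑ k ∈ Ico p.1.val p.2.val, (g (k + 1) - g k) ^ 2 := by
      intro p hp1
      have h1 : p ≠ (a, c) := by rintro rfl; dsimp only at hp1; omega
      have h2 : p ≠ (b, d) := by rintro rfl; dsimp only at hp1; omega
      simp only [LB, if_neg h1, if_neg h2, add_zero]
      exact d2_sum_ge g _ _ hp1
    have hLB : ∀ p ∈ EP K, LB p ≤ (x p.1 + x p.2) ^ 2 := by
      intro p hp
      refine le_trans ?_ (hedge p)
      by_cases hp1 : p.1.val ≤ 1
      · obtain ⟨hp2, h⟩ := hsmall p hp hp1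
        refine h.trans ?_
        have e1 : g p.1 ≤ g 2 := hm (by omega)
        have e2 : g 2 ≤ g p.2 := hm hp2
        nlinarith [mul_nonneg (sub_nonneg.2 e1) (sub_nonneg.2 e2)]
      · rw [hbig p (by omega)]
        exact superadd g hm _ _ (mem_EP.1 hp).1.le
    have hgab : (g a + g b) ^ 2 = (g 0 + g 1) ^ 2 := by rw [ha0, hb1]
    have hFL : FL n g ≤ (g a + g b) ^ 2 + ∑ p ∈ EP K, LB p := by
      rw [hgab, FL]; linarith
    have hle := Finset.sum_le_sum hLB
    refine ⟨by rw [hsum]; linarith, ?_⟩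
    intro _ e02 e12 estr heq
    have hall : ∀ p ∈ EP K, LB p = (x p.1 + x p.2) ^ 2 := by
      rw [← Finset.sum_eq_sum_iff_of_le hLB]
      rw [hsum] at heq
      linarith
    have hmono2 : ∀ m k, 2 ≤ k → k + (m + 1) < n → g k < g (k + (m + 1)) := by
      intro m k hk hkm
      calc g k < g (k + 1) := estr k hk (by omega)
        _ ≤ g (k + (m + 1)) := hm (by omega)
    have hstr : ∀ k j, 2 ≤ k → k < j → j < n → g k < g j := by
      intro k j h1 h2 h3
      obtain ⟨m, rfl⟩ : ∃ m, j = k + (m + 1) := ⟨j - k - 1, by omega⟩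
      exact hmono2 m k h1 h3
    have hform : ∀ p ∈ EP K, p.2.val = p.1.val + 1 ∨ (p.1.val = 0 ∧ p.2.val = 2) := by
      intro p hp
      have hpe := (hall p hp).symm ▸ hedge p
      have hplt : p.1.val < p.2.val := (mem_EP.1 hp).1
      by_cases hp1 : p.1.val ≤ 1
      · obtain ⟨hp2, h⟩ := hsmall p hp hp1
        by_cases hp3 : p.2.val = 2
        · omega
        · exfalso
          have e1 : g p.1 < g 2 := lt_of_le_of_lt (hm hp1) e12
          have e2 : g 2 < g p.2 := hstr 2 _ le_rfl (by omega) p.2.isLt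
          nlinarith [mul_pos (sub_pos.2 e1) (sub_pos.2 e2)]
      · rw [hbig p (by omega)] at hpe
        by_contra hcon
        have := superadd_strict g hm p.1.val p.2.val (by omega)
          (estr _ (by omega) (by have := p.2.isLt; omega))
          (hstr _ _ (by omega) (by omega) p.2.isLt)
        linarith
    have hKH : ∀ u v, K.Adj u v → H.Adj u v := by
      intro u v h
      rw [hKdef, SimpleGraph.deleteEdges_adj] at h
      exact h.1
    have hsub : ∀ p ∈ EP H, p.2.val = p.1.val + 1 ∨ (p.1.val = 0 ∧ p.2.val = 2) := by
      intro p hp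
      by_cases hpab : p = (a, b)
      · subst hpab; dsimp only; omega
      · exact hform p (by rw [hKP]; exact Finset.mem_erase.2 ⟨hpab, hp⟩)
    have hsup : ∀ u v : Fin n, (v.val = u.val + 1 ∨ (u.val = 0 ∧ v.val = 2)) → H.Adj u v := by
      intro u v huv
      have hc2 := hform _ hacP
      have hd2 := hform _ hbdP
      dsimp only at hc2 hd2
      rcases huv with h | h
      · by_cases hu2 : 2 ≤ u.val
        · obtain ⟨p, hp, hp1, hp2⟩ := exists_cross K hK u.val (by have := v.isLt; omega)
          have hpf := hform p hp
          have e1 : p.1 = u := Fin.ext (by omega)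
          have e2 : p.2 = v := Fin.ext (by omega)
          have := hKH _ _ (mem_EP.1 hp).2
          rwa [e1, e2] at this
        · by_cases hu1 : u.val = 1
          · have e1 : b = u := Fin.ext (by omega)
            have e2 : d = v := Fin.ext (by omega)
            rw [← e1, ← e2]; exact hKH _ _ hbd
          · have e1 : a = u := Fin.ext (by omega)
            have e2 : b = v := Fin.ext (by omega)
            rw [← e1, ← e2]; exact hadj
      · have e1 : a = u := Fin.ext (by omega)
        have e2 : c = v := Fin.ext (by omega)
        rw [← e1, ← e2]; exact hKH _ _ hac
    ext u v
    rw [Lp_adj]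
    constructor
    · intro h
      rcases lt_or_gt_of_ne h.ne with hl | hl
      · exact Or.inl (hsub (u, v) (mem_EP.2 ⟨hl, h⟩))
      · exact Or.inr (hsub (v, u) (mem_EP.2 ⟨hl, h.symm⟩))
    · rintro (h | h)
      · exact hsup _ _ h
      · exact (hsup _ _ h).symm

/-! ### The eigenvector of the lollipop -/

/-- Signs of the lollipop eigenvector. -/
noncomputable def sg (k : ℕ) : ℝ := if k = 0 then 1 else (-1) ^ (k + 1)

lemma sg_sq (k : ℕ) : sg k * sg k = 1 := by
  unfold sg
  split_ifs
  · norm_num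
  · rw [← mul_pow]; norm_num

lemma sg_succ (k : ℕ) (hk : 1 ≤ k) : sg (k + 1) = - sg k := by
  unfold sg
  rw [if_neg (by omega), if_neg (by omega), pow_succ]
  ring

lemma sg_zero : sg 0 = 1 := by simp [sg]
lemma sg_one : sg 1 = 1 := by simp [sg]
lemma sg_two : sg 2 = -1 := by rw [sg_succ 1 le_rfl, sg_one]

lemma Lp_sum {n : ℕ} (hn : 4 ≤ n) (f : ℕ → ℕ → ℝ) :
    ∑ p ∈ EP (Lp n), f p.1.val p.2.val = f 0 2 + ∑ k ∈ range (n - 1), f k (k + 1) := by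
  have hmem : ((⟨0, by omega⟩, ⟨2, by omega⟩) : Fin n × Fin n) ∈ EP (Lp n) := by
    rw [mem_EP, Lp_adj, Fin.lt_def]; simp
  rw [← Finset.add_sum_erase _ _ hmem]
  congr 1
  refine Finset.sum_bij (fun p _ => p.1.val) ?_ ?_ ?_ ?_
  · rintro ⟨⟨i, hi⟩, ⟨j, hj⟩⟩ hp
    simp only [Finset.mem_erase, mem_EP, Lp_adj, Fin.lt_def, ne_eq, Prod.mk.injEq, Fin.mk.injEq,
      Finset.mem_range] at hp ⊢
    omega
  · rintro ⟨⟨i, hi⟩, ⟨j, hj⟩⟩ hp ⟨⟨i', hi'⟩, ⟨j', hj'⟩⟩ hp' h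
    simp only [Finset.mem_erase, mem_EP, Lp_adj, Fin.lt_def, ne_eq, Prod.mk.injEq,
      Fin.mk.injEq] at hp hp' h ⊢
    omega
  · intro k hk
    rw [Finset.mem_range] at hk
    refine ⟨(⟨k, by omega⟩, ⟨k + 1, by omega⟩), ?_, rfl⟩
    refine Finset.mem_erase.2 ⟨?_, mem_EP.2 ⟨Fin.lt_def.2 (Nat.lt_succ_self k), ?_⟩⟩
    · simp only [ne_eq, Prod.mk.injEq, Fin.mk.injEq]
      omega
    · rw [Lp_adj]
      exact Or.inl (Or.inl rfl)
  · rintro ⟨⟨i, hi⟩, ⟨j, hj⟩⟩ hp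
    simp only [Finset.mem_erase, mem_EP, Lp_adj, Fin.lt_def, ne_eq, Prod.mk.injEq,
      Fin.mk.injEq] at hp ⊢
    rw [show j = i + 1 by omega]

lemma Lp_form {n : ℕ} (hn : 4 ≤ n) (g : ℕ → ℝ) :
    ∑ p ∈ EP (Lp n), (sg p.1.val * g p.1.val + sg p.2.val * g p.2.val) ^ 2 = FL n g := by
  rw [Lp_sum hn (fun i j => (sg i * g i + sg j * g j) ^ 2)]
  rw [Finset.range_eq_Ico, Finset.sum_eq_sum_Ico_succ_bot (by omega),
    Finset.sum_eq_sum_Ico_succ_bot (by omega), FL]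
  have : ∑ k ∈ Ico (0 + 1 + 1) (n - 1), (sg k * g k + sg (k + 1) * g (k + 1)) ^ 2 =
      ∑ k ∈ Ico 2 (n - 1), (g (k + 1) - g k) ^ 2 := by
    refine Finset.sum_congr rfl fun k hk => ?_
    rw [Finset.mem_Ico] at hk
    rw [sg_succ k (by omega)]
    linear_combination (g (k + 1) - g k) ^ 2 * sg_sq k
  rw [this]
  norm_num [sg_zero, sg_one, sg_two]
  ring

lemma nbr_sum {n : ℕ} (H : SimpleGraph (Fin n)) (f : ℕ → ℝ) (i : Fin n) (N : Finset ℕ)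
    (hN : ∀ m ∈ N, m < n) (hA : ∀ j : Fin n, H.Adj i j ↔ j.val ∈ N) :
    (∑ j, if H.Adj i j then f i.val + f j.val else 0) = ∑ m ∈ N, (f i.val + f m) := by
  simp only [hA]
  rw [Fin.sum_univ_eq_sum_range (fun m => if m ∈ N then f i.val + f m else 0), ← Finset.sum_filter]
  refine Finset.sum_congr ?_ fun _ _ => rfl
  ext m
  simp only [Finset.mem_filter, Finset.mem_range]
  exact ⟨fun h => h.2, fun h => ⟨hN m h, h⟩⟩

lemma strictness {n : ℕ} (hn : 4 ≤ n) (g : ℕ → ℝ) (hm : Monotone g) (h0 : ∀ k, 0 ≤ g k)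
    (hpos : 0 < g (n - 1)) (q : ℝ) (hq : 0 ≤ q)
    (h : (signlessLaplacian (Lp n)).mulVec (fun i : Fin n => sg i.val * g i.val) =
      q • (fun i : Fin n => sg i.val * g i.val)) :
    0 < g 0 ∧ g 0 < g 2 ∧ g 1 < g 2 ∧ (∀ k, 2 ≤ k → k + 1 < n → g k < g (k + 1)) := by
  have eq : ∀ (i : ℕ) (hi : i < n) (N : Finset ℕ), (∀ m ∈ N, m < n) →
      (∀ j : Fin n, (Lp n).Adj ⟨i, hi⟩ j ↔ j.val ∈ N) →
      ∑ m ∈ N, (sg i * g i + sg m * g m) = q * (sg i * g i) := by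
    intro i hi N h1 h2
    have := congrFun h ⟨i, hi⟩
    rw [mulVec_apply', nbr_sum (Lp n) (fun k => sg k * g k) ⟨i, hi⟩ N h1 h2] at this
    simpa using this
  have e0 : (g 0 + g 1) - (g 2 - g 0) = q * g 0 := by
    have := eq 0 (by omega) {1, 2} (by simp; omega) (by
      rintro ⟨j, hj⟩; rw [Lp_adj]; simp only [Finset.mem_insert, Finset.mem_singleton, true_and, and_true]; omega)
    rw [Finset.sum_pair (by norm_num), sg_zero, sg_one, sg_two] at this
    linarith
  have e1 : (g 0 + g 1) - (g 2 - g 1) = q * g 1 := by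
    have := eq 1 (by omega) {0, 2} (by simp; omega) (by
      rintro ⟨j, hj⟩; rw [Lp_adj]; simp only [Finset.mem_insert, Finset.mem_singleton, true_and, and_true]; omega)
    rw [Finset.sum_pair (by norm_num), sg_zero, sg_one, sg_two] at this
    linarith
  have e2 : (g 2 - g 0) + (g 2 - g 1) - (g 3 - g 2) = q * g 2 := by
    have := eq 2 (by omega) {0, 1, 3} (by simp; omega) (by
      rintro ⟨j, hj⟩; rw [Lp_adj]; simp only [Finset.mem_insert, Finset.mem_singleton, true_and, and_true]; omega)
    rw [Finset.sum_insert (by norm_num), Finset.sum_pair (by norm_num), sg_zero, sg_one,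
      sg_succ 2 (by norm_num), sg_two] at this
    linarith
  have ek : ∀ k, 2 ≤ k → k + 2 < n →
      (g (k + 1) - g k) - (g (k + 2) - g (k + 1)) = q * g (k + 1) := by
    intro k hk hkn
    have := eq (k + 1) (by omega) {k, k + 2} (by simp; omega) (by
      rintro ⟨j, hj⟩; rw [Lp_adj]; simp only [Finset.mem_insert, Finset.mem_singleton, true_and, and_true]; omega)
    rw [Finset.sum_pair (by omega), sg_succ (k + 1) (by omega), sg_succ k (by omega)] at this
    have hs := sg_sq k
    have h2 : sg k * (-(sg k * g (k+1)) + sg k * g k +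
      (-(sg k * g (k+1)) + sg k * g (k + 2))) = sg k * (q * -(sg k * g (k+1))) := by
      rw [← neg_mul]; rw [neg_neg] at this; rw [this]
    linear_combination (-1 : ℝ) * h2 + (g (k+2) + g k - 2 * g (k+1) + q * g (k+1)) * hs
  have en : g (n - 1) - g (n - 2) = q * g (n - 1) := by
    obtain ⟨k, rfl⟩ : ∃ k, n = k + 2 := ⟨n - 2, by omega⟩
    simp only [Nat.add_sub_cancel, show k + 2 - 1 = k + 1 by omega]
    have := eq (k + 1) (by omega) {k} (by simp) (by
      rintro ⟨j, hj⟩; simp only [Lp_adj, Finset.mem_singleton]; omega)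
    rw [Finset.sum_singleton, sg_succ k (by omega)] at this
    have hs := sg_sq k
    have h2 : sg k * (-(sg k) * g (k+1) + sg k * g k) = sg k * (q * (-(sg k) * g (k+1))) := by
      rw [this]
    linear_combination (-1 : ℝ) * h2 + (g k - g (k+1) + q * g (k+1)) * hs
  have m01 := hm (show 0 ≤ 2 by norm_num)
  have m12 := hm (show 1 ≤ 2 by norm_num)
  have hqpos : 0 < q := by
    rcases hq.lt_or_eq with h | h
    · exact h
    exfalso
    subst h
    have hz : ∀ m k, k + m = n - 2 → 2 ≤ k → g (k + 1) = g k := by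
      intro m
      induction m with
      | zero =>
        intro k hk hk2
        rw [show n - 1 = k + 1 by omega, show n - 2 = k by omega] at en
        linarith
      | succ m ih =>
        intro k hk hk2
        have := ih (k + 1) (by omega) (by omega)
        have := ek k hk2 (by omega)
        linarith
    have hz2 : ∀ k, 2 ≤ k → k + 1 ≤ n → g k = g 2 := by
      intro k hk
      induction k, hk using Nat.le_induction with
      | base => simp
      | succ k hk ih =>
        intro hkn
        rw [hz (n - 2 - k) k (by omega) hk, ih (by omega)]
    have z3 := hz2 3 (by omega) (by omega)
    have zn := hz2 (n - 1) (by omega) (by omega)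
    rw [zn] at hpos
    nlinarith
  have hstr : ∀ m k, k + m = n - 2 → 2 ≤ k → g k < g (k + 1) := by
    intro m
    induction m with
    | zero =>
      intro k hk hk2
      rw [show n - 1 = k + 1 by omega, show n - 2 = k by omega] at en
      rw [show n - 1 = k + 1 by omega] at hpos
      nlinarith [mul_pos hqpos hpos]
    | succ m ih =>
      intro k hk hk2
      have := ih (k + 1) (by omega) (by omega)
      have := ek k hk2 (by omega)
      nlinarith [mul_nonneg hq (h0 (k + 1))]
  have hstr' : ∀ k, 2 ≤ k → k + 1 < n → g k < g (k + 1) := fun k h1 h2 =>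
    hstr (n - 2 - k) k (by omega) h1
  have h23 := hstr' 2 le_rfl (by omega)
  norm_num at h23
  have hg2 : 0 < g 2 := by
    rcases (h0 2).lt_or_eq with h | h
    · exact h
    rw [← h] at e2 h23
    linarith [h0 0, h0 1]
  have hq1 : q < 1 := by
    by_contra hcon
    have := hm (show 2 ≤ n - 2 by omega)
    nlinarith
  have h01 : g 0 = g 1 := by
    have : (1 - q) * (g 0 - g 1) = 0 := by linear_combination e0 - e1
    rcases mul_eq_zero.1 this with h | h <;> linarith
  have hg0 : 0 < g 0 := by
    rcases (h0 0).lt_or_eq with h | h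
    · exact h
    rw [← h01, ← h] at e0
    linarith
  have h02 : g 0 < g 2 := by
    rw [← h01] at e0
    nlinarith [mul_pos (sub_pos.2 hq1) hg0]
  exact ⟨hg0, h02, h01 ▸ h02, hstr'⟩

/-- The relabelling on natural numbers. -/
def tr (i : ℕ) : ℕ := if i = 0 then 1 else if i = 1 then 2 else if i = 2 then 0 else i

/-- The inverse relabelling on natural numbers. -/
def tri (i : ℕ) : ℕ := if i = 0 then 2 else if i = 1 then 0 else if i = 2 then 1 else i

lemma tr_cases (i : ℕ) : (i = 0 ∧ tr i = 1) ∨ (i = 1 ∧ tr i = 2) ∨ (i = 2 ∧ tr i = 0) ∨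
    (3 ≤ i ∧ tr i = i) := by
  unfold tr
  split_ifs <;> omega

lemma tri_cases (i : ℕ) : (i = 0 ∧ tri i = 2) ∨ (i = 1 ∧ tri i = 0) ∨ (i = 2 ∧ tri i = 1) ∨
    (3 ≤ i ∧ tri i = i) := by
  unfold tri
  split_ifs <;> omega

lemma tr_rel (n : ℕ) (hn : 4 ≤ n) (i j : ℕ) (hi : i < n) (hj : j < n) :
    (¬ tr i = tr j ∧ (cstarRel 3 (n - 4) (tr i) (tr j) ∨ cstarRel 3 (n - 4) (tr j) (tr i))) ↔
    (j = i + 1 ∨ (i = 0 ∧ j = 2)) ∨ (i = j + 1 ∨ (j = 0 ∧ i = 2)) := by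
  have h1 := tr_cases i
  have h2 := tr_cases j
  generalize tr i = a at *
  generalize tr j = b at *
  unfold cstarRel
  obtain ⟨m, rfl⟩ : ∃ m, n = m + 4 := ⟨n - 4, by omega⟩
  simp only [Nat.add_sub_cancel]
  by_cases hl : m = 0
  · rw [if_pos hl]
    subst hl
    rcases h1 with ⟨h, h'⟩ | ⟨h, h'⟩ | ⟨h, h'⟩ | ⟨h, h'⟩ <;>
    rcases h2 with ⟨k, k'⟩ | ⟨k, k'⟩ | ⟨k, k'⟩ | ⟨k, k'⟩ <;> omega
  · rw [if_neg hl]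
    rcases h1 with ⟨h, h'⟩ | ⟨h, h'⟩ | ⟨h, h'⟩ | ⟨h, h'⟩ <;>
    rcases h2 with ⟨k, k'⟩ | ⟨k, k'⟩ | ⟨k, k'⟩ | ⟨k, k'⟩ <;> omega

/-- The relabelled lollipop is `C*_{3,n-4}`. -/
def lpIso (n : ℕ) (hn : 4 ≤ n) : Lp n ≃g Cstar n 3 (n - 4) where
  toFun i := ⟨tr i.val, by have := i.isLt; have := tr_cases i.val; omega⟩
  invFun i := ⟨tri i.val, by have := i.isLt; have := tri_cases i.val; omega⟩
  left_inv := by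
    rintro ⟨i, hi⟩
    rw [Fin.mk.injEq]
    have := tr_cases i
    have := tri_cases (tr i)
    dsimp only
    omega
  right_inv := by
    rintro ⟨i, hi⟩
    rw [Fin.mk.injEq]
    have := tri_cases i
    have := tr_cases (tri i)
    dsimp only
    omega
  map_rel_iff' := by
    rintro ⟨i, hi⟩ ⟨j, hj⟩
    rw [Lp_adj, Cstar, SimpleGraph.fromRel_adj, Ne, Fin.ext_iff]
    exact tr_rel n hn i j hi hj

theorem main_fin {n : ℕ} (hn : 4 ≤ n) (H : SimpleGraph (Fin n)) (hconn : H.Connected)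
    (hnb : ¬ H.Colorable 2) (x : Fin n → ℝ) (hx : x ≠ 0)
    (hev : (signlessLaplacian H).mulVec x = qmin H • x) (hmx : Monotone fun i => |x i|) :
    qmin (Lp n) ≤ qmin H ∧ (qmin (Lp n) = qmin H → H = Lp n) := by
  have : Nonempty (Fin n) := ⟨⟨0, by omega⟩⟩
  let g : ℕ → ℝ := fun k => |x ⟨min k (n - 1), by omega⟩|
  have hg : ∀ i : Fin n, g i.val = |x i| := by
    intro i
    have : (⟨min i.val (n - 1), by omega⟩ : Fin n) = i := Fin.ext (by have := i.isLt; simp; omega)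
    simp only [g, this]
  have hm : Monotone g := by
    intro i j hij
    apply hmx
    simp only [Fin.mk_le_mk]
    omega
  have h0 : ∀ k, 0 ≤ g k := fun k => abs_nonneg _
  let z : Fin n → ℝ := fun i => sg i.val * g i.val
  have hzx : z ⬝ᵥ z = x ⬝ᵥ x := by
    simp only [dotProduct]
    refine Finset.sum_congr rfl fun i _ => ?_
    have h1 := sg_sq i.val
    have h2 : g i.val * g i.val = x i * x i := by rw [hg, abs_mul_abs_self]
    simp only [z]
    linear_combination (g i.val * g i.val) * h1 + h2
  have hxx : 0 < x ⬝ᵥ x := by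
    have h1 : 0 ≤ x ⬝ᵥ x := Finset.sum_nonneg fun i _ => mul_self_nonneg _
    refine lt_of_le_of_ne h1 fun h => hx ?_
    exact dotProduct_self_eq_zero.1 h.symm
  obtain ⟨hle, hstrict⟩ := rearrange hn H hconn hnb x g hg hm h0
  have hFH : ∑ p ∈ EP H, (x p.1 + x p.2) ^ 2 = qmin H * (x ⬝ᵥ x) := by
    rw [← form_eq, hev, dotProduct_smul, smul_eq_mul]
  have hFz : z ⬝ᵥ (signlessLaplacian (Lp n)).mulVec z = FL n g := by
    rw [form_eq]; exact Lp_form hn g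
  have hr := rayleigh (Lp n) z
  rw [hFz, hzx] at hr
  refine ⟨?_, ?_⟩
  · have : qmin (Lp n) * (x ⬝ᵥ x) ≤ qmin H * (x ⬝ᵥ x) := by linarith
    exact le_of_mul_le_mul_right this hxx
  · intro heq
    rw [← heq] at hFH
    have hF : FL n g = qmin (Lp n) * (z ⬝ᵥ z) := by rw [hzx]; linarith
    have hz := rayleigh_eq (Lp n) z (hFz.trans hF)
    have hq : 0 ≤ qmin (Lp n) := by
      by_contra hcon
      have h1 : 0 ≤ FL n g := by
        rw [← Lp_form hn g]
        exact Finset.sum_nonneg fun p _ => sq_nonneg _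
      rw [hF, hzx] at h1
      nlinarith
    have hpos : 0 < g (n - 1) := by
      refine lt_of_le_of_ne (h0 _) fun h => hx ?_
      ext i
      have h1 := hm (show i.val ≤ n - 1 by have := i.isLt; omega)
      rw [← h, hg] at h1
      exact abs_nonpos_iff.1 h1
    obtain ⟨s1, s2, s3, s4⟩ := strictness hn g hm h0 hpos _ hq hz
    exact hstrict s1 s2 s3 s4 (by rw [hFH, hF, hzx])

end QminAux

/-- For `n ∈ {3γ-1, 3γ, 3γ+1}` (`γ ≥ 1`, `n ≥ 4`), among all connected nonbipartite
unicyclic graphs of order `n` with domination number `γ`, the least `Q`-eigenvalue is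
minimized uniquely by `C*_{3,n-4}`. -/
theorem qmin_Cstar_min_unicyclic_small
    {V : Type*} [Fintype V] (γ n : ℕ) (hγ : 1 ≤ γ) (hn4 : 4 ≤ n)
    (hn : n = 3 * γ - 1 ∨ n = 3 * γ ∨ n = 3 * γ + 1)
    (G : SimpleGraph V) (hcard : Fintype.card V = n)
    (hconn : G.Connected) (hnonbip : ¬ G.Colorable 2)
    (huni : G.edgeSet.ncard = n)
    (hdom : dominationNumber G = γ) :
    qmin (Cstar n 3 (n - 4)) ≤ qmin G ∧
      (qmin (Cstar n 3 (n - 4)) = qmin G ↔ Nonempty (G ≃g Cstar n 3 (n - 4))) := by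
  have e0 : V ≃ Fin n := Fintype.equivFinOfCardEq hcard
  have : Nonempty V := ⟨e0.symm ⟨0, by omega⟩⟩
  obtain ⟨x, hx, hev⟩ := QminAux.qmin_attained G
  let f : Fin n → ℝ := fun i => |x (e0.symm i)|
  let e : Fin n ≃ V := (Tuple.sort f).trans e0.symm
  let H : SimpleGraph (Fin n) := G.comap e
  let φ : H ≃g G := ⟨e, by intro a b; rfl⟩
  have hHc : H.Connected := φ.connected_iff.2 hconn
  have hHnb : ¬ H.Colorable 2 := fun hc => hnonbip (hc.of_hom φ.symm.toHom)
  have hq : qmin H = qmin G := QminAux.qmin_iso φ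
  have hmono : Monotone fun i => |(x ∘ φ) i| := Tuple.monotone_sort f
  have hne : x ∘ φ ≠ 0 := by
    intro h0
    apply hx
    ext v
    simpa using congrFun h0 (φ.symm v)
  have hev' := QminAux.mulVec_iso φ _ x hev
  rw [← hq] at hev'
  obtain ⟨h1, h2⟩ := QminAux.main_fin hn4 H hHc hHnb (x ∘ φ) hne hev' hmono
  have hL := QminAux.qmin_iso (QminAux.lpIso n hn4)
  rw [← hL, ← hq]
  refine ⟨h1, fun h => ?_, fun ⟨ψ⟩ => ?_⟩
  · have hHL := h2 h
    have ψ : H ≃g Cstar n 3 (n - 4) := hHL ▸ QminAux.lpIso n hn4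
    exact ⟨φ.symm.trans ψ⟩
  · rw [hL, hq]
    exact (QminAux.qmin_iso ψ).symm
end

section
/- Let γ ≥ 1 and n be integers with n ≥ 3γ + 2. For every connected nonbipartite unicyclic graph G of order n with domination number γ, one has q_min(C*_{3,3γ−3}) ≤ q_min(G), where C*_{3,3γ−3} has order n, and equality holds if and only if G is isomorphic to C*_{3,3γ−3}. -/
open scoped Classical

/-! ### Part 1: the quadratic form of the signless Laplacian -/

/-- The summand `(x u + x v)^2` attached to the edge `uv`. -/
noncomputable def edgeTerm {V : Type*} (x : V → ℝ) : Sym2 V → ℝ :=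
  Sym2.lift ⟨fun u v => (x u + x v) ^ 2, by intro u v; ring⟩

@[simp] lemma edgeTerm_mk {V : Type*} (x : V → ℝ) (u v : V) :
    edgeTerm x s(u, v) = (x u + x v) ^ 2 := rfl

lemma edgeTerm_nonneg {V : Type*} (x : V → ℝ) (e : Sym2 V) : 0 ≤ edgeTerm x e := by
  induction e with
  | _ u v => simp; positivity

/-- The energy of `x`. -/
noncomputable def energy {V : Type*} [Fintype V] (G : SimpleGraph V) (x : V → ℝ) : ℝ :=
  ∑ e ∈ G.edgeFinset, edgeTerm x e

lemma signlessLaplacian_eq {V : Type*} [Fintype V] (G : SimpleGraph V) :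
    signlessLaplacian G = G.incMatrix ℝ * (G.incMatrix ℝ).transpose := by
  rw [SimpleGraph.incMatrix_mul_transpose]
  ext i j
  by_cases h : i = j
  · subst h
    simp [signlessLaplacian]
  · simp [signlessLaplacian, h]

lemma incMatrix_vecMul {V : Type*} [Fintype V] (G : SimpleGraph V) (x : V → ℝ) (e : Sym2 V) :
    (Matrix.vecMul x (G.incMatrix ℝ) e) ^ 2 = if e ∈ G.edgeFinset then edgeTerm x e else 0 := by
  induction e with
  | _ u v =>
    simp only [Matrix.vecMul, dotProduct, SimpleGraph.incMatrix_apply', SimpleGraph.mem_edgeFinset,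
      SimpleGraph.mem_edgeSet, edgeTerm_mk]
    by_cases h : G.Adj u v
    · have h1 : ∀ i, (x i * if s(u, v) ∈ G.incidenceSet i then (1:ℝ) else 0)
          = (if i = u then x i else 0) + (if i = v then x i else 0) := by
        intro i
        have := h.ne
        by_cases hu : i = u
        · subst hu
          simp [SimpleGraph.incidenceSet, h, this]
        · by_cases hv : i = v
          · subst hv
            simp [SimpleGraph.incidenceSet, h, hu]
          · simp [SimpleGraph.incidenceSet, h, hu, hv]
      simp [h1, Finset.sum_add_distrib, h]
    · simp [SimpleGraph.incidenceSet, h]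

lemma quadForm_eq {V : Type*} [Fintype V] (G : SimpleGraph V) (x : V → ℝ) :
    x ⬝ᵥ (signlessLaplacian G).mulVec x = energy G x := by
  rw [signlessLaplacian_eq, ← Matrix.mulVec_mulVec, Matrix.dotProduct_mulVec,
    Matrix.mulVec_transpose, dotProduct, energy]
  simp_rw [← pow_two, incMatrix_vecMul]
  rw [Finset.sum_ite_mem, Finset.univ_inter]

lemma signlessLaplacian_isHermitian {V : Type*} [Fintype V] (G : SimpleGraph V) :
    (signlessLaplacian G).IsHermitian := by
  rw [signlessLaplacian_eq]
  ext i j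
  simp [Matrix.mul_apply, mul_comm]

lemma energy_smul {V : Type*} [Fintype V] (G : SimpleGraph V) (c : ℝ) (x : V → ℝ) :
    energy G (c • x) = c ^ 2 * energy G x := by
  rw [energy, energy, Finset.mul_sum]
  refine Finset.sum_congr rfl fun e _ => ?_
  induction e with
  | _ u v => simp; ring

lemma exists_min {V : Type*} [Fintype V] [Nonempty V] (G : SimpleGraph V) :
    ∃ (μ : ℝ) (x : V → ℝ), x ≠ 0 ∧ energy G x = μ * ∑ v, x v ^ 2 ∧
      ∀ y : V → ℝ, μ * ∑ v, y v ^ 2 ≤ energy G y := by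
  have hcont : Continuous (fun x : V → ℝ => energy G x) := by
    have h : (fun x : V → ℝ => energy G x) = fun x => ∑ i, x i * ∑ j, signlessLaplacian G i j * x j := by
      funext x
      rw [← quadForm_eq]
      rfl
    rw [h]
    fun_prop
  have hcomp : IsCompact {x : V → ℝ | ∑ v, x v ^ 2 = 1} := by
    apply Metric.isCompact_of_isClosed_isBounded
    · exact isClosed_eq (by fun_prop) continuous_const
    · rw [Metric.isBounded_iff_subset_closedBall 0]
      refine ⟨1, fun x hx => ?_⟩
      rw [mem_closedBall_zero_iff, pi_norm_le_iff_of_nonneg zero_le_one]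
      intro v
      have h1 : x v ^ 2 ≤ ∑ v, x v ^ 2 :=
        Finset.single_le_sum (f := fun v => x v ^ 2) (fun i _ => sq_nonneg _) (Finset.mem_univ v)
      rw [Set.mem_ofPred_eq.mp hx] at h1
      rw [Real.norm_eq_abs]
      exact (sq_le_one_iff_abs_le_one _).mp h1
  obtain ⟨v0⟩ := ‹Nonempty V›
  obtain ⟨x, hx, hmin⟩ := hcomp.exists_isMinOn
    ⟨Pi.single v0 1, by
      rw [Set.mem_ofPred_eq, Finset.sum_eq_single v0]
      · simp
      · intro b _ hb; simp [hb]
      · simp⟩ hcont.continuousOn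
  refine ⟨energy G x, x, ?_, ?_, ?_⟩
  · rintro rfl
    simp at hx
  · rw [Set.mem_ofPred_eq.mp hx, mul_one]
  · intro y
    set N := ∑ v, y v ^ 2 with hN
    have hN0 : 0 ≤ N := Finset.sum_nonneg fun _ _ => sq_nonneg _
    rcases hN0.eq_or_lt with h0 | h0
    · rw [← h0, mul_zero]
      exact Finset.sum_nonneg fun e _ => edgeTerm_nonneg _ _
    · have hy : ((Real.sqrt N)⁻¹ • y) ∈ {x : V → ℝ | ∑ v, x v ^ 2 = 1} := by
        simp only [Set.mem_ofPred_eq, Pi.smul_apply, smul_eq_mul, mul_pow, inv_pow,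
          Real.sq_sqrt hN0, ← Finset.mul_sum]
        rw [← hN, inv_mul_cancel₀ h0.ne']
      have := hmin hy
      simp only [Set.mem_ofPred_eq, energy_smul, inv_pow, Real.sq_sqrt hN0] at this
      calc energy G x * N ≤ (N⁻¹ * energy G y) * N := by gcongr
        _ = energy G y := by field_simp

lemma qmin_spec {V : Type*} [Fintype V] [Nonempty V] (G : SimpleGraph V) :
    (∃ x : V → ℝ, x ≠ 0 ∧ energy G x = qmin G * ∑ v, x v ^ 2) ∧
      ∀ y : V → ℝ, qmin G * ∑ v, y v ^ 2 ≤ energy G y := by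
  obtain ⟨μ, x, hx0, hx, hmin⟩ := exists_min G
  have key : qmin G = μ := by
    have hps : (signlessLaplacian G - μ • (1 : Matrix V V ℝ)).PosSemidef := by
      refine Matrix.PosSemidef.of_dotProduct_mulVec_nonneg ?_ ?_
      · refine (signlessLaplacian_isHermitian G).sub ?_
        ext i j
        simp [Matrix.one_apply, eq_comm]
      · intro y
        have := hmin y
        rw [← quadForm_eq] at this
        simp only [star_trivial, Matrix.sub_mulVec, dotProduct_sub, Matrix.smul_mulVec,
          Matrix.one_mulVec, dotProduct_smul, smul_eq_mul, sub_nonneg]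
        simpa [dotProduct, pow_two] using this
    have hz := (hps.dotProduct_mulVec_zero_iff x).mp (by
      rw [← quadForm_eq] at hx
      simp only [star_trivial, Matrix.sub_mulVec, dotProduct_sub, Matrix.smul_mulVec,
          Matrix.one_mulVec, dotProduct_smul, smul_eq_mul, hx]
      simp [dotProduct, pow_two])
    have hmem : μ ∈ {μ : ℝ | ∃ x : V → ℝ, x ≠ 0 ∧ (signlessLaplacian G).mulVec x = μ • x} := by
      refine ⟨x, hx0, ?_⟩
      rwa [Matrix.sub_mulVec, Matrix.smul_mulVec, Matrix.one_mulVec, sub_eq_zero] at hz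
    have hlb : ∀ ν ∈ {μ : ℝ | ∃ x : V → ℝ, x ≠ 0 ∧ (signlessLaplacian G).mulVec x = μ • x},
        μ ≤ ν := by
      rintro ν ⟨y, hy0, hy⟩
      have h1 := hmin y
      rw [← quadForm_eq, hy, dotProduct_smul] at h1
      have h2 : y ⬝ᵥ y = ∑ v, y v ^ 2 := by simp [dotProduct, pow_two]
      rw [h2, smul_eq_mul] at h1
      have h3 : 0 < ∑ v, y v ^ 2 := by
        obtain ⟨v, hv⟩ := Function.ne_iff.mp hy0
        exact Finset.sum_pos' (fun _ _ => sq_nonneg _)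
          ⟨v, Finset.mem_univ v, by have : y v ≠ 0 := hv; positivity⟩
      exact le_of_mul_le_mul_right h1 h3
    exact le_antisymm (csInf_le ⟨μ, hlb⟩ hmem) (le_csInf ⟨μ, hmem⟩ hlb)
  rw [key]
  exact ⟨⟨x, hx0, hx⟩, hmin⟩

lemma energy_iso {V W : Type*} [Fintype V] [Fintype W] {G : SimpleGraph V} {H : SimpleGraph W}
    (f : G ≃g H) (x : W → ℝ) : energy G (x ∘ f) = energy H x := by
  unfold energy
  refine Finset.sum_bij (fun e _ => e.map f) ?_ ?_ ?_ ?_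
  · intro e he
    induction e with
    | _ u v =>
      simp only [SimpleGraph.mem_edgeFinset, SimpleGraph.mem_edgeSet, Sym2.map_mk] at he ⊢
      exact f.map_adj_iff.mpr he
  · intro a _ b _ h
    exact Sym2.map.injective f.injective h
  · intro e he
    induction e with
    | _ u v =>
      refine ⟨s(f.symm u, f.symm v), ?_, by simp⟩
      simp only [SimpleGraph.mem_edgeFinset, SimpleGraph.mem_edgeSet] at he ⊢
      exact f.symm.map_adj_iff.mpr he
  · intro e _
    induction e with
    | _ u v => simp

lemma qmin_le_of_iso {V W : Type*} [Fintype V] [Fintype W] [Nonempty V] [Nonempty W]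
    {G : SimpleGraph V} {H : SimpleGraph W} (f : G ≃g H) : qmin G ≤ qmin H := by
  obtain ⟨x, hx0, hx⟩ := (qmin_spec H).1
  have h1 := (qmin_spec G).2 (x ∘ f)
  rw [energy_iso, hx] at h1
  have h2 : ∑ v, (x ∘ f) v ^ 2 = ∑ v, x v ^ 2 := by
    exact Equiv.sum_comp f.toEquiv (fun w => x w ^ 2)
  rw [h2] at h1
  have h3 : 0 < ∑ v, x v ^ 2 := by
    obtain ⟨v, hv⟩ := Function.ne_iff.mp hx0
    exact Finset.sum_pos' (fun _ _ => sq_nonneg _)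
      ⟨v, Finset.mem_univ v, by have : x v ≠ 0 := hv; positivity⟩
  exact le_of_mul_le_mul_right h1 h3

lemma qmin_iso {V W : Type*} [Fintype V] [Fintype W] [Nonempty V] [Nonempty W]
    {G : SimpleGraph V} {H : SimpleGraph W} (f : G ≃g H) : qmin G = qmin H :=
  le_antisymm (qmin_le_of_iso f) (qmin_le_of_iso f.symm)

/-! ### Part 2: a convenient model of `C*_{3,K-3}` -/

/-- Parent of the vertex `v` in the model. -/
def modelPar (K v : ℕ) : ℕ := if v < K then v - 1 else K - 1

/-- The relation of the model of `C*_{3,K-3}`: the triangle is `0,1,2`, the path goes on with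
`2,3,…,K-1`, and the vertices `≥ K` are pendant vertices at `K-1`. -/
def modelRel (K a b : ℕ) : Prop := (a = 0 ∧ b = 2) ∨ (1 ≤ b ∧ a = modelPar K b)

/-- The model of `C*_{3,K-3}`. -/
def model (n K : ℕ) : SimpleGraph (Fin n) :=
  SimpleGraph.fromRel (fun i j => modelRel K i.val j.val)

lemma model_adj {n K : ℕ} (i j : Fin n) : (model n K).Adj i j ↔
    i ≠ j ∧ (modelRel K i j ∨ modelRel K j i) := by
  simp [model, SimpleGraph.fromRel_adj]

lemma modelRel_iff (l a b : ℕ) : modelRel (3 + l) a b ↔ (a = 0 ∧ b = 2) ∨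
    (b = a + 1 ∧ b < 3 + l) ∨ (3 + l ≤ b ∧ a = 2 + l) := by
  unfold modelRel modelPar
  split_ifs <;> omega

lemma cstarRel_iff (l a b : ℕ) : cstarRel 3 l a b ↔ (a = 0 ∧ b = 1) ∨ (a = 1 ∧ b = 2) ∨
    (a = 0 ∧ b = 2) ∨ (1 ≤ l ∧ a = 0 ∧ b = 3) ∨ (b = a + 1 ∧ 3 ≤ a ∧ b < 3 + l) ∨
    (l = 0 ∧ a = 0 ∧ 3 ≤ b) ∨ (1 ≤ l ∧ a = 2 + l ∧ 3 + l ≤ b) := by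
  unfold cstarRel
  split_ifs <;> omega

lemma model_rel_aux' (l a b fa fb : ℕ)
    (ha : (a = 0 ∧ fa = 2) ∨ (a = 1 ∧ fa = 0) ∨ (a = 2 ∧ fa = 1) ∨ (3 ≤ a ∧ fa = a))
    (hb : (b = 0 ∧ fb = 2) ∨ (b = 1 ∧ fb = 0) ∨ (b = 2 ∧ fb = 1) ∨ (3 ≤ b ∧ fb = b)) :
    (fa ≠ fb ∧ (modelRel (3 + l) fa fb ∨ modelRel (3 + l) fb fa)) ↔
      (a ≠ b ∧ (cstarRel 3 l a b ∨ cstarRel 3 l b a)) := by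
  have h33 : ∀ c d : ℕ, 3 ≤ c → 3 ≤ d → (modelRel (3 + l) c d ↔ cstarRel 3 l c d) := by
    intro c d hc hd
    rw [modelRel_iff, cstarRel_iff]
    have e1 : c ≠ 0 := by omega
    have e2 : c ≠ 1 := by omega
    simp only [e1, e2, false_and, false_or, and_false]
    omega
  have hs : ∀ c d : ℕ, c < 3 → 3 ≤ d →
      ((modelRel (3 + l) c d ∨ modelRel (3 + l) d c) ↔ c = 2 ∧ (d = 3 ∨ l = 0)) := by
    intro c d hc hd
    rw [modelRel_iff, modelRel_iff]
    omega
  have hs' : ∀ c d : ℕ, c < 3 → 3 ≤ d →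
      ((cstarRel 3 l c d ∨ cstarRel 3 l d c) ↔ c = 0 ∧ (d = 3 ∨ l = 0)) := by
    intro c d hc hd
    have e1 : d ≠ 0 := by omega
    have e2 : d ≠ 1 := by omega
    have e3 : d ≠ 2 := by omega
    have e4 : ¬ (c = d + 1) := by omega
    have e5 : ¬ 3 + l ≤ c := by omega
    have e6 : ¬ 3 ≤ c := by omega
    rw [cstarRel_iff, cstarRel_iff]
    simp only [e1, e2, e3, e4, e5, e6, false_and, and_false, or_false, false_or]
    omega
  have ht : ∀ c d : ℕ, c < 3 → d < 3 → c ≠ d → (modelRel (3 + l) c d ∨ modelRel (3 + l) d c) := by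
    intro c d hc hd
    rw [modelRel_iff, modelRel_iff]
    interval_cases c <;> interval_cases d <;> simp <;> omega
  have ht' : ∀ c d : ℕ, c < 3 → d < 3 → c ≠ d → (cstarRel 3 l c d ∨ cstarRel 3 l d c) := by
    intro c d hc hd
    rw [cstarRel_iff, cstarRel_iff]
    interval_cases c <;> interval_cases d <;> simp
  have cas : (a < 3 ∧ fa < 3 ∧ (a = 0 ↔ fa = 2)) ∨ (3 ≤ a ∧ fa = a) := by omega
  have cbs : (b < 3 ∧ fb < 3 ∧ (b = 0 ↔ fb = 2)) ∨ (3 ≤ b ∧ fb = b) := by omega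
  have hne : fa ≠ fb ↔ a ≠ b := by omega
  rw [hne]
  refine and_congr_right fun hab => ?_
  have hab' := hne.mpr hab
  rcases cas with ⟨a1, a2, a3⟩ | ⟨a1, rfl⟩ <;> rcases cbs with ⟨b1, b2, b3⟩ | ⟨b1, rfl⟩
  · exact iff_of_true (ht _ _ a2 b2 hab') (ht' _ _ a1 b1 hab)
  · rw [hs _ _ a2 b1, hs' _ _ a1 b1, a3]
  · rw [or_comm, hs _ _ b2 a1, ← b3, ← hs' _ _ b1 a1]
    exact or_comm
  · rw [h33 _ _ a1 b1, h33 _ _ b1 a1]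

lemma model_rel_aux (K a b : ℕ) (hK : 3 ≤ K) (f : ℕ → ℕ) (h0 : f 0 = 2) (h1 : f 1 = 0) (h2 : f 2 = 1)
    (h3 : ∀ v, 3 ≤ v → f v = v) :
    (f a ≠ f b ∧ (modelRel K (f a) (f b) ∨ modelRel K (f b) (f a))) ↔
      (a ≠ b ∧ (cstarRel 3 (K - 3) a b ∨ cstarRel 3 (K - 3) b a)) := by
  have key : ∀ c, (c = 0 ∧ f c = 2) ∨ (c = 1 ∧ f c = 0) ∨ (c = 2 ∧ f c = 1) ∨ (3 ≤ c ∧ f c = c) := by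
    intro c
    rcases (by omega : c = 0 ∨ c = 1 ∨ c = 2 ∨ 3 ≤ c) with rfl | rfl | rfl | h
    · simp [h0]
    · simp [h1]
    · simp [h2]
    · right; right; right; exact ⟨h, h3 c h⟩
  obtain ⟨l, rfl⟩ : ∃ l, K = 3 + l := ⟨K - 3, by omega⟩
  have := model_rel_aux' l a b (f a) (f b) (key a) (key b)
  rwa [Nat.add_sub_cancel_left]

lemma model_iso (n K : ℕ) (hK : 3 ≤ K) (hn : K ≤ n) : Nonempty (Cstar n 3 (K - 3) ≃g model n K) := by
  let f : ℕ → ℕ := fun v => if v = 0 then 2 else if v = 1 then 0 else if v = 2 then 1 else v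
  let g : ℕ → ℕ := fun v => if v = 2 then 0 else if v = 0 then 1 else if v = 1 then 2 else v
  refine ⟨⟨⟨fun v => ⟨f v, ?_⟩, fun v => ⟨g v, ?_⟩, ?_, ?_⟩, ?_⟩⟩
  · have := v.2
    simp only [f]
    split_ifs <;> omega
  · have := v.2
    simp only [g]
    split_ifs <;> omega
  · intro v
    apply Fin.ext
    show g (f v.val) = v.val
    generalize v.val = w
    rcases (by omega : w = 0 ∨ w = 1 ∨ w = 2 ∨ 3 ≤ w) with rfl | rfl | rfl | h
    · simp [f, g]
    · simp [f, g]
    · simp [f, g]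
    · have h0 : w ≠ 0 := by omega
      have h1 : w ≠ 1 := by omega
      have h2 : w ≠ 2 := by omega
      simp [f, g, h0, h1, h2]
  · intro v
    apply Fin.ext
    show f (g v.val) = v.val
    generalize v.val = w
    rcases (by omega : w = 0 ∨ w = 1 ∨ w = 2 ∨ 3 ≤ w) with rfl | rfl | rfl | h
    · simp [f, g]
    · simp [f, g]
    · simp [f, g]
    · have h0 : w ≠ 0 := by omega
      have h1 : w ≠ 1 := by omega
      have h2 : w ≠ 2 := by omega
      simp [f, g, h0, h1, h2]
  · intro a b
    have := model_rel_aux K a b hK f (by simp [f]) (by simp [f]) (by simp [f])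
      (fun v hv => by
        have h0 : v ≠ 0 := by omega
        have h1 : v ≠ 1 := by omega
        have h2 : v ≠ 2 := by omega
        simp [f, h0, h1, h2])
    simpa only [Equiv.coe_fn_mk, model, Cstar, SimpleGraph.fromRel_adj, ne_eq, Fin.ext_iff] using this

/-- Energy on the model after the sign change. -/
noncomputable def modelEnergy (K n : ℕ) (y : ℕ → ℝ) : ℝ :=
  (y 0 - y 2) ^ 2 + (y 0 + y 1) ^ 2 + ∑ v ∈ Finset.Ico 2 n, (y v - y (modelPar K v)) ^ 2

lemma sum_le_of_cover {α ι : Type*} [Fintype ι] (T : Finset α) (q : α → ℝ) (hq : ∀ a, 0 ≤ q a)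
    (f : ι → α) (hf : ∀ a ∈ T, ∃ i, f i = a) : ∑ a ∈ T, q a ≤ ∑ i, q (f i) := by
  rcases isEmpty_or_nonempty ι with hι | hι
  · have : T = ∅ := Finset.eq_empty_of_forall_notMem fun a ha => hι.elim (hf a ha).choose
    simp [this]
  choose! g hg using hf
  calc ∑ a ∈ T, q a = ∑ a ∈ T, q (f (g a)) := Finset.sum_congr rfl fun a ha => by rw [hg a ha]
    _ = ∑ i ∈ T.image g, q (f i) := by
      rw [Finset.sum_image]
      intro a ha b hb hab
      rw [← hg a ha, ← hg b hb, hab]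
    _ ≤ ∑ i, q (f i) := Finset.sum_le_sum_of_subset_of_nonneg (Finset.subset_univ _)
        fun i _ _ => hq _

/-- The signs. -/
noncomputable def modelSign (K v : ℕ) : ℝ :=
  if v = 0 then 1 else if v < K then (-1) ^ (v + 1) else (-1) ^ (K + 1)

lemma modelSign_sq (K v : ℕ) : modelSign K v ^ 2 = 1 := by
  unfold modelSign
  split_ifs <;> simp [← pow_mul, mul_comm _ 2]

lemma modelSign_par (K v : ℕ) (hK : 3 ≤ K) (hv : 2 ≤ v) :
    modelSign K (modelPar K v) = - modelSign K v := by
  unfold modelSign modelPar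
  by_cases h : v < K
  · obtain ⟨w, rfl⟩ : ∃ w, v = w + 2 := ⟨v - 2, by omega⟩
    have : w + 1 < K := by omega
    simp [h, this]
    ring
  · obtain ⟨w, rfl⟩ : ∃ w, K = w + 2 := ⟨K - 2, by omega⟩
    have : v ≠ 0 := by omega
    simp [h, this]
    ring

lemma modelPar_lt (K n v : ℕ) (hK : 3 ≤ K) (hv : v < n) : modelPar K v < n := by
  unfold modelPar
  split_ifs <;> omega

lemma energy_model_le (n K : ℕ) (hK : 3 ≤ K) (hn : K ≤ n) (y : ℕ → ℝ) :
    energy (model n K) (fun i => modelSign K i * y i) ≤ modelEnergy K n y := by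
  let f : Fin n → Sym2 (Fin n) := fun v =>
    if v.val = 0 then s(⟨0, by omega⟩, ⟨2, by omega⟩) else s(v, ⟨modelPar K v, modelPar_lt K n v hK v.2⟩)
  refine (sum_le_of_cover _ _ (edgeTerm_nonneg _) f ?_).trans (le_of_eq ?_)
  · intro e he
    induction e with
    | _ a b =>
      rw [SimpleGraph.mem_edgeFinset, SimpleGraph.mem_edgeSet, model_adj] at he
      obtain ⟨hab, (⟨h0, h2⟩ | ⟨h1, h2⟩) | (⟨h0, h2⟩ | ⟨h1, h2⟩)⟩ := he
      · refine ⟨⟨0, by omega⟩, ?_⟩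
        have : a = ⟨0, by omega⟩ := Fin.ext h0
        have : b = ⟨2, by omega⟩ := Fin.ext h2
        simp [f, *]
      · refine ⟨b, ?_⟩
        have h : a = ⟨modelPar K b, modelPar_lt K n b hK b.2⟩ := Fin.ext h2
        have hb : b.val ≠ 0 := by omega
        simp only [f, hb, if_false]
        rw [← h, Sym2.eq_swap]
      · refine ⟨⟨0, by omega⟩, ?_⟩
        have : b = ⟨0, by omega⟩ := Fin.ext h0
        have : a = ⟨2, by omega⟩ := Fin.ext h2
        simp [f, *, Sym2.eq_swap]
      · refine ⟨a, ?_⟩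
        have h : b = ⟨modelPar K a, modelPar_lt K n a hK a.2⟩ := Fin.ext h2
        have hb : a.val ≠ 0 := by omega
        simp only [f, hb, if_false]
        rw [← h]
  · have h1 : ∀ v : Fin n, edgeTerm (fun i : Fin n => modelSign K i * y i) (f v) =
        (fun v : ℕ => if v = 0 then (y 0 - y 2) ^ 2 else
          (modelSign K v * y v + modelSign K (modelPar K v) * y (modelPar K v)) ^ 2) v.val := by
      intro v
      by_cases hv : v.val = 0
      · have : 2 < K := by omega
        simp [f, hv, modelSign, this]
        ring
      · simp [f, hv]
    rw [Finset.sum_congr rfl fun v _ => h1 v, Fin.sum_univ_eq_sum_range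
      (fun v : ℕ => if v = 0 then (y 0 - y 2) ^ 2 else
          (modelSign K v * y v + modelSign K (modelPar K v) * y (modelPar K v)) ^ 2) n]
    rw [Finset.range_eq_Ico, Finset.sum_eq_sum_Ico_succ_bot (by omega),
      Finset.sum_eq_sum_Ico_succ_bot (by omega), modelEnergy, ← add_assoc]
    congr 1
    congr 1
    · have : 1 < K := by omega
      simp [modelSign, modelPar, this]
      ring
    · refine Finset.sum_congr rfl fun v hv => ?_
      rw [Finset.mem_Ico] at hv
      have : v ≠ 0 := by omega
      rw [modelSign_par K v hK (by omega), if_neg this]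
      have := modelSign_sq K v
      calc _ = modelSign K v ^ 2 * (y v - y (modelPar K v)) ^ 2 := by ring
        _ = _ := by rw [this, one_mul]

lemma model_ineq (n K : ℕ) (hK : 3 ≤ K) (hn : K ≤ n) (y : ℕ → ℝ) :
    qmin (model n K) * ∑ v ∈ Finset.range n, y v ^ 2 ≤ modelEnergy K n y := by
  have : Nonempty (Fin n) := ⟨⟨0, by omega⟩⟩
  have h := ((qmin_spec (model n K)).2 (fun i => modelSign K i * y i)).trans
    (energy_model_le n K hK hn y)
  simp only [mul_pow, modelSign_sq, one_mul] at h
  rwa [Fin.sum_univ_eq_sum_range (fun v => y v ^ 2) n] at h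

lemma model_lt_one (n K : ℕ) (hK : 3 ≤ K) (hn : K + 2 ≤ n) : qmin (model n K) < 1 := by
  have h := model_ineq n K hK (by omega) (fun v => if 2 ≤ v then 1 else 0)
  have h1 : modelEnergy K n (fun v => if 2 ≤ v then 1 else 0) = 2 := by
    rw [modelEnergy, Finset.sum_eq_sum_Ico_succ_bot (by omega), Finset.sum_eq_zero]
    · have : 2 < K := by omega
      simp [modelPar, this]
      norm_num
    · intro v hv
      rw [Finset.mem_Ico] at hv
      have h2 : 2 ≤ v := by omega
      have h3 : 2 ≤ modelPar K v := by
        unfold modelPar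
        split_ifs <;> omega
      simp [h2, h3]
  have h2 : ∑ v ∈ Finset.range n, (if 2 ≤ v then (1:ℝ) else 0) ^ 2 = n - 2 := by
    rw [Finset.range_eq_Ico, Finset.sum_eq_sum_Ico_succ_bot (by omega),
      Finset.sum_eq_sum_Ico_succ_bot (by omega), Finset.sum_congr rfl (g := fun _ => (1:ℝ))]
    · simp
      rw [Nat.cast_sub (by omega)]
      norm_num
    · intro v hv
      rw [Finset.mem_Ico] at hv
      have : 2 ≤ v := by omega
      simp [this]
  rw [h1, h2] at h
  have h5 : (5:ℝ) ≤ n := by exact_mod_cast (by omega : 5 ≤ n)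
  by_contra! hc
  nlinarith

lemma model_pos (n K : ℕ) (hK : 3 ≤ K) (hn : K ≤ n) : 0 < qmin (model n K) := by
  have : Nonempty (Fin n) := ⟨⟨0, by omega⟩⟩
  obtain ⟨⟨x, hx0, hx⟩, -⟩ := qmin_spec (model n K)
  by_contra! hc
  have hE : energy (model n K) x ≤ 0 := by
    rw [hx]
    exact mul_nonpos_of_nonpos_of_nonneg hc (Finset.sum_nonneg fun _ _ => sq_nonneg _)
  have hadj : ∀ i j, (model n K).Adj i j → x i + x j = 0 := by
    intro i j hij
    have h1 : edgeTerm x s(i, j) ≤ energy (model n K) x :=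
      Finset.single_le_sum (fun e _ => edgeTerm_nonneg x e) (by simpa using hij)
    rw [edgeTerm_mk] at h1
    nlinarith [sq_nonneg (x i + x j)]
  apply hx0
  have hbase := hadj ⟨0, by omega⟩ ⟨2, by omega⟩ (by simp [model_adj, modelRel])
  have hbase1 := hadj ⟨0, by omega⟩ ⟨1, by omega⟩ (by
    have : 1 < K := by omega
    simp [model_adj, modelRel, modelPar, this])
  have hbase2 := hadj ⟨1, by omega⟩ ⟨2, by omega⟩ (by
    have : 2 < K := by omega
    simp [model_adj, modelRel, modelPar, this])
  have main : ∀ v, ∀ hv : v < n, x ⟨v, hv⟩ = 0 := by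
    intro v
    induction v using Nat.strong_induction_on with
    | _ v ih =>
      intro hv
      by_cases h0 : v = 0
      · subst h0; linarith
      · have hp : modelPar K v < v := by
          unfold modelPar
          split_ifs <;> omega
        have h1 := hadj ⟨modelPar K v, by omega⟩ ⟨v, hv⟩ (by
          rw [model_adj]
          exact ⟨by simp [Fin.ext_iff]; omega, Or.inl (Or.inr ⟨by simp; omega, rfl⟩)⟩)
        rw [ih _ hp] at h1
        linarith
  funext v
  exact main v v.2

/-! ### Part 3: combinatorics of the graph -/

section Combi

variable {V : Type*} [Fintype V]

/-- `S` is connected in `G` (every cut of `S` is crossed by an edge). -/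
def CutConn (G : SimpleGraph V) (S : Finset V) : Prop :=
  ∀ T ⊆ S, T.Nonempty → (S \ T).Nonempty → ∃ a ∈ T, ∃ b ∈ S \ T, G.Adj a b

/-- `S` is nonbipartite in `G`. -/
def NonBip (G : SimpleGraph V) (S : Finset V) : Prop :=
  ∀ c : V → Bool, ∃ u ∈ S, ∃ v ∈ S, G.Adj u v ∧ c u = c v

/-- The graph `G` with only the edges inside `S`. -/
def restr (G : SimpleGraph V) (S : Finset V) : SimpleGraph V where
  Adj u v := G.Adj u v ∧ u ∈ S ∧ v ∈ S
  symm := ⟨fun _ _ h => ⟨h.1.symm, h.2.2, h.2.1⟩⟩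
  loopless := ⟨fun _ h => h.1.ne rfl⟩

lemma restr_adj {G : SimpleGraph V} {S : Finset V} {u v : V} :
    (restr G S).Adj u v ↔ G.Adj u v ∧ u ∈ S ∧ v ∈ S := Iff.rfl

lemma cutConn_univ {G : SimpleGraph V} (h : G.Connected) : CutConn G Finset.univ := by
  rintro T - ⟨a, ha⟩ ⟨b, hb⟩
  obtain ⟨w⟩ := h.preconnected a b
  obtain ⟨d, -, h1, h2⟩ := w.exists_boundary_dart (T : Set V) (by simpa using ha) (by simpa using hb)
  exact ⟨d.fst, by simpa using h1, d.snd, by simpa using h2, d.adj⟩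

lemma nonBip_univ {G : SimpleGraph V} (h : ¬ G.Colorable 2) : NonBip G Finset.univ := by
  intro c
  by_contra! hc
  apply h
  have : G.Coloring Bool := SimpleGraph.Coloring.mk c (fun {u v} huv => hc u (by simp) v (by simp) huv)
  simpa using this.colorable

lemma leaf_removal {G : SimpleGraph V} {S : Finset V} {v : V} (hv : v ∈ S)
    (hdeg : (restr G S).degree v ≤ 1) (hc : CutConn G S) (hb : NonBip G S) :
    CutConn G (S.erase v) ∧ NonBip G (S.erase v) := by
  have huniq : ∀ a b, a ∈ S → b ∈ S → G.Adj v a → G.Adj v b → a = b := by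
    intro a b ha hb h1 h2
    rw [← SimpleGraph.card_neighborFinset_eq_degree, Finset.card_le_one] at hdeg
    exact hdeg a (by simp [restr_adj, *]) b (by simp [restr_adj, *])
  constructor
  · intro T hT hT1 hT2
    have hvT : v ∉ T := fun h => by simpa using hT h
    have hTS : T ⊆ S := hT.trans (Finset.erase_subset _ _)
    by_cases hw : ∃ w ∈ T, G.Adj v w
    · obtain ⟨w, hwT, hw⟩ := hw
      obtain ⟨a, ha, b, hb, hab⟩ := hc (insert v T) (Finset.insert_subset hv hTS) (by simp) (by
        obtain ⟨b, hb⟩ := hT2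
        exact ⟨b, by simp at hb ⊢; tauto⟩)
      simp only [Finset.mem_insert, Finset.mem_sdiff, not_or] at ha hb
      rcases ha with rfl | ha
      · exact absurd (huniq b w hb.1 (hTS hwT) hab hw) (by rintro rfl; exact hb.2.2 hwT)
      · exact ⟨a, ha, b, by simp; tauto, hab⟩
    · push Not at hw
      obtain ⟨a, ha, b, hb, hab⟩ := hc T hTS hT1 (by
        obtain ⟨b, hb⟩ := hT2
        exact ⟨b, by simp at hb ⊢; tauto⟩)
      refine ⟨a, ha, b, ?_, hab⟩
      have : b ≠ v := by
        rintro rfl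
        exact hw a ha hab.symm
      simp at hb ⊢
      tauto
  · intro c
    by_cases hw : ∃ w ∈ S, G.Adj v w
    · obtain ⟨w, hwS, hw⟩ := hw
      obtain ⟨a, ha, b, hb, hab, hcc⟩ := hb (Function.update c v (!c w))
      by_cases hav : a = v
      · subst hav
        have := huniq b w hb hwS hab hw
        subst this
        simp [hab.ne.symm] at hcc
      · by_cases hbv : b = v
        · subst hbv
          have := huniq a w ha hwS hab.symm hw
          subst this
          simp [hav] at hcc
        · simp [hav, hbv] at hcc
          exact ⟨a, by simp [*], b, by simp [*], hab, hcc⟩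
    · push Not at hw
      obtain ⟨a, ha, b, hb, hab, hcc⟩ := hb c
      have h1 : a ≠ v := by rintro rfl; exact hw b hb hab
      have h2 : b ≠ v := by rintro rfl; exact hw a ha hab.symm
      exact ⟨a, by simp [*], b, by simp [*], hab, hcc⟩

lemma exists_core {G : SimpleGraph V} (hc : G.Connected) (hb : ¬ G.Colorable 2) (p : V) :
    ∃ S : Finset V, p ∈ S ∧ CutConn G S ∧ NonBip G S ∧
      ∀ v ∈ S, v ≠ p → 2 ≤ (restr G S).degree v := by
  let F : Finset (Finset V) := Finset.univ.filter fun S => p ∈ S ∧ CutConn G S ∧ NonBip G S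
  obtain ⟨S, hS, hmin⟩ := F.exists_min_image Finset.card
    ⟨Finset.univ, by simp [F, cutConn_univ hc, nonBip_univ hb]⟩
  obtain ⟨-, h1, h2, h3⟩ := Finset.mem_filter.mp hS
  refine ⟨S, h1, h2, h3, ?_⟩
  intro v hv hvp
  by_contra! hlt
  obtain ⟨h4, h5⟩ := leaf_removal hv (by omega) h2 h3
  have := hmin (S.erase v) (by simp [F, h1, h4, h5, hvp.symm])
  have := Finset.card_erase_lt_of_mem hv
  omega

/-- There is an edge in `S` with equal colours at its ends which is not a bridge of `S`. -/
lemma exists_mono_nonbridge {G : SimpleGraph V} {S : Finset V} (hb : NonBip G S) (c0 : V → Bool) :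
    ∃ a ∈ S, ∃ b ∈ S, G.Adj a b ∧ c0 a = c0 b ∧
      (CutConn G S → CutConn (G.deleteEdges {s(a, b)}) S) := by
  by_contra! hcon
  let mono : (V → Bool) → Finset (V × V) := fun c => Finset.univ.filter fun e =>
    e.1 ∈ S ∧ e.2 ∈ S ∧ G.Adj e.1 e.2 ∧ c e.1 = c e.2
  let F : Finset (V → Bool) := Finset.univ.filter fun c => mono c ⊆ mono c0
  obtain ⟨c, hcF, hmin⟩ := F.exists_min_image (fun c => (mono c).card)
    ⟨c0, by simp [F]⟩
  have hc0 : mono c ⊆ mono c0 := (Finset.mem_filter.mp hcF).2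
  obtain ⟨a, ha, b, hb, hab, hcab⟩ := hb c
  have hm : (a, b) ∈ mono c := by simp [mono, *]
  have hm0 := hc0 hm
  simp only [mono, Finset.mem_filter, Finset.mem_univ, true_and] at hm0
  obtain ⟨hconn, hnc⟩ := hcon a ha b hb hab hm0.2.2.2
  unfold CutConn at hnc
  push Not at hnc
  obtain ⟨T, hTS, hT1, hT2, hT⟩ := hnc
  have hcross : ∀ u ∈ T, ∀ w ∈ S \ T, G.Adj u w → s(u, w) = s(a, b) := by
    intro u hu w hw huw
    by_contra hne
    exact hT u hu w hw (by rw [SimpleGraph.deleteEdges_adj]; exact ⟨huw, by simpa using hne⟩)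
  obtain ⟨u0, hu0, w0, hw0, h00⟩ := hconn T hTS hT1 hT2
  have he := hcross u0 hu0 w0 hw0 h00
  let c' : V → Bool := fun v => if v ∈ T then !c v else c v
  have hsub : mono c' ⊂ mono c := by
    have hcase : ∀ u v, u ∈ S → v ∈ S → G.Adj u v → c' u = c' v → c u = c v := by
      intro u v hu hv huv huv'
      by_cases h1 : u ∈ T <;> by_cases h2 : v ∈ T
      · simpa [c', h1, h2] using huv'
      · have := hcross u h1 v (by simp [*]) huv
        rw [Sym2.eq_iff] at this
        rcases this with ⟨rfl, rfl⟩ | ⟨rfl, rfl⟩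
        · exact hcab
        · exact hcab.symm
      · have := hcross v h2 u (by simp [*]) huv.symm
        rw [Sym2.eq_iff] at this
        rcases this with ⟨rfl, rfl⟩ | ⟨rfl, rfl⟩
        · exact hcab.symm
        · exact hcab
      · simpa [c', h1, h2] using huv'
    rw [Finset.ssubset_iff_of_subset]
    · refine ⟨(a, b), hm, ?_⟩
      simp only [mono, Finset.mem_filter, Finset.mem_univ, true_and]
      rintro ⟨-, -, -, h⟩
      rw [Sym2.eq_iff] at he
      have hw0' : w0 ∉ T := (Finset.mem_sdiff.mp hw0).2
      rcases he with ⟨rfl, rfl⟩ | ⟨rfl, rfl⟩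
      · simp [c', hu0, hw0', hcab] at h
      · simp [c', hu0, hw0', hcab] at h
    · intro e he
      simp only [mono, Finset.mem_filter, Finset.mem_univ, true_and] at he ⊢
      exact ⟨he.1, he.2.1, he.2.2.1, hcase _ _ he.1 he.2.1 he.2.2.1 he.2.2.2⟩
  have h1 := hmin c' (by simp only [F, Finset.mem_filter, Finset.mem_univ, true_and]; exact hsub.1.trans hc0)
  have h2 := Finset.card_lt_card hsub
  omega

lemma cutConn_edges {G : SimpleGraph V} {S : Finset V} (hc : CutConn G S) (hS : S.Nonempty) :
    S.card ≤ (restr G S).edgeFinset.card + 1 := by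
  have main : ∀ k, k + 1 ≤ S.card → ∃ T ⊆ S, T.card = k + 1 ∧ k ≤ (restr G T).edgeFinset.card := by
    intro k
    induction k with
    | zero =>
      intro _
      obtain ⟨v, hv⟩ := hS
      exact ⟨{v}, by simpa using hv, by simp, by simp⟩
    | succ k ih =>
      intro hk
      obtain ⟨T, hTS, hTc, hTe⟩ := ih (by omega)
      obtain ⟨a, ha, b, hb, hab⟩ := hc T hTS (Finset.card_pos.mp (by omega))
        (by rw [← Finset.card_pos, Finset.card_sdiff_of_subset hTS]; omega)
      rw [Finset.mem_sdiff] at hb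
      refine ⟨insert b T, Finset.insert_subset hb.1 hTS, by simp [hb.2, hTc], ?_⟩
      have hsub : insert s(a, b) (restr G T).edgeFinset ⊆ (restr G (insert b T)).edgeFinset := by
        intro e he
        rw [Finset.mem_insert] at he
        rcases he with rfl | he
        · simp [restr_adj, hab, ha]
        · induction e with
          | _ u v =>
            simp only [SimpleGraph.mem_edgeFinset, SimpleGraph.mem_edgeSet, restr_adj] at he ⊢
            simp [he]
      have := Finset.card_le_card hsub
      rw [Finset.card_insert_of_notMem (by simp [restr_adj, hb.2])] at this
      omega
  obtain ⟨T, hTS, hTc, hTe⟩ := main (S.card - 1) (by have := hS.card_pos; omega)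
  have hTS' : T = S := Finset.eq_of_subset_of_card_le hTS (by omega)
  subst hTS'
  omega

lemma core_edges {G : SimpleGraph V} {S : Finset V} (hc : CutConn G S) (hb : NonBip G S)
    (hS : S.Nonempty) : S.card ≤ (restr G S).edgeFinset.card := by
  obtain ⟨a, ha, b, hb, hab, -, h⟩ := exists_mono_nonbridge hb (fun _ => true)
  have h1 := cutConn_edges (h hc) hS
  have h2 : (restr (G.deleteEdges {s(a, b)}) S).edgeFinset ⊂ (restr G S).edgeFinset := by
    rw [Finset.ssubset_iff_of_subset]
    · exact ⟨s(a, b), by simp [restr_adj, *], by simp [restr_adj]⟩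
    · intro e he
      induction e with
      | _ u v =>
        simp only [SimpleGraph.mem_edgeFinset, SimpleGraph.mem_edgeSet, restr_adj,
          SimpleGraph.deleteEdges_adj] at he ⊢
        tauto
  have := Finset.card_lt_card h2
  omega

lemma exists_parent {G : SimpleGraph V} (hc : G.Connected) (p : V) :
    ∃ par : V → V, ∀ u, u ≠ p → G.Adj u (par u) ∧ G.dist (par u) p < G.dist u p := by
  have : ∀ u, ∃ w, u ≠ p → G.Adj u w ∧ G.dist w p < G.dist u p := by
    intro u
    by_cases hu : u = p
    · exact ⟨u, fun h => absurd hu h⟩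
    · obtain ⟨w, hw⟩ := (hc.preconnected u p).exists_walk_length_eq_dist
      cases w with
      | nil => exact absurd rfl hu
      | cons h q =>
        refine ⟨_, fun _ => ⟨h, ?_⟩⟩
        rw [← hw, SimpleGraph.Walk.length_cons]
        exact Nat.lt_succ_of_le (SimpleGraph.dist_le q)
  choose par hpar using this
  exact ⟨par, hpar⟩

lemma structure_lemma {G : SimpleGraph V} (hconn : G.Connected) (hnb : ¬ G.Colorable 2)
    (huni : G.edgeFinset.card = Fintype.card V) (p : V) (hp : 2 ≤ G.degree p)
    (D : Finset V) (hD : IsDominatingSet G D) :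
    ∃ (S : Finset V) (par : V → V), p ∈ S ∧ 3 ≤ S.card ∧ S.card ≤ 3 * D.card ∧
      (∀ v ∈ S, 2 ≤ G.degree v) ∧ CutConn G S ∧ NonBip G S ∧
      (∀ u, u ≠ p → G.Adj u (par u)) ∧ (∀ u, u ≠ p → 2 ≤ G.degree (par u)) ∧
      (∀ u v, u ≠ p → v ≠ p → s(u, par u) = s(v, par v) → u = v) := by
  obtain ⟨S, hpS, hcut, hbip, hdeg⟩ := exists_core hconn hnb p
  obtain ⟨par, hpar⟩ := exists_parent hconn p
  have hinj : ∀ u v, u ≠ p → v ≠ p → s(u, par u) = s(v, par v) → u = v := by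
    intro u v hu hv h
    rw [Sym2.eq_iff] at h
    rcases h with ⟨h, -⟩ | ⟨h1, h2⟩
    · exact h
    · have e1 := (hpar u hu).2
      have e2 := (hpar v hv).2
      rw [h2] at e1
      rw [← h1] at e2
      omega
  have hpardeg : ∀ u, u ≠ p → 2 ≤ G.degree (par u) := by
    intro u hu
    by_cases h : par u = p
    · rw [h]; exact hp
    · rw [← SimpleGraph.card_neighborFinset_eq_degree]
      have hne : u ≠ par (par u) := by
        intro he
        have e1 := (hpar u hu).2
        have e2 := (hpar _ h).2
        rw [← he] at e2
        omega
      have : ({u, par (par u)} : Finset V) ⊆ G.neighborFinset (par u) := by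
        intro w hw
        simp only [Finset.mem_insert, Finset.mem_singleton] at hw
        rcases hw with rfl | rfl
        · simpa using (hpar w hu).1.symm
        · simpa using (hpar _ h).1
      have h2 := Finset.card_le_card this
      rwa [Finset.card_pair hne] at h2
  have hrle : ∀ v, (restr G S).degree v ≤ G.degree v := by
    intro v
    rw [← SimpleGraph.card_neighborFinset_eq_degree, ← SimpleGraph.card_neighborFinset_eq_degree]
    apply Finset.card_le_card
    intro w hw
    simp only [SimpleGraph.mem_neighborFinset, restr_adj] at hw ⊢
    exact hw.1
  -- counting of edges
  set out : Finset (Sym2 V) := (Finset.univ \ S).image (fun u => s(u, par u)) with hout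
  have hup : ∀ u, u ∉ S → u ≠ p := fun u hu h => hu (h ▸ hpS)
  have houtcard : out.card = Fintype.card V - S.card := by
    rw [hout, Finset.card_image_of_injOn, Finset.card_sdiff_of_subset (Finset.subset_univ _),
      Finset.card_univ]
    intro u hu v hv h
    exact hinj u v (hup u (by simpa using hu)) (hup v (by simpa using hv)) h
  have hdisj : Disjoint (restr G S).edgeFinset out := by
    rw [Finset.disjoint_left]
    intro e he ho
    obtain ⟨u, hu, rfl⟩ := Finset.mem_image.mp ho
    simp [restr_adj] at he hu
    exact hu he.2.1
  have hsub : (restr G S).edgeFinset ∪ out ⊆ G.edgeFinset := by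
    intro e he
    rcases Finset.mem_union.mp he with he | he
    · induction e with
      | _ u v =>
        simp only [SimpleGraph.mem_edgeFinset, SimpleGraph.mem_edgeSet, restr_adj] at he ⊢
        exact he.1
    · obtain ⟨u, hu, rfl⟩ := Finset.mem_image.mp he
      simpa using (hpar u (hup u (by simpa using hu))).1
  have hSe := core_edges hcut hbip ⟨p, hpS⟩
  have hcardle := Finset.card_le_card hsub
  have hScard : S.card ≤ Fintype.card V := Finset.card_le_univ S
  rw [Finset.card_union_of_disjoint hdisj, houtcard, huni] at hcardle
  have hSeq : (restr G S).edgeFinset.card = S.card := by omega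
  have hall : (restr G S).edgeFinset ∪ out = G.edgeFinset := by
    apply Finset.eq_of_subset_of_card_le hsub
    rw [Finset.card_union_of_disjoint hdisj, houtcard, huni]
    omega
  -- a vertex outside `S` has at most one neighbour in `S`
  have hone : ∀ d, d ∉ S → ∀ s ∈ S, G.Adj d s → s = par d := by
    intro d hd s hs hds
    have : s(d, s) ∈ (restr G S).edgeFinset ∪ out := by
      rw [hall]; simpa using hds
    rcases Finset.mem_union.mp this with h | h
    · simp [restr_adj] at h
      exact absurd h.2.1 hd
    · obtain ⟨u, hu, hue⟩ := Finset.mem_image.mp h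
      rw [Sym2.eq_iff] at hue
      rcases hue with ⟨rfl, h2⟩ | ⟨rfl, h2⟩
      · exact h2.symm
      · exact absurd hs (by simpa using hu)
  -- degrees
  have hsumdeg : ∑ v ∈ S, (restr G S).degree v = 2 * S.card := by
    have := (restr G S).sum_degrees_eq_twice_card_edges
    rw [hSeq] at this
    rw [← this]
    apply Finset.sum_subset (Finset.subset_univ _)
    intro v _ hv
    rw [← SimpleGraph.card_neighborFinset_eq_degree, Finset.card_eq_zero]
    ext w
    simp [restr_adj, hv]
  have hp1 : 1 ≤ (restr G S).degree p := by
    obtain ⟨u, hu, v, hv, huv, -⟩ := hbip (fun _ => true)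
    obtain ⟨a, ha, b, hb, hab⟩ := hcut {p} (by simpa using hpS) (by simp) (by
      by_cases hup : u = p
      · exact ⟨v, by simp [hv, ← hup, huv.ne.symm]⟩
      · exact ⟨u, by simp [hu, hup]⟩)
    rw [Finset.mem_singleton] at ha
    subst ha
    rw [Nat.succ_le_iff, SimpleGraph.degree_pos_iff_exists_adj]
    exact ⟨b, hab, hpS, (Finset.mem_sdiff.mp hb).1⟩
  have hdegcard : ∀ v, v ∈ S → (restr G S).degree v + 1 ≤ S.card := by
    intro v hv
    rw [← SimpleGraph.card_neighborFinset_eq_degree, ← Finset.card_erase_add_one hv]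
    apply Nat.succ_le_succ
    apply Finset.card_le_card
    intro w hw
    simp only [SimpleGraph.mem_neighborFinset, restr_adj] at hw
    simp [hw.1.ne.symm, hw.2.2]
  have hsplit : (restr G S).degree p + ∑ v ∈ S.erase p, (restr G S).degree v = 2 * S.card := by
    rw [← hsumdeg]
    exact Finset.add_sum_erase S (fun v => (restr G S).degree v) hpS
  have hexc : ∑ v ∈ S.erase p, (restr G S).degree v
      = ∑ v ∈ S.erase p, ((restr G S).degree v - 2) + 2 * (S.card - 1) := by
    have : ∑ v ∈ S.erase p, (restr G S).degree v
        = ∑ v ∈ S.erase p, (((restr G S).degree v - 2) + 2) := by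
      refine Finset.sum_congr rfl fun v hv => ?_
      rw [Finset.mem_erase] at hv
      have := hdeg v hv.2 hv.1
      omega
    rw [this, Finset.sum_add_distrib, Finset.sum_const, Finset.card_erase_of_mem hpS, smul_eq_mul,
      mul_comm 2]
  have hSpos : 1 ≤ S.card := Finset.card_pos.mpr ⟨p, hpS⟩
  have hScard3 : 3 ≤ S.card := by
    by_contra! hlt
    have hle : ∑ v ∈ S, (restr G S).degree v ≤ ∑ v ∈ S, 1 := Finset.sum_le_sum fun v hv => by
      have := hdegcard v hv
      omega
    rw [hsumdeg] at hle
    simp at hle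
    omega
  have hnbS : ∀ d, d ∈ S → (S.filter (fun v => G.Adj d v)).card = (restr G S).degree d := by
    intro d hd
    rw [← SimpleGraph.card_neighborFinset_eq_degree]
    congr 1
    ext w
    simp [restr_adj, hd]
    tauto
  have hnbO : ∀ d, d ∉ S → (S.filter (fun v => G.Adj d v)).card ≤ 1 := by
    intro d hd
    rw [Finset.card_le_one]
    intro a ha b hb
    rw [Finset.mem_filter] at ha hb
    rw [hone d hd a ha.1 ha.2, hone d hd b hb.1 hb.2]
  let ex : V → ℕ := fun d => if d ∈ S.erase p then (restr G S).degree d - 2 else 0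
  have hexle : ∑ d ∈ D, ex d ≤ ∑ v ∈ S.erase p, ((restr G S).degree v - 2) := by
    calc ∑ d ∈ D, ex d ≤ ∑ d, ex d := Finset.sum_le_sum_of_subset (Finset.subset_univ _)
      _ = _ := by simp only [ex]; rw [Finset.sum_ite_mem, Finset.univ_inter]
  have hcover : ∀ U : Finset V, (∀ d ∈ D, (U.filter (fun v => v = d ∨ G.Adj d v)).card ≤ 3 + ex d) →
      U.card ≤ 3 * D.card + ∑ v ∈ S.erase p, ((restr G S).degree v - 2) := by
    intro U hU
    have h1 : U ⊆ D.biUnion (fun d => U.filter (fun v => v = d ∨ G.Adj d v)) := by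
      intro v hv
      rw [Finset.mem_biUnion]
      by_cases hvD : v ∈ D
      · exact ⟨v, hvD, by simp [hv]⟩
      · obtain ⟨d, hd, hdv⟩ := hD v hvD
        exact ⟨d, hd, by simp [hv, hdv]⟩
    calc U.card ≤ _ := Finset.card_le_card h1
      _ ≤ ∑ d ∈ D, (U.filter (fun v => v = d ∨ G.Adj d v)).card := Finset.card_biUnion_le
      _ ≤ ∑ d ∈ D, (3 + ex d) := Finset.sum_le_sum hU
      _ ≤ _ := by
        rw [Finset.sum_add_distrib, Finset.sum_const, smul_eq_mul, mul_comm]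
        omega
  refine ⟨S, par, hpS, hScard3, ?_, ?_, hcut, hbip, fun u hu => (hpar u hu).1, hpardeg, hinj⟩
  · by_cases hp2 : 2 ≤ (restr G S).degree p
    · have h := hcover S (by
        intro d _
        have hsub : S.filter (fun v => v = d ∨ G.Adj d v) ⊆ insert d (S.filter (fun v => G.Adj d v)) := by
          intro v hv
          simp only [Finset.mem_filter, Finset.mem_insert] at hv ⊢
          tauto
        have h1 := (Finset.card_le_card hsub).trans (Finset.card_insert_le _ _)
        by_cases hd : d ∈ S
        · rw [hnbS d hd] at h1
          by_cases hdp : d = p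
          · subst hdp
            omega
          · have := hdeg d hd hdp
            simp only [ex, Finset.mem_erase, hd, hdp, ne_eq, not_false_eq_true, and_self, if_true]
            omega
        · have := hnbO d hd
          omega)
      omega
    · obtain ⟨q, hq, hqS⟩ : ∃ q, G.Adj p q ∧ q ∉ S := by
        by_contra! hcon
        have : G.degree p ≤ (restr G S).degree p := by
          rw [← SimpleGraph.card_neighborFinset_eq_degree, ← SimpleGraph.card_neighborFinset_eq_degree]
          apply Finset.card_le_card
          intro w hw
          simp only [SimpleGraph.mem_neighborFinset, restr_adj] at hw ⊢
          exact ⟨hw, hpS, hcon w hw⟩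
        omega
      have hqp : par q = p := (hone q hqS p hpS hq.symm).symm
      have h := hcover (insert q S) (by
        intro d _
        have hsub : (insert q S).filter (fun v => v = d ∨ G.Adj d v) ⊆
            insert q (insert d (S.filter (fun v => G.Adj d v))) := by
          intro v hv
          simp only [Finset.mem_filter, Finset.mem_insert] at hv ⊢
          tauto
        by_cases hd : d ∈ S
        · by_cases hdp : d = p
          · have h1 := (Finset.card_le_card hsub).trans (Finset.card_insert_le _ _)
            have h2 := Finset.card_insert_le d (S.filter (fun v => G.Adj d v))
            rw [hnbS d hd] at h2
            subst hdp
            omega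
          · have hsub2 : (insert q S).filter (fun v => v = d ∨ G.Adj d v) ⊆
                insert d (S.filter (fun v => G.Adj d v)) := by
              intro v hv
              have hvq : v ≠ q := by
                rintro rfl
                simp only [Finset.mem_filter, Finset.mem_insert] at hv
                rcases hv.2 with rfl | h
                · exact hqS hd
                · exact hdp ((hone v hqS d hd h.symm).trans hqp)
              simp only [Finset.mem_filter, Finset.mem_insert] at hv ⊢
              tauto
            have h1 := (Finset.card_le_card hsub2).trans (Finset.card_insert_le _ _)
            rw [hnbS d hd] at h1
            have := hdeg d hd hdp
            simp only [ex, Finset.mem_erase, hd, hdp, ne_eq, not_false_eq_true, and_self, if_true]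
            omega
        · have h1 := (Finset.card_le_card hsub).trans (Finset.card_insert_le _ _)
          have h2 := Finset.card_insert_le d (S.filter (fun v => G.Adj d v))
          have := hnbO d hd
          omega)
      rw [Finset.card_insert_of_notMem hqS] at h
      omega
  · intro v hv
    by_cases hvp : v = p
    · rw [hvp]; exact hp
    · exact (hdeg v hv hvp).trans (hrle v)

end Combi

/-! ### Part 4: the sorted lower bound -/

section Sorted

/-- Energy of the path-with-triangle on `m` sorted values. -/
noncomputable def coreEnergy (m : ℕ) (y : ℕ → ℝ) : ℝ :=
  (y 0 - y 2) ^ 2 + (y 0 + y 1) ^ 2 + ∑ v ∈ Finset.Ico 2 m, (y v - y (v - 1)) ^ 2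

lemma gaps_le {m : ℕ} {y : ℕ → ℝ} (hy : ∀ i j, i ≤ j → j < m → y i ≤ y j) (i j : ℕ) (hij : i ≤ j)
    (hj : j < m) : ∑ k ∈ Finset.Ico i j, (y (k + 1) - y k) ^ 2 ≤ (y j - y i) ^ 2 := by
  induction j, hij using Nat.le_induction with
  | base => simp
  | succ j hij ih =>
    rw [Finset.sum_Ico_succ_top hij]
    have h1 := ih (by omega)
    have h2 := hy i j hij (by omega)
    have h3 := hy j (j + 1) (by omega) hj
    nlinarith [mul_nonneg (sub_nonneg.mpr h2) (sub_nonneg.mpr h3)]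

lemma coreEnergy_eq (m : ℕ) (hm : 3 ≤ m) (y : ℕ → ℝ) :
    coreEnergy m y = (y 0 + y 1) ^ 2 + ∑ k ∈ Finset.range (m - 1), (y (max (k + 1) 2) - y k) ^ 2 := by
  unfold coreEnergy
  obtain ⟨r, rfl⟩ : ∃ r, m = r + 3 := ⟨m - 3, by omega⟩
  rw [Finset.sum_Ico_eq_sum_range, show r + 3 - 2 = r + 1 by omega, show r + 3 - 1 = r + 2 by omega,
    Finset.sum_range_succ' _ (r + 1), Finset.sum_range_succ', Finset.sum_range_succ']
  have : ∀ k ∈ Finset.range r, (y (2 + (k + 1)) - y (2 + (k + 1) - 1)) ^ 2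
      = (y (max (k + 1 + 1 + 1) 2) - y (k + 1 + 1)) ^ 2 := by
    intro k _
    rw [show max (k + 1 + 1 + 1) 2 = 2 + (k + 1) by omega, show 2 + (k + 1) - 1 = k + 1 + 1 by omega]
  rw [Finset.sum_congr rfl this]
  norm_num
  ring

lemma coreEnergy_eq' (m : ℕ) (hm : 3 ≤ m) (y : ℕ → ℝ) :
    coreEnergy m y = (y 0 - y 2) ^ 2 + (y 0 + y 1) ^ 2 - (y 1 - y 0) ^ 2
      + ∑ k ∈ Finset.range (m - 1), (y (k + 1) - y k) ^ 2 := by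
  unfold coreEnergy
  obtain ⟨r, rfl⟩ : ∃ r, m = r + 3 := ⟨m - 3, by omega⟩
  rw [Finset.sum_Ico_eq_sum_range, show r + 3 - 2 = r + 1 by omega, show r + 3 - 1 = r + 2 by omega,
    Finset.sum_range_succ' _ (r + 1)]
  have : ∀ k ∈ Finset.range (r + 1), (y (2 + k) - y (2 + k - 1)) ^ 2
      = (y (k + 1 + 1) - y (k + 1)) ^ 2 := by
    intro k _
    rw [show k + 1 + 1 = 2 + k by omega, show 2 + k - 1 = k + 1 by omega]
  rw [Finset.sum_congr rfl this]
  norm_num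

lemma sorted_bound (m : ℕ) (hm : 3 ≤ m) (y : ℕ → ℝ) (hy0 : 0 ≤ y 0)
    (hy : ∀ i j, i ≤ j → j < m → y i ≤ y j) (E : Finset (ℕ × ℕ))
    (hE : ∀ e ∈ E, e.1 < e.2 ∧ e.2 < m) (w : ℕ × ℕ → ℝ)
    (hw : ∀ e ∈ E, (y e.2 - y e.1) ^ 2 ≤ w e) (ab : ℕ × ℕ) (hab : ab ∈ E)
    (hwab : (y ab.1 + y ab.2) ^ 2 ≤ w ab)
    (hcut : ∀ P : ℕ → Prop, (∃ i < m, P i) → (∃ i < m, ¬ P i) →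
      ∃ e ∈ E, e ≠ ab ∧ ¬ (P e.1 ↔ P e.2)) :
    coreEnergy m y ≤ ∑ e ∈ E, w e ∧
    (∑ e ∈ E, w e ≤ coreEnergy m y → 0 < y 0 → (∀ k, 1 ≤ k → k + 1 < m → y k < y (k + 1)) →
      ∀ i j, (i, j) ∈ E ↔ j < m ∧ ((i = 0 ∧ j = 2) ∨ j = i + 1)) := by
  have hsum : w ab + ∑ e ∈ E.erase ab, w e = ∑ e ∈ E, w e := Finset.add_sum_erase E w hab
  have hk : ∀ k, k ∈ Finset.range (m - 1) → ∃ e ∈ E, e ≠ ab ∧ e.1 ≤ k ∧ k < e.2 := by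
    intro k hk
    rw [Finset.mem_range] at hk
    obtain ⟨e, he, hne, h⟩ := hcut (fun i => i ≤ k) ⟨0, by omega, by omega⟩ ⟨k + 1, by omega, by omega⟩
    have := hE e he
    exact ⟨e, he, hne, by omega, by omega⟩
  by_cases hcase : ab = (0, 1)
  · -- the tight case
    have hk' : ∀ k, k ∈ Finset.range (m - 1) → ∃ e ∈ E, e ≠ ab ∧ e.1 ≤ k ∧ k < e.2 ∧ (k < 2 → e.1 = k) := by
      intro k hkm
      rcases lt_or_ge k 2 with h2 | h2
      · obtain ⟨e, he, hne, h⟩ := hcut (fun i => i = k) ⟨k, by omega, rfl⟩ ⟨2, by omega, by omega⟩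
        have := hE e he
        have h3 : e.1 = k := by
          by_contra hcon
          apply hne
          rw [hcase]
          ext <;> simp <;> omega
        exact ⟨e, he, hne, by omega, by omega, fun _ => h3⟩
      · obtain ⟨e, he, hne, h3, h4⟩ := hk k hkm
        exact ⟨e, he, hne, h3, h4, by omega⟩
    choose! e heE hene he1 he2 he3 using hk'
    set h : ℕ → ℝ := fun k => (y (max (k + 1) 2) - y k) ^ 2 with hh
    have hl : ∀ f ∈ E.erase ab, max (f.1 + 1) 2 ≤ f.2 := by
      intro f hf
      rw [Finset.mem_erase] at hf
      have := hE f hf.2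
      by_contra hcon
      apply hf.1
      rw [hcase]
      ext <;> simp <;> omega
    have hfib : ∀ f ∈ E.erase ab, ∑ k ∈ Finset.range (m - 1) with e k = f, h k
        ≤ (y f.2 - y f.1) ^ 2
          - 2 * ((y f.2 - y (max (f.1 + 1) 2)) * (y (max (f.1 + 1) 2) - y f.1)) := by
      intro f hf
      have hlf := hl f hf
      have hfE := hE f (Finset.mem_of_mem_erase hf)
      have hsub : (Finset.range (m - 1)).filter (fun k => e k = f) ⊆
          insert f.1 (Finset.Ico (max (f.1 + 1) 2) f.2) := by
        intro k hk
        rw [Finset.mem_filter] at hk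
        obtain ⟨hk, rfl⟩ := hk
        have a1 := he1 k hk
        have a2 := he2 k hk
        have a3 := he3 k hk
        simp only [Finset.mem_insert, Finset.mem_Ico]
        omega
      have h1 : ∑ k ∈ Finset.range (m - 1) with e k = f, h k
          ≤ ∑ k ∈ insert f.1 (Finset.Ico (max (f.1 + 1) 2) f.2), h k :=
        Finset.sum_le_sum_of_subset_of_nonneg hsub (fun k _ _ => sq_nonneg _)
      rw [Finset.sum_insert (by simp)] at h1
      have h2 : ∑ k ∈ Finset.Ico (max (f.1 + 1) 2) f.2, h k
          = ∑ k ∈ Finset.Ico (max (f.1 + 1) 2) f.2, (y (k + 1) - y k) ^ 2 := by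
        refine Finset.sum_congr rfl fun k hk => ?_
        rw [Finset.mem_Ico] at hk
        simp only [hh]
        rw [show max (k + 1) 2 = k + 1 by omega]
      have h3 := gaps_le hy _ _ hlf hfE.2
      rw [h2] at h1
      simp only [hh] at h1
      nlinarith
    have hpr : ∀ f ∈ E.erase ab,
        0 ≤ (y f.2 - y (max (f.1 + 1) 2)) * (y (max (f.1 + 1) 2) - y f.1) := by
      intro f hf
      have hlf := hl f hf
      have hfE := hE f (Finset.mem_of_mem_erase hf)
      exact mul_nonneg (sub_nonneg.mpr (hy _ _ hlf hfE.2))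
        (sub_nonneg.mpr (hy _ _ (by omega) (by omega)))
    have hfw : ∀ f ∈ E.erase ab, ∑ k ∈ Finset.range (m - 1) with e k = f, h k ≤ w f := by
      intro f hf
      have := hw f (Finset.mem_of_mem_erase hf)
      have := hfib f hf
      have := hpr f hf
      linarith
    have hmaps : ∀ k ∈ Finset.range (m - 1), e k ∈ E.erase ab := fun k hk =>
      Finset.mem_erase.mpr ⟨hene k hk, heE k hk⟩
    have htot : ∑ k ∈ Finset.range (m - 1), h k
        = ∑ f ∈ E.erase ab, ∑ k ∈ Finset.range (m - 1) with e k = f, h k :=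
      (Finset.sum_fiberwise_of_maps_to hmaps h).symm
    have hle := Finset.sum_le_sum hfw
    rw [← htot] at hle
    rw [coreEnergy_eq m hm, ← hsum]
    have hwab' : (y 0 + y 1) ^ 2 ≤ w ab := by simpa [hcase] using hwab
    refine ⟨by linarith, ?_⟩
    intro hge hpos hgap
    have hmono : ∀ i j, 1 ≤ i → i < j → j < m → y i < y j := by
      intro i j hi hij hj
      have := hgap i hi (by omega)
      have := hy (i + 1) j (by omega) hj
      linarith
    have hpat : ∀ f ∈ E.erase ab, f.2 = max (f.1 + 1) 2 := by
      intro f hf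
      by_contra hne
      have hlf := hl f hf
      have hfE := hE f (Finset.mem_of_mem_erase hf)
      have hlt : max (f.1 + 1) 2 < f.2 := by omega
      have s1 := hmono _ _ (by omega) hlt hfE.2
      have s2 : y f.1 < y (max (f.1 + 1) 2) := by
        rcases Nat.eq_zero_or_pos f.1 with h0 | h0
        · rw [h0]
          have := hy 0 1 (by omega) (by omega)
          have := hmono 1 2 (by omega) (by omega) (by omega)
          simp
          linarith
        · exact hmono _ _ (by omega) (by omega) (by omega)
      have s3 := mul_pos (sub_pos.mpr s1) (sub_pos.mpr s2)
      have s4 := hfib f hf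
      have s5 := hw f (Finset.mem_of_mem_erase hf)
      have s6 := Finset.sum_lt_sum hfw ⟨f, hf, by linarith⟩
      rw [← htot] at s6
      linarith
    intro i j
    constructor
    · intro hij
      have hfE := hE _ hij
      refine ⟨hfE.2, ?_⟩
      by_cases hijab : (i, j) = ab
      · rw [hcase, Prod.mk.injEq] at hijab
        omega
      · have := hpat (i, j) (Finset.mem_erase.mpr ⟨hijab, hij⟩)
        simp only at this hfE
        omega
    · rintro ⟨hjm, hij⟩
      by_cases hijab : i = 0 ∧ j = 1
      · rw [hijab.1, hijab.2, ← hcase]; exact hab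
      · have him : i ∈ Finset.range (m - 1) := Finset.mem_range.mpr (by omega)
        have a0 := hpat _ (hmaps i him)
        have a1 := he1 i him
        have a2 := he2 i him
        have a3 := he3 i him
        have a4 := heE i him
        have : e i = (i, j) := by
          ext <;> simp <;> omega
        rwa [this] at a4
  · choose! e heE hene he1 he2 using hk
    have habE := hE ab hab
    have hab2 : 2 ≤ ab.2 := by
      by_contra hcon
      apply hcase
      ext <;> simp <;> omega
    have hfib : ∀ f ∈ E.erase ab, ∑ k ∈ Finset.range (m - 1) with e k = f, (y (k + 1) - y k) ^ 2
        ≤ w f := by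
      intro f hf
      have hfE := hE f (Finset.mem_of_mem_erase hf)
      have hsub : (Finset.range (m - 1)).filter (fun k => e k = f) ⊆ Finset.Ico f.1 f.2 := by
        intro k hk
        rw [Finset.mem_filter] at hk
        obtain ⟨hk, rfl⟩ := hk
        have a1 := he1 k hk
        have a2 := he2 k hk
        simp only [Finset.mem_Ico]
        omega
      calc _ ≤ ∑ k ∈ Finset.Ico f.1 f.2, (y (k + 1) - y k) ^ 2 :=
            Finset.sum_le_sum_of_subset_of_nonneg hsub (fun k _ _ => sq_nonneg _)
        _ ≤ _ := gaps_le hy _ _ hfE.1.le hfE.2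
        _ ≤ _ := hw f (Finset.mem_of_mem_erase hf)
    have hmaps : ∀ k ∈ Finset.range (m - 1), e k ∈ E.erase ab := fun k hk =>
      Finset.mem_erase.mpr ⟨hene k hk, heE k hk⟩
    have htot := Finset.sum_fiberwise_of_maps_to hmaps (fun k => (y (k + 1) - y k) ^ 2)
    have hle := Finset.sum_le_sum hfib
    rw [htot] at hle
    have hA := hy 0 ab.1 (by omega) (by omega)
    have hB := hy 2 ab.2 hab2 habE.2
    have h02 := hy 0 2 (by omega) (by omega)
    have h12 := hy 1 2 (by omega) (by omega)
    have hC : (y 0 + y 2) ^ 2 ≤ w ab := by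
      refine le_trans ?_ hwab
      apply pow_le_pow_left₀ <;> linarith
    have hslack := mul_nonneg hy0 (sub_nonneg.mpr h12)
    rw [coreEnergy_eq' m hm, ← hsum]
    refine ⟨by nlinarith, ?_⟩
    intro hge hpos hgap
    have := mul_pos hpos (sub_pos.mpr (hgap 1 le_rfl (by omega)))
    exfalso
    norm_num at this
    nlinarith

end Sorted

/-! ### Part 5: the bound for the core -/

section Core

variable {V : Type*} [Fintype V]

lemma core_bound {G : SimpleGraph V} {S : Finset V} (hc : CutConn G S) (hb : NonBip G S)
    (x : V → ℝ) (m : ℕ) (hm : 3 ≤ m) (σ : ℕ → V)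
    (hinj : ∀ i j, i < m → j < m → σ i = σ j → i = j)
    (hS : ∀ v, v ∈ S ↔ ∃ i < m, σ i = v) (y : ℕ → ℝ) (hyx : ∀ i < m, y i = |x (σ i)|)
    (hy : ∀ i j, i ≤ j → j < m → y i ≤ y j) :
    coreEnergy m y ≤ ∑ e ∈ (restr G S).edgeFinset, edgeTerm x e ∧
    (∑ e ∈ (restr G S).edgeFinset, edgeTerm x e ≤ coreEnergy m y → 0 < y 0 →
      (∀ k, 1 ≤ k → k + 1 < m → y k < y (k + 1)) →
      ∀ i j, i < j → j < m → (G.Adj (σ i) (σ j) ↔ (i = 0 ∧ j = 2) ∨ j = i + 1)) := by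
  set E : Finset (ℕ × ℕ) := (Finset.range m ×ˢ Finset.range m).filter
    (fun e => e.1 < e.2 ∧ G.Adj (σ e.1) (σ e.2)) with hEdef
  have hmemE : ∀ e, e ∈ E ↔ e.1 < e.2 ∧ e.2 < m ∧ G.Adj (σ e.1) (σ e.2) := by
    intro e
    simp only [hEdef, Finset.mem_filter, Finset.mem_product, Finset.mem_range]
    constructor
    · rintro ⟨⟨h1, h2⟩, h3, h4⟩; exact ⟨h3, h2, h4⟩
    · rintro ⟨h1, h2, h3⟩; exact ⟨⟨by omega, h2⟩, h1, h3⟩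
  have hsum : ∑ e ∈ (restr G S).edgeFinset, edgeTerm x e
      = ∑ e ∈ E, edgeTerm x s(σ e.1, σ e.2) := by
    symm
    refine Finset.sum_nbij (fun e => s(σ e.1, σ e.2)) ?_ ?_ ?_ ?_
    · intro e he
      rw [hmemE] at he
      rw [SimpleGraph.mem_edgeFinset, SimpleGraph.mem_edgeSet, restr_adj]
      exact ⟨he.2.2, (hS _).mpr ⟨_, by omega, rfl⟩, (hS _).mpr ⟨_, he.2.1, rfl⟩⟩
    · intro e he f hf hef
      rw [Finset.mem_coe, hmemE] at he hf
      simp only at hef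
      rw [Sym2.eq_iff] at hef
      rcases hef with ⟨h1, h2⟩ | ⟨h1, h2⟩
      · ext
        · exact hinj _ _ (by omega) (by omega) h1
        · exact hinj _ _ (by omega) (by omega) h2
      · have := hinj _ _ (by omega) (by omega) h1
        have := hinj _ _ (by omega) (by omega) h2
        omega
    · intro e he
      induction e with
      | _ u v =>
        rw [Finset.mem_coe, SimpleGraph.mem_edgeFinset, SimpleGraph.mem_edgeSet, restr_adj] at he
        obtain ⟨huv, hu, hv⟩ := he
        obtain ⟨i, hi, rfl⟩ := (hS u).mp hu
        obtain ⟨j, hj, rfl⟩ := (hS v).mp hv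
        have hne : i ≠ j := by
          rintro rfl
          exact huv.ne rfl
        rcases lt_or_gt_of_ne hne with h | h
        · exact ⟨(i, j), by rw [Finset.mem_coe, hmemE]; exact ⟨h, hj, huv⟩, rfl⟩
        · exact ⟨(j, i), by rw [Finset.mem_coe, hmemE]; exact ⟨h, hi, huv.symm⟩, Sym2.eq_swap⟩
    · intro e _
      rfl
  obtain ⟨a, ha, b, hb', hab, hcol, hcc⟩ := exists_mono_nonbridge hb (fun v => decide (0 ≤ x v))
  have hcc := hcc hc
  obtain ⟨i, hi, rfl⟩ := (hS a).mp ha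
  obtain ⟨j, hj, rfl⟩ := (hS b).mp hb'
  -- normalised version of the special edge
  obtain ⟨ab, habE, habs⟩ : ∃ ab ∈ E, s(σ ab.1, σ ab.2) = s(σ i, σ j) := by
    have hne : i ≠ j := by
      rintro rfl
      exact hab.ne rfl
    rcases lt_or_gt_of_ne hne with h | h
    · exact ⟨(i, j), by rw [hmemE]; exact ⟨h, hj, hab⟩, rfl⟩
    · exact ⟨(j, i), by rw [hmemE]; exact ⟨h, hi, hab.symm⟩, Sym2.eq_swap⟩
  have hcol' : 0 ≤ x (σ ab.1) ↔ 0 ≤ x (σ ab.2) := by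
    simp only [decide_eq_decide] at hcol
    rw [Sym2.eq_iff] at habs
    rcases habs with ⟨h1, h2⟩ | ⟨h1, h2⟩
    · rw [h1, h2]; exact hcol
    · rw [h1, h2]; exact hcol.symm
  have hE : ∀ e ∈ E, e.1 < e.2 ∧ e.2 < m := fun e he =>
    ⟨((hmemE e).mp he).1, ((hmemE e).mp he).2.1⟩
  have hbd := sorted_bound m hm y (by rw [hyx 0 (by omega)]; positivity) hy E hE
    (fun e => edgeTerm x s(σ e.1, σ e.2)) (by
      intro e he
      have := hE e he
      rw [edgeTerm_mk, hyx _ this.2, hyx e.1 (by omega)]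
      nlinarith [sq_abs (x (σ e.1)), sq_abs (x (σ e.2)),
        neg_abs_le (x (σ e.1) * x (σ e.2)), abs_mul (x (σ e.1)) (x (σ e.2))]) ab habE (by
      have := hE ab habE
      rw [edgeTerm_mk, hyx _ this.2, hyx ab.1 (by omega)]
      by_cases h : 0 ≤ x (σ ab.1)
      · rw [abs_of_nonneg h, abs_of_nonneg (hcol'.mp h)]
      · have h' : ¬ 0 ≤ x (σ ab.2) := fun h2 => h (hcol'.mpr h2)
        rw [abs_of_neg (not_le.mp h), abs_of_neg (not_le.mp h')]
        nlinarith) (by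
      rintro P ⟨i1, hi1, hP1⟩ ⟨i2, hi2, hP2⟩
      have hPσ : ∀ k < m, σ k ∈ ((Finset.range m).filter P).image σ ↔ P k := by
        intro k hk
        rw [Finset.mem_image]
        constructor
        · rintro ⟨k', hk', hkk⟩
          rw [Finset.mem_filter, Finset.mem_range] at hk'
          rw [← hinj _ _ hk'.1 hk hkk]
          exact hk'.2
        · intro h
          exact ⟨k, by simp [hk, h], rfl⟩
      obtain ⟨u, hu, v, hv, huv⟩ := hcc (((Finset.range m).filter P).image σ) (by
        intro v hv
        rw [Finset.mem_image] at hv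
        obtain ⟨k, hk, rfl⟩ := hv
        simp only [Finset.mem_filter, Finset.mem_range] at hk
        exact (hS _).mpr ⟨k, hk.1, rfl⟩) ⟨σ i1, (hPσ _ hi1).mpr hP1⟩
        ⟨σ i2, by
          rw [Finset.mem_sdiff]
          exact ⟨(hS _).mpr ⟨i2, hi2, rfl⟩, fun h => hP2 ((hPσ _ hi2).mp h)⟩⟩
      rw [Finset.mem_sdiff] at hv
      obtain ⟨l, hl, rfl⟩ := (hS v).mp hv.1
      have huS : ∃ k < m, σ k = u := by
        rw [Finset.mem_image] at hu
        obtain ⟨k, hk, rfl⟩ := hu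
        simp only [Finset.mem_filter, Finset.mem_range] at hk
        exact ⟨k, hk.1, rfl⟩
      obtain ⟨k, hk, rfl⟩ := huS
      rw [hPσ k hk] at hu
      rw [hPσ l hl] at hv
      rw [SimpleGraph.deleteEdges_adj, Set.mem_singleton_iff, ← habs] at huv
      have hne : k ≠ l := by
        rintro rfl
        exact huv.1.ne rfl
      rcases lt_or_gt_of_ne hne with h | h
      · refine ⟨(k, l), by rw [hmemE]; exact ⟨h, hl, huv.1⟩, ?_, ?_⟩
        · rintro rfl
          exact huv.2 rfl
        · simp only
          tauto
      · refine ⟨(l, k), by rw [hmemE]; exact ⟨h, hk, huv.1.symm⟩, ?_, ?_⟩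
        · rintro rfl
          exact huv.2 Sym2.eq_swap
        · simp only
          tauto)
  rw [hsum]
  refine ⟨hbd.1, fun h1 h2 h3 => ?_⟩
  have := hbd.2 h1 h2 h3
  intro i j hij hj
  have h4 := this i j
  rw [hmemE] at h4
  simp only at h4
  constructor
  · intro h
    exact (h4.mp ⟨hij, hj, h⟩).2
  · intro h
    exact (h4.mpr ⟨hj, h⟩).2.2

/-- Enumerate a finite set by increasing value. -/
lemma exists_sorted [Nonempty V] (S : Finset V) (f : V → ℝ) : ∃ σ : ℕ → V,
    (∀ i j, i < S.card → j < S.card → σ i = σ j → i = j) ∧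
    (∀ v, v ∈ S ↔ ∃ i < S.card, σ i = v) ∧
    (∀ i j, i ≤ j → j < S.card → f (σ i) ≤ f (σ j)) := by
  let g : Fin S.card → V := fun i => (S.equivFin.symm i : V)
  let τ := Tuple.sort (fun i => f (g i))
  have hτ : Monotone ((fun i => f (g i)) ∘ τ) := Tuple.monotone_sort _
  refine ⟨fun i => if h : i < S.card then g (τ ⟨i, h⟩) else Classical.arbitrary V, ?_, ?_, ?_⟩
  · intro i j hi hj h
    simp only [hi, hj, dif_pos, g] at h
    have := S.equivFin.symm.injective (Subtype.ext h)
    have := τ.injective this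
    simpa using this
  · intro v
    constructor
    · intro hv
      refine ⟨(τ.symm (S.equivFin ⟨v, hv⟩)).1, Fin.is_lt _, ?_⟩
      simp [g]
    · rintro ⟨i, hi, rfl⟩
      simp only [hi, dif_pos, g]
      exact Subtype.property _
  · intro i j hij hj
    have hi : i < S.card := by omega
    simp only [hi, hj, dif_pos]
    exact hτ (show (⟨i, hi⟩ : Fin S.card) ≤ ⟨j, hj⟩ from hij)

end Core

/-! ### Part 6: the test vector for the model graph -/

section Test

/-- The polarisation of `modelEnergy`. -/
noncomputable def modelBil (K n : ℕ) (z d : ℕ → ℝ) : ℝ :=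
  (z 0 - z 2) * (d 0 - d 2) + (z 0 + z 1) * (d 0 + d 1) +
    ∑ v ∈ Finset.Ico 2 n, (z v - z (modelPar K v)) * (d v - d (modelPar K v))

lemma modelEnergy_expand (K n : ℕ) (z d : ℕ → ℝ) (t : ℝ) :
    modelEnergy K n (fun v => z v + t * d v) =
      modelEnergy K n z + 2 * t * modelBil K n z d + t ^ 2 * modelEnergy K n d := by
  unfold modelEnergy modelBil
  have : ∑ v ∈ Finset.Ico 2 n, ((z v + t * d v) - (z (modelPar K v) + t * d (modelPar K v))) ^ 2
      = ∑ v ∈ Finset.Ico 2 n, (z v - z (modelPar K v)) ^ 2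
        + 2 * t * ∑ v ∈ Finset.Ico 2 n, (z v - z (modelPar K v)) * (d v - d (modelPar K v))
        + t ^ 2 * ∑ v ∈ Finset.Ico 2 n, (d v - d (modelPar K v)) ^ 2 := by
    rw [Finset.mul_sum, Finset.mul_sum, ← Finset.sum_add_distrib, ← Finset.sum_add_distrib]
    refine Finset.sum_congr rfl fun v _ => ?_
    ring
  rw [this]
  ring

lemma lin_zero_of_quad (b c : ℝ) (h : ∀ t : ℝ, 0 ≤ 2 * t * b + t ^ 2 * c) : b = 0 := by
  have hc : 0 ≤ |c| + 1 := by positivity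
  have hc' : 0 < |c| + 1 := by positivity
  have := h (-b / (|c| + 1))
  have h2 : (2 * (-b / (|c| + 1)) * b + (-b / (|c| + 1)) ^ 2 * c) * (|c| + 1) ^ 2
      = b ^ 2 * (c - 2 * (|c| + 1)) := by
    field_simp
    ring
  have h3 : 0 ≤ b ^ 2 * (c - 2 * (|c| + 1)) := by
    rw [← h2]; positivity
  have h4 := le_abs_self c
  have h5 : b ^ 2 ≤ 0 := by nlinarith [sq_nonneg b, abs_nonneg c]
  exact pow_eq_zero_iff (two_ne_zero) |>.mp (le_antisymm h5 (sq_nonneg b))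

lemma first_order (n K : ℕ) (hK : 3 ≤ K) (hn : K ≤ n) (z : ℕ → ℝ)
    (hz : modelEnergy K n z ≤ qmin (model n K) * ∑ v ∈ Finset.range n, z v ^ 2) (d : ℕ → ℝ) :
    modelBil K n z d = qmin (model n K) * ∑ v ∈ Finset.range n, z v * d v := by
  have := lin_zero_of_quad
    (modelBil K n z d - qmin (model n K) * ∑ v ∈ Finset.range n, z v * d v)
    (modelEnergy K n d - qmin (model n K) * ∑ v ∈ Finset.range n, d v ^ 2) (by
    intro t
    have h1 := model_ineq n K hK hn (fun v => z v + t * d v)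
    rw [modelEnergy_expand] at h1
    have h2 : ∑ v ∈ Finset.range n, (z v + t * d v) ^ 2
        = ∑ v ∈ Finset.range n, z v ^ 2 + 2 * t * ∑ v ∈ Finset.range n, z v * d v
          + t ^ 2 * ∑ v ∈ Finset.range n, d v ^ 2 := by
      rw [Finset.mul_sum, Finset.mul_sum, ← Finset.sum_add_distrib, ← Finset.sum_add_distrib]
      refine Finset.sum_congr rfl fun v _ => ?_
      ring
    rw [h2] at h1
    nlinarith)
  linarith

lemma strict_of_tight (n K : ℕ) (hK : 3 ≤ K) (hn : K + 2 ≤ n) (z : ℕ → ℝ)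
    (hz0 : ∀ i, 0 ≤ z i) (hzn : 0 < z (n - 1)) (h01 : z 1 ≤ z 2)
    (hz : modelEnergy K n z ≤ qmin (model n K) * ∑ v ∈ Finset.range n, z v ^ 2) :
    0 < z 0 ∧ ∀ k, 1 ≤ k → k + 1 < K → z k < z (k + 1) := by
  have hl0 := model_pos n K hK (by omega)
  have hl1 := model_lt_one n K hK hn
  have hfo := first_order n K hK (by omega) z hz
  set l := qmin (model n K) with hl
  -- tails are positive
  have htail : ∀ k, k + 1 < K →
      0 < l * ∑ v ∈ Finset.range n, z v * (if k + 1 ≤ v then 1 else 0) := by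
    intro k hk
    apply mul_pos hl0
    apply Finset.sum_pos'
    · intro v _
      have := hz0 v
      positivity
    · refine ⟨n - 1, by simp; omega, ?_⟩
      rw [if_pos (by omega)]
      simpa using hzn
  have hbil : ∀ k, 1 ≤ k → k + 1 < K →
      ∑ v ∈ Finset.Ico 2 n, (z v - z (modelPar K v)) *
        ((if k + 1 ≤ v then (1 : ℝ) else 0) - (if k + 1 ≤ modelPar K v then 1 else 0))
      = z (k + 1) - z k := by
    intro k hk hkK
    rw [Finset.sum_eq_single (k + 1)]
    · have : modelPar K (k + 1) = k := by simp [modelPar, hkK]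
      rw [this]
      simp
    · intro v hv hvk
      rw [Finset.mem_Ico] at hv
      have : (k + 1 ≤ v) ↔ (k + 1 ≤ modelPar K v) := by
        unfold modelPar
        split_ifs <;> omega
      simp [this]
    · intro h
      simp at h
      omega
  have hE0 := hfo (fun v => if v = 0 then 1 else 0)
  have hE1 := hfo (fun v => if v = 1 then 1 else 0)
  have hs0 : ∑ v ∈ Finset.range n, z v * (if v = 0 then (1 : ℝ) else 0) = z 0 := by
    rw [Finset.sum_eq_single 0] <;> simp <;> omega
  have hs1 : ∑ v ∈ Finset.range n, z v * (if v = 1 then (1 : ℝ) else 0) = z 1 := by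
    rw [Finset.sum_eq_single 1]
    · simp
    · intro b _ hb; simp [hb]
    · intro h; simp at h; omega
  rw [hs0] at hE0
  rw [hs1] at hE1
  unfold modelBil at hE0 hE1
  rw [Finset.sum_eq_zero (by
    intro v hv
    rw [Finset.mem_Ico] at hv
    have h1 : modelPar K v ≠ 0 := by unfold modelPar; split_ifs <;> omega
    simp [h1, show v ≠ 0 by omega])] at hE0
  rw [Finset.sum_eq_single 2 (by
    intro v hv hv2
    rw [Finset.mem_Ico] at hv
    have h1 : modelPar K v ≠ 1 := by unfold modelPar; split_ifs <;> omega
    simp [h1, show v ≠ 1 by omega]) (by intro h; simp at h; omega)] at hE1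
  have hp2 : modelPar K 2 = 1 := by unfold modelPar; rw [if_pos (by omega)]
  rw [hp2] at hE1
  norm_num at hE0 hE1
  have heq : z 0 = z 1 := by
    have : (1 - l) * (z 0 - z 1) = 0 := by linarith
    rcases mul_eq_zero.mp this with h | h <;> linarith
  have hk1 : z 1 < z 2 := by
    have h := hfo (fun v => if 1 + 1 ≤ v then 1 else 0)
    have h2 := htail 1 (by omega)
    rw [← h] at h2
    unfold modelBil at h2
    rw [hbil 1 le_rfl (by omega)] at h2
    norm_num at h2
    linarith
  refine ⟨?_, ?_⟩
  · have h1 := hz0 1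
    nlinarith
  · intro k hk hkK
    rcases Nat.eq_or_lt_of_le hk with rfl | hk2
    · exact hk1
    · have h := hfo (fun v => if k + 1 ≤ v then 1 else 0)
      have h2 := htail k hkK
      rw [← h] at h2
      unfold modelBil at h2
      rw [hbil k hk hkK] at h2
      simp only [show ¬ (k + 1 ≤ 0) by omega, show ¬ (k + 1 ≤ 1) by omega,
        show ¬ (k + 1 ≤ 2) by omega, if_false] at h2
      linarith

lemma model_test (n K m : ℕ) (hm : 3 ≤ m) (hmK : m ≤ K) (hn : K + 2 ≤ n) (y : ℕ → ℝ)
    (hy0 : 0 ≤ y 0) (hy : ∀ i j, i ≤ j → j < m → y i ≤ y j) (l : ℝ) (hl : l = qmin (model n K)) :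
    ((n : ℝ) - m) * (l / (1 - l) * y (m - 1) ^ 2) ≤
      coreEnergy m y - l * ∑ i ∈ Finset.range m, y i ^ 2 ∧
    (coreEnergy m y - l * ∑ i ∈ Finset.range m, y i ^ 2 ≤
      ((n : ℝ) - m) * (l / (1 - l) * y (m - 1) ^ 2) → 0 < y (m - 1) →
      m = K ∧ 0 < y 0 ∧ ∀ k, 1 ≤ k → k + 1 < m → y k < y (k + 1)) := by
  have hl0 : 0 < l := hl ▸ model_pos n K (by omega) (by omega)
  have hl1 : l < 1 := hl ▸ model_lt_one n K (by omega) hn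
  have h1l : 0 < 1 - l := by linarith
  set Y := y (m - 1) / (1 - l) with hY
  have hYm : y (m - 1) = (1 - l) * Y := by rw [hY]; field_simp
  have hc : l / (1 - l) * y (m - 1) ^ 2 = l * Y ^ 2 - (Y - y (m - 1)) ^ 2 := by
    rw [hYm]
    field_simp
    ring
  have hym0 : 0 ≤ y (m - 1) := hy0.trans (hy 0 (m - 1) (by omega) (by omega))
  set z : ℕ → ℝ := fun i => if i < m then y i else Y with hz
  have hzlt : ∀ i, i < m → z i = y i := fun i hi => by simp [hz, hi]
  have hzge : ∀ i, m ≤ i → z i = Y := fun i hi => by simp [hz, not_lt.mpr hi]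
  have hN : ∑ v ∈ Finset.range n, z v ^ 2 = ∑ i ∈ Finset.range m, y i ^ 2 + ((n : ℝ) - m) * Y ^ 2 := by
    rw [← Finset.sum_range_add_sum_Ico _ (show m ≤ n by omega)]
    congr 1
    · exact Finset.sum_congr rfl fun i hi => by rw [hzlt i (Finset.mem_range.mp hi)]
    · rw [Finset.sum_congr rfl (fun i hi => by rw [hzge i (Finset.mem_Ico.mp hi).1]), Finset.sum_const,
        Nat.card_Ico, nsmul_eq_mul, Nat.cast_sub (by omega)]
  have hEn : modelEnergy K n z
      = coreEnergy m y + ∑ v ∈ Finset.Ico m n, (z v - z (modelPar K v)) ^ 2 := by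
    unfold modelEnergy coreEnergy
    rw [hzlt 0 (by omega), hzlt 1 (by omega), hzlt 2 (by omega), add_assoc (_ + _), ]
    congr 1
    rw [← Finset.sum_Ico_consecutive _ (show 2 ≤ m by omega) (show m ≤ n by omega)]
    congr 1
    refine Finset.sum_congr rfl fun v hv => ?_
    rw [Finset.mem_Ico] at hv
    rw [show modelPar K v = v - 1 by unfold modelPar; rw [if_pos (by omega)], hzlt v hv.2,
      hzlt (v - 1) (by omega)]
  have hpar : ∀ v ∈ Finset.Ico m n, (z v - z (modelPar K v)) ^ 2 ≤ (Y - y (m - 1)) ^ 2 := by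
    intro v hv
    rw [Finset.mem_Ico] at hv
    rw [hzge v hv.1]
    by_cases h : m ≤ modelPar K v
    · rw [hzge _ h]
      simp only [sub_self, ne_eq, OfNat.ofNat_ne_zero, not_false_eq_true, zero_pow]
      positivity
    · have : modelPar K v = m - 1 := by
        unfold modelPar at h ⊢
        split_ifs at h ⊢ <;> omega
      rw [this, hzlt (m - 1) (by omega)]
  have hconst : ∑ v ∈ Finset.Ico m n, (Y - y (m - 1)) ^ 2 = ((n : ℝ) - m) * (Y - y (m - 1)) ^ 2 := by
    rw [Finset.sum_const, Nat.card_Ico, nsmul_eq_mul, Nat.cast_sub (by omega)]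
  have hR := Finset.sum_le_sum hpar
  rw [hconst] at hR
  have hmi := model_ineq n K (by omega) (by omega) z
  rw [← hl, hN, hEn] at hmi
  refine ⟨by rw [hc]; nlinarith, ?_⟩
  intro htight hpos
  have hYpos : 0 < Y := div_pos hpos h1l
  have hmK' : m = K := by
    by_contra hne
    have hlt := Finset.sum_lt_sum hpar ⟨m + 1, by simp; omega, by
      have hp : m ≤ modelPar K (m + 1) := by unfold modelPar; split_ifs <;> omega
      rw [hzge _ hp, hzge _ (by omega)]
      have : 0 < Y - y (m - 1) := by rw [hYm]; nlinarith
      simp only [sub_self, ne_eq, OfNat.ofNat_ne_zero, not_false_eq_true, zero_pow]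
      positivity⟩
    rw [hconst] at hlt
    rw [hc] at htight
    nlinarith
  have hst := strict_of_tight n K (by omega) hn z (by
    intro i
    by_cases h : i < m
    · rw [hzlt i h]
      exact hy0.trans (hy 0 i (by omega) h)
    · rw [hzge i (by omega)]
      exact hYpos.le) (by rw [hzge _ (by omega)]; exact hYpos)
      (by rw [hzlt 1 (by omega), hzlt 2 (by omega)]; exact hy 1 2 (by omega) (by omega))
      (by rw [← hl, hN, hEn]; rw [hc] at htight; nlinarith)
  refine ⟨hmK', ?_, ?_⟩
  · rw [← hzlt 0 (by omega)]; exact hst.1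
  · intro k hk hkm
    rw [← hzlt k (by omega), ← hzlt (k + 1) hkm]
    exact hst.2 k hk (by omega)

end Test

/-! ### Part 7: assembly -/

section Assembly

variable {V : Type*} [Fintype V]

/-- Recognising the model graph from its labelled structure. -/
lemma model_of_labels {G : SimpleGraph V} {n m : ℕ} (hcard : Fintype.card V = n) (hm : 3 ≤ m)
    (S : Finset V) (hSm : S.card = m) (σ : ℕ → V)
    (hinj : ∀ i j, i < m → j < m → σ i = σ j → i = j)
    (hS : ∀ v, v ∈ S ↔ ∃ i < m, σ i = v)
    (hin : ∀ i j, i < j → j < m → (G.Adj (σ i) (σ j) ↔ (i = 0 ∧ j = 2) ∨ j = i + 1))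
    (hout : ∀ u, u ∉ S → ∀ w, G.Adj w u ↔ w = σ (m - 1)) :
    Nonempty (model n m ≃g G) := by
  have : Nonempty V := ⟨σ 0⟩
  obtain ⟨ρ, hρ1, hρ2, -⟩ := exists_sorted (Finset.univ \ S) (fun _ => (0 : ℝ))
  have hmn : m ≤ n := by rw [← hSm, ← hcard]; exact Finset.card_le_univ S
  have hc : (Finset.univ \ S).card = n - m := by
    rw [Finset.card_sdiff_of_subset (Finset.subset_univ _), Finset.card_univ, hSm, hcard]
  rw [hc] at hρ1 hρ2
  have hρS : ∀ i, i < n - m → ρ i ∉ S := by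
    intro i hi
    have := (hρ2 (ρ i)).mpr ⟨i, hi, rfl⟩
    simpa using this
  have hσS : ∀ i, i < m → σ i ∈ S := fun i hi => (hS _).mpr ⟨i, hi, rfl⟩
  let φ : Fin n → V := fun i => if i.1 < m then σ i.1 else ρ (i.1 - m)
  have hφ1 : ∀ i : Fin n, i.1 < m → φ i = σ i.1 := fun i hi => by simp [φ, hi]
  have hφ2 : ∀ i : Fin n, ¬ i.1 < m → φ i = ρ (i.1 - m) := fun i hi => by simp [φ, hi]
  have hφS : ∀ i : Fin n, φ i ∈ S ↔ i.1 < m := by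
    intro i
    by_cases h : i.1 < m
    · rw [hφ1 i h]; simp [h, hσS i.1 h]
    · rw [hφ2 i h]
      have := hρS (i.1 - m) (by omega)
      simp [h, this]
  have hφinj : Function.Injective φ := by
    intro i j hij
    by_cases hi : i.1 < m
    · have hj : j.1 < m := by rw [← hφS, ← hij, hφS]; exact hi
      rw [hφ1 i hi, hφ1 j hj] at hij
      exact Fin.ext (hinj _ _ hi hj hij)
    · have hj : ¬ j.1 < m := by rw [← hφS, ← hij, hφS]; exact hi
      rw [hφ2 i hi, hφ2 j hj] at hij
      have := hρ1 _ _ (by omega) (by omega) hij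
      exact Fin.ext (by omega)
  have hφbij : Function.Bijective φ :=
    (Fintype.bijective_iff_injective_and_card φ).mpr ⟨hφinj, by simp [hcard]⟩
  have hlt : ∀ i j : Fin n, i.1 < j.1 → (G.Adj (φ i) (φ j) ↔ (model n m).Adj i j) := by
    intro i j hij
    obtain ⟨l, rfl⟩ : ∃ l, m = 3 + l := ⟨m - 3, by omega⟩
    rw [model_adj, modelRel_iff, modelRel_iff]
    have hne : i ≠ j := by rintro rfl; omega
    by_cases hj : j.1 < 3 + l
    · rw [hφ1 i (by omega), hφ1 j hj, hin _ _ hij hj]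
      simp only [ne_eq, hne, not_false_eq_true, true_and]
      omega
    · have hjS : φ j ∉ S := by rw [hφS]; exact hj
      rw [hout _ hjS]
      simp only [ne_eq, hne, not_false_eq_true, true_and]
      by_cases hi : i.1 < 3 + l
      · have : φ i = σ (3 + l - 1) ↔ i.1 = 2 + l := by
          rw [hφ1 i hi]
          constructor
          · intro h
            have := hinj _ _ hi (by omega) h
            omega
          · intro h
            rw [h]
            congr 1
            omega
        rw [this]
        omega
      · have : ¬ φ i = σ (3 + l - 1) := by
          intro h
          have h1 : φ i ∈ S := by rw [h]; exact hσS _ (by omega)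
          rw [hφS] at h1
          exact hi h1
        simp only [this, false_iff]
        omega
  refine ⟨⟨Equiv.ofBijective φ hφbij, ?_⟩⟩
  intro i j
  simp only [Equiv.ofBijective_apply]
  rcases lt_trichotomy i.1 j.1 with h | h | h
  · exact hlt i j h
  · have : i = j := Fin.ext h
    subst this
    simp
  · rw [SimpleGraph.adj_comm, hlt j i h, SimpleGraph.adj_comm]

lemma main_lemma (G : SimpleGraph V) (n γ : ℕ) (hcard : Fintype.card V = n) (hn : 3 * γ + 2 ≤ n)
    (hconn : G.Connected) (hnb : ¬ G.Colorable 2) (huni : G.edgeFinset.card = Fintype.card V)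
    (D : Finset V) (hD : IsDominatingSet G D) (hDc : D.card = γ) (l : ℝ)
    (hl : l = qmin (model n (3 * γ))) :
    l ≤ qmin G ∧ (qmin G ≤ l → Nonempty (model n (3 * γ) ≃g G)) := by
  have : Nonempty V := hconn.nonempty
  obtain ⟨⟨x, hx0, hx⟩, -⟩ := qmin_spec G
  -- choice of `p`
  obtain ⟨p, hpdeg, hpmax⟩ : ∃ p, 2 ≤ G.degree p ∧ ∀ v, 2 ≤ G.degree v → |x v| ≤ |x p| := by
    have hne : (Finset.univ.filter (fun v => 2 ≤ G.degree v)).Nonempty := by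
      by_contra hcon
      rw [Finset.not_nonempty_iff_eq_empty, Finset.filter_eq_empty_iff] at hcon
      have h1 : ∑ v, G.degree v ≤ ∑ v : V, 1 := Finset.sum_le_sum fun v _ => by
        have := hcon (Finset.mem_univ v)
        omega
      rw [G.sum_degrees_eq_twice_card_edges, huni] at h1
      simp at h1
      omega
    obtain ⟨p, hp, hmax⟩ := Finset.exists_max_image _ (fun v => |x v|) hne
    exact ⟨p, by simpa using hp, fun v hv => hmax v (by simpa using hv)⟩
  obtain ⟨S, par, hpS, hS3, hSK, hSdeg, hcut, hbip, hpar, hpardeg, hparinj⟩ :=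
    structure_lemma hconn hnb huni p hpdeg D hD
  obtain ⟨σ, hσinj, hσS, hσmono⟩ := exists_sorted S (fun v => |x v|)
  rw [hDc] at hSK
  set m := S.card with hmdef
  set y : ℕ → ℝ := fun i => |x (σ i)| with hy
  have hcore := core_bound hcut hbip x m hS3 σ hσinj hσS y (fun i _ => rfl) hσmono
  have htest := model_test n (3 * γ) m hS3 hSK hn y (abs_nonneg _) hσmono l hl
  have hl0 : 0 < l := hl ▸ model_pos n (3 * γ) (by omega) (by omega)
  have hl1 : l < 1 := hl ▸ model_lt_one n (3 * γ) (by omega) hn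
  have h1l : 0 < 1 - l := by linarith
  have hc0 : 0 < l / (1 - l) := div_pos hl0 h1l
  have hyp : y (m - 1) = |x p| := by
    apply le_antisymm
    · exact hpmax _ (hSdeg _ ((hσS _).mpr ⟨m - 1, by omega, rfl⟩))
    · obtain ⟨i, hi, hip⟩ := (hσS p).mp hpS
      rw [← hip]
      exact hσmono i (m - 1) (by omega) (by omega)
  have hup : ∀ u, u ∉ S → u ≠ p := fun u hu h => hu (h ▸ hpS)
  have hmn : m ≤ n := by rw [← hcard]; exact Finset.card_le_univ S
  -- decomposition of the energy
  have hE : ∑ e ∈ (restr G S).edgeFinset, edgeTerm x e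
      + ∑ u ∈ Finset.univ \ S, (x u + x (par u)) ^ 2 ≤ energy G x := by
    have himg : ∑ u ∈ Finset.univ \ S, (x u + x (par u)) ^ 2
        = ∑ e ∈ (Finset.univ \ S).image (fun u => s(u, par u)), edgeTerm x e := by
      rw [Finset.sum_image]
      · simp
      · intro u hu v hv h
        exact hparinj u v (hup u (by simpa using hu)) (hup v (by simpa using hv)) h
    have hdisj : Disjoint (restr G S).edgeFinset ((Finset.univ \ S).image (fun u => s(u, par u))) := by
      rw [Finset.disjoint_left]
      intro e he ho
      obtain ⟨u, hu, rfl⟩ := Finset.mem_image.mp ho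
      rw [SimpleGraph.mem_edgeFinset, SimpleGraph.mem_edgeSet, restr_adj] at he
      exact (Finset.mem_sdiff.mp hu).2 he.2.1
    rw [himg, ← Finset.sum_union hdisj]
    unfold energy
    apply Finset.sum_le_sum_of_subset_of_nonneg
    · intro e he
      rcases Finset.mem_union.mp he with he | he
      · induction e with
        | _ u v =>
          rw [SimpleGraph.mem_edgeFinset, SimpleGraph.mem_edgeSet, restr_adj] at he
          rw [SimpleGraph.mem_edgeFinset, SimpleGraph.mem_edgeSet]
          exact he.1
      · obtain ⟨u, hu, rfl⟩ := Finset.mem_image.mp he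
        rw [SimpleGraph.mem_edgeFinset, SimpleGraph.mem_edgeSet]
        exact hpar u (hup u (Finset.mem_sdiff.mp hu).2)
    · intro e _ _
      exact edgeTerm_nonneg _ _
  have hN : ∑ v, x v ^ 2 = ∑ i ∈ Finset.range m, y i ^ 2 + ∑ u ∈ Finset.univ \ S, x u ^ 2 := by
    have : ∑ v ∈ S, x v ^ 2 = ∑ i ∈ Finset.range m, y i ^ 2 := by
      symm
      refine Finset.sum_nbij σ ?_ ?_ ?_ ?_
      · intro i hi
        exact (hσS _).mpr ⟨i, Finset.mem_range.mp hi, rfl⟩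
      · intro i hi j hj h
        exact hσinj i j (by simpa using hi) (by simpa using hj) h
      · intro v hv
        obtain ⟨i, hi, rfl⟩ := (hσS v).mp hv
        exact ⟨i, by simpa using hi, rfl⟩
      · intro i _
        simp [hy]
    rw [← this, add_comm, Finset.sum_sdiff (Finset.subset_univ S)]
  -- the outside terms
  have hid : ∀ u, (x u + x (par u)) ^ 2 - l * x u ^ 2 + l / (1 - l) * y (m - 1) ^ 2
      = (1 - l) * (x u + x (par u) / (1 - l)) ^ 2
        + l / (1 - l) * (y (m - 1) ^ 2 - x (par u) ^ 2) := by
    intro u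
    field_simp
    ring
  have hparle : ∀ u, u ∉ S → x (par u) ^ 2 ≤ y (m - 1) ^ 2 := by
    intro u hu
    rw [hyp, sq_abs]
    exact sq_le_sq.mpr (hpmax _ (hpardeg u (hup u hu)))
  have hr0 : ∀ u ∈ Finset.univ \ S,
      0 ≤ (x u + x (par u)) ^ 2 - l * x u ^ 2 + l / (1 - l) * y (m - 1) ^ 2 := by
    intro u hu
    rw [hid]
    have := hparle u (Finset.mem_sdiff.mp hu).2
    have h2 := mul_nonneg hc0.le (sub_nonneg.mpr this)
    have h3 := mul_nonneg h1l.le (sq_nonneg (x u + x (par u) / (1 - l)))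
    linarith
  have hrsum : ∑ u ∈ Finset.univ \ S,
      ((x u + x (par u)) ^ 2 - l * x u ^ 2 + l / (1 - l) * y (m - 1) ^ 2)
      = ∑ u ∈ Finset.univ \ S, (x u + x (par u)) ^ 2 - l * ∑ u ∈ Finset.univ \ S, x u ^ 2
        + ((n : ℝ) - m) * (l / (1 - l) * y (m - 1) ^ 2) := by
    rw [Finset.sum_add_distrib, Finset.sum_sub_distrib, ← Finset.mul_sum, Finset.sum_const,
      Finset.card_sdiff_of_subset (Finset.subset_univ _), Finset.card_univ, hcard, nsmul_eq_mul,
      Nat.cast_sub hmn]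
  have hrnn := Finset.sum_nonneg hr0
  have hNpos : 0 < ∑ v, x v ^ 2 := by
    obtain ⟨v, hv⟩ := Function.ne_iff.mp hx0
    apply Finset.sum_pos'
    · intro v _; positivity
    · exact ⟨v, Finset.mem_univ v, by have : x v ≠ 0 := hv; positivity⟩
  have hmain : l * ∑ v, x v ^ 2 ≤ energy G x := by
    have h1 := hcore.1
    have h2 := htest.1
    rw [hN]
    rw [hrsum] at hrnn
    linarith
  refine ⟨?_, ?_⟩
  · rw [hx] at hmain
    exact le_of_mul_le_mul_right hmain hNpos
  intro hle
  have hup2 : energy G x ≤ l * ∑ v, x v ^ 2 := by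
    rw [hx]
    exact mul_le_mul_of_nonneg_right hle hNpos.le
  have hc1 := hcore.1
  have ht1 := htest.1
  rw [hN] at hup2
  have hEt : ∑ e ∈ (restr G S).edgeFinset, edgeTerm x e ≤ coreEnergy m y := by
    rw [hrsum] at hrnn
    linarith
  have hTt : coreEnergy m y - l * ∑ i ∈ Finset.range m, y i ^ 2 ≤
      ((n : ℝ) - m) * (l / (1 - l) * y (m - 1) ^ 2) := by
    rw [hrsum] at hrnn
    linarith
  have hRt : ∀ u ∈ Finset.univ \ S,
      (x u + x (par u)) ^ 2 - l * x u ^ 2 + l / (1 - l) * y (m - 1) ^ 2 = 0 := by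
    rw [← Finset.sum_eq_zero_iff_of_nonneg hr0]
    apply le_antisymm _ hrnn
    rw [hrsum]
    linarith
  have hRt2 : ∀ u, u ∉ S → x u = - (x (par u) / (1 - l)) ∧ |x (par u)| = y (m - 1) := by
    intro u hu
    have h := hRt u (by simp [hu])
    rw [hid] at h
    have h2 := mul_nonneg hc0.le (sub_nonneg.mpr (hparle u hu))
    have h3 := mul_nonneg h1l.le (sq_nonneg (x u + x (par u) / (1 - l)))
    have h4 : (1 - l) * (x u + x (par u) / (1 - l)) ^ 2 = 0 := by linarith
    have h5 : l / (1 - l) * (y (m - 1) ^ 2 - x (par u) ^ 2) = 0 := by linarith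
    have h6 := pow_eq_zero_iff (two_ne_zero) |>.mp ((mul_eq_zero.mp h4).resolve_left h1l.ne')
    have h7 := (mul_eq_zero.mp h5).resolve_left hc0.ne'
    refine ⟨by linarith, ?_⟩
    have h8 : x (par u) ^ 2 = y (m - 1) ^ 2 := by linarith
    have h9 := (sq_eq_sq_iff_abs_eq_abs _ _).mp h8
    rw [h9, abs_of_nonneg]
    simp [hy]
  have hYpos : 0 < y (m - 1) := by
    rcases (abs_nonneg (x (σ (m - 1)))).lt_or_eq with h | h
    · exact h
    · exfalso
      have h0 : y (m - 1) = 0 := h.symm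
      apply hx0
      funext v
      by_cases hv : v ∈ S
      · obtain ⟨i, hi, rfl⟩ := (hσS v).mp hv
        have h1 := hσmono i (m - 1) (by omega) (by omega)
        have h2 : |x (σ i)| ≤ 0 := by rw [← h0]; exact h1
        simpa using h2
      · obtain ⟨h1, h2⟩ := hRt2 v hv
        rw [h0, abs_eq_zero] at h2
        rw [h1, h2]
        simp
  obtain ⟨hmK, hy0, hgap⟩ := htest.2 hTt hYpos
  have hpat := hcore.2 hEt hy0 hgap
  have hbig : ∀ u, u ∉ S → y (m - 1) < |x u| := by
    intro u hu
    obtain ⟨h1, h2⟩ := hRt2 u hu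
    rw [h1, abs_neg, abs_div, h2, abs_of_pos h1l, lt_div_iff₀ h1l]
    nlinarith
  have hleaf : ∀ u, u ∉ S → G.degree u ≤ 1 := by
    intro u hu
    by_contra! h
    have h1 := hpmax u h
    have h2 := hbig u hu
    rw [hyp] at h2
    linarith
  have hparS : ∀ u, u ∉ S → par u = σ (m - 1) := by
    intro u hu
    have h2 := (hRt2 u hu).2
    have hS' : par u ∈ S := by
      by_contra hcon
      have := hbig _ hcon
      linarith
    obtain ⟨i, hi, hiu⟩ := (hσS _).mp hS'
    rw [← hiu] at h2
    have : i = m - 1 := by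
      by_contra hne
      have h3 := hgap (m - 2) (by omega) (by omega)
      rw [show m - 2 + 1 = m - 1 by omega] at h3
      have h4 := hσmono i (m - 2) (by omega) (by omega)
      have h5 : y i ≤ y (m - 2) := h4
      have h6 : y i = y (m - 1) := h2
      linarith
    rw [← hiu, this]
  have hout : ∀ u, u ∉ S → ∀ w, G.Adj w u ↔ w = σ (m - 1) := by
    intro u hu w
    have h1 := hpar u (hup u hu)
    rw [hparS u hu] at h1
    constructor
    · intro hw
      have h2 := hleaf u hu
      rw [← SimpleGraph.card_neighborFinset_eq_degree, Finset.card_le_one] at h2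
      exact h2 w (by simpa using hw.symm) _ (by simpa using h1)
    · rintro rfl
      exact h1.symm
  rw [← hmK]
  exact model_of_labels hcard hS3 S rfl σ hσinj hσS hpat hout

end Assembly

/-- For `n ≥ 3γ + 2` (`γ ≥ 1`), among all connected nonbipartite unicyclic graphs of
order `n` with domination number `γ`, the least `Q`-eigenvalue is minimized uniquely
by `C*_{3,3γ-3}`. -/
theorem qmin_Cstar_min_unicyclic_large
    {V : Type*} [Fintype V] (γ n : ℕ) (hγ : 1 ≤ γ) (hn : 3 * γ + 2 ≤ n)
    (G : SimpleGraph V) (hcard : Fintype.card V = n)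
    (hconn : G.Connected) (hnonbip : ¬ G.Colorable 2)
    (huni : G.edgeSet.ncard = n)
    (hdom : dominationNumber G = γ) :
    qmin (Cstar n 3 (3 * γ - 3)) ≤ qmin G ∧
      (qmin (Cstar n 3 (3 * γ - 3)) = qmin G ↔ Nonempty (G ≃g Cstar n 3 (3 * γ - 3))) := by
  subst hdom
  have hne : {k | ∃ D : Finset V, IsDominatingSet G D ∧ D.card = k}.Nonempty :=
    ⟨_, Finset.univ, fun v hv => absurd (Finset.mem_univ v) hv, rfl⟩
  obtain ⟨D, hD, hDc⟩ := Nat.sInf_mem hne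
  have hDc' : D.card = dominationNumber G := hDc
  have huni' : G.edgeFinset.card = Fintype.card V := by
    rw [hcard, ← huni, Set.ncard_eq_toFinset_card', SimpleGraph.edgeFinset]
  have : Nonempty V := hconn.nonempty
  have : Nonempty (Fin n) := ⟨⟨0, by omega⟩⟩
  obtain ⟨f⟩ := model_iso n (3 * dominationNumber G) (by omega) (by omega)
  have hq := qmin_iso f
  obtain ⟨h1, h2⟩ := main_lemma G n (dominationNumber G) hcard hn hconn hnonbip huni' D hD hDc'
    (qmin (model n (3 * dominationNumber G))) rfl
  rw [hq]
  refine ⟨h1, fun h => ?_, fun ⟨g⟩ => ?_⟩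
  · obtain ⟨g⟩ := h2 h.ge
    exact ⟨g.symm.trans f.symm⟩
  · rw [← hq]
    exact (qmin_iso g).symm
end
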